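/- arXiv:cs/9912013 — 3 statements merged into one kernel-verified Lean document; each statement's English description precedes it below -/
import Mathlib

section
/- For every real constant c with c > (2/π)·arcsin(1/3) and every n₀, there exists a finite set S of n ≥ n₀ points in ℝ² such that for any three subsets S₁, S₂, S₃ of S forming a non-transversal family (no line cuts all three), at least one of the subsets has fewer than c·n points. (Equivalently, P(2) ≥ π/(2·arcsin(1/3)) ≈ 4.622.) -/
noncomputable section

/-- The line given as the zero set of the nonconstant affine functional `f`
cuts a point set `S` in ℝ² if both open halfplanes bounded by it contain a point of `S`. -/
def Cuts (f : (Fin 2 → ℝ) →ᵃ[ℝ] ℝ) (S : Finset (Fin 2 → ℝ)) : Prop :=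
  (∃ x ∈ S, 0 < f x) ∧ (∃ x ∈ S, f x < 0)

/-!
The point set discretizes the central projection to the plane at height one of the uniform measure
on the ball of `ℝ³`. If no line cuts all three members of a triple of sets with thick convex hulls,
then each of them is separated from the other two by a line. These three lines and the line at
infinity span four planes through the origin, whose normals are linearly dependent, and each member
of the triple lies, up to the discretization, in the projection of a cone of points that split the
four normals into two given pairs. Every pairing of the normals arises in this way, so it suffices
to find one whose cone has measure at most `(2 / π) * arcsin (1 / 3)`.

If the dependence has nonnegative coefficients, the signs of almost every point on the normals are
not all equal, so they change at least twice along a closed tour through the normals, and four times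
on the cone of the alternating pairing. Two normals at angle `θ` have opposite signs with
probability `θ / π`, so the cone has measure at most `ℓ / (2 * π) - 1`, where `ℓ` is the length of
the tour. Some tour is not longer than `4 * arccos (-1 / 3)`, its length for a regular tetrahedron.
The other sign patterns of the dependence have an empty cone or reduce to this case.
-/

open InnerProductGeometry MeasureTheory NormedSpace Real
open scoped RealInnerProductSpace

section ShortTour

lemma mul_sq_sub_sq_le_of_sq_add_sq_eq {p p' m m' T W e : ℝ} (h : p ^ 2 + m ^ 2 = p' ^ 2 + m' ^ 2)
    (hT : (p - p') ^ 2 ≤ T) (he : 0 ≤ e) (hep : e ≤ (p + p') ^ 2) (hW : (m + m') ^ 2 ≤ W - e) :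
    W * ((p - p') ^ 2 - (m - m') ^ 2) ≤ T * (W - e) := by
  have hprod : (p - p') ^ 2 * (p + p') ^ 2 = (m - m') ^ 2 * (m + m') ^ 2 := by
    rw [← mul_pow, ← mul_pow]
    linear_combination (p ^ 2 - p' ^ 2 - m ^ 2 + m' ^ 2) * h
  have hT0 : 0 ≤ T := (sq_nonneg _).trans hT
  have hW0 : 0 ≤ W - e := (sq_nonneg _).trans hW
  have hTW := mul_nonneg hT0 hW0
  have hD := sq_nonneg (p - p')
  have hd := sq_nonneg (m - m')
  have hP := sq_nonneg (p + p')
  have hM := sq_nonneg (m + m')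
  generalize (p - p') ^ 2 = D at *
  generalize (m - m') ^ 2 = d at *
  generalize (p + p') ^ 2 = P at *
  generalize (m + m') ^ 2 = M at *
  rcases hM.eq_or_lt with rfl | hM0
  · rw [mul_zero, mul_eq_zero] at hprod
    rcases hprod with rfl | rfl <;> nlinarith
  rcases le_total M P with hMP | hPM
  · have : D ≤ d := by
      rw [← mul_le_mul_iff_left₀ hM0]
      nlinarith
    nlinarith
  · rw [← mul_le_mul_iff_left₀ hM0]
    calc W * (D - d) * M = D * (W * (M - P)) := by linear_combination W * hprod
      _ ≤ T * (W * (M - P)) := by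
        gcongr
        exact mul_nonneg (by linarith) (sub_nonneg.2 hPM)
      _ ≤ T * ((W - e) * M) := by
        refine mul_le_mul_of_nonneg_left ?_ hT0
        linarith [mul_le_mul hep (show M ≤ W by linarith) hM hP]
      _ = T * (W - e) * M := (mul_assoc _ _ _).symm

lemma sq_norm_sub_norm_le_sq_norm_add {E : Type*} [SeminormedAddCommGroup E] (u v : E) :
    (‖u‖ - ‖v‖) ^ 2 ≤ ‖u + v‖ ^ 2 :=
  sq_le_sq.2 <| by simpa using abs_norm_sub_norm_le u (-v)

variable {E : Type*} [NormedAddCommGroup E] [InnerProductSpace ℝ E]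

lemma sq_norm_sub_add_norm_sub_le (a b c d : E) :
    (‖a - b‖ + ‖c - d‖) ^ 2 ≤ ‖a + c - (b + d)‖ ^ 2 + ‖a + d - (b + c)‖ ^ 2 := by
  have := parallelogram_law_with_norm ℝ (a - b) (c - d)
  rw [show a + c - (b + d) = a - b + (c - d) by abel,
    show a + d - (b + c) = a - b - (c - d) by abel]
  nlinarith [sq_nonneg (‖a - b‖ - ‖c - d‖)]

lemma sq_norm_add_add_sq_norm_sub_of_norm_eq_one {u v : E} (hu : ‖u‖ = 1) (hv : ‖v‖ = 1) :
    ‖u + v‖ ^ 2 + ‖u - v‖ ^ 2 = 4 := by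
  have := parallelogram_law_with_norm ℝ u v
  rw [hu, hv] at this
  linarith

lemma mul_sq_norm_sub_norm_le {a b c d : E} {W : ℝ} (ha : ‖a‖ = 1) (hb : ‖b‖ = 1) (hc : ‖c‖ = 1)
    (hd : ‖d‖ = 1)
    (hW : ‖a + b - (c + d)‖ ^ 2 + ‖a + c - (b + d)‖ ^ 2 + ‖a + d - (b + c)‖ ^ 2 = W) :
    W * ((‖a + b‖ - ‖c + d‖) ^ 2 - (‖a - b‖ - ‖c - d‖) ^ 2) ≤
      ‖a + b + c + d‖ ^ 2 * (W - ‖a + b - (c + d)‖ ^ 2) := by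
  refine mul_sq_sub_sq_le_of_sq_add_sq_eq ?_ ?_ (sq_nonneg _) ?_ ?_
  · rw [sq_norm_add_add_sq_norm_sub_of_norm_eq_one ha hb,
      sq_norm_add_add_sq_norm_sub_of_norm_eq_one hc hd]
  · rw [add_assoc (a + b)]
    exact sq_norm_sub_norm_le_sq_norm_add _ _
  · gcongr
    exact norm_sub_le _ _
  · linarith [sq_norm_sub_add_norm_sub_le a b c d]

-- Equality holds when `a + b + c + d = 0`.
lemma sum_norm_sub_mul_norm_sub_le {a b c d : E} (ha : ‖a‖ = 1) (hb : ‖b‖ = 1) (hc : ‖c‖ = 1)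
    (hd : ‖d‖ = 1) :
    ‖a - b‖ * ‖c - d‖ + ‖a - c‖ * ‖b - d‖ + ‖a - d‖ * ‖b - c‖ ≤
      4 + (‖a + b‖ * ‖c + d‖ + ‖a + c‖ * ‖b + d‖ + ‖a + d‖ * ‖b + c‖) := by
  obtain ⟨W, hW⟩ : ∃ W, ‖a + b - (c + d)‖ ^ 2 + ‖a + c - (b + d)‖ ^ 2 + ‖a + d - (b + c)‖ ^ 2 = W :=
    ⟨_, rfl⟩
  have h₁ := mul_sq_norm_sub_norm_le ha hb hc hd hW
  have h₂ := mul_sq_norm_sub_norm_le ha hc hb hd (W := W) (by rw [← hW, add_comm c b]; ring)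
  have h₃ := mul_sq_norm_sub_norm_le ha hd hb hc (W := W)
    (by rw [← hW, add_comm d b, add_comm d c]; ring)
  rw [show a + c + b + d = a + b + c + d by abel] at h₂
  rw [show a + d + b + c = a + b + c + d by abel] at h₃
  have hsum : ‖a + b‖ ^ 2 + ‖c + d‖ ^ 2 + ‖a + c‖ ^ 2 + ‖b + d‖ ^ 2 + ‖a + d‖ ^ 2 +
      ‖b + c‖ ^ 2 = ‖a + b + c + d‖ ^ 2 + 8 := by
    simp only [norm_add_sq_real, inner_add_left, ha, hb, hc, hd]
    ring
  have hab := sq_norm_add_add_sq_norm_sub_of_norm_eq_one ha hb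
  have hcd := sq_norm_add_add_sq_norm_sub_of_norm_eq_one hc hd
  have hac := sq_norm_add_add_sq_norm_sub_of_norm_eq_one ha hc
  have hbd := sq_norm_add_add_sq_norm_sub_of_norm_eq_one hb hd
  have had := sq_norm_add_add_sq_norm_sub_of_norm_eq_one ha hd
  have hbc := sq_norm_add_add_sq_norm_sub_of_norm_eq_one hb hc
  have hW0 : 0 ≤ W := hW ▸ by positivity
  rcases hW0.eq_or_lt with rfl | hWpos
  · have hb' := (four_mul_le_sq_add _ _).trans (sq_norm_sub_add_norm_sub_le a b c d)
    have hc' := (four_mul_le_sq_add _ _).trans (sq_norm_sub_add_norm_sub_le a c b d)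
    have hd' := (four_mul_le_sq_add _ _).trans (sq_norm_sub_add_norm_sub_le a d b c)
    rw [add_comm c b] at hc'
    rw [add_comm d b, add_comm d c] at hd'
    have : 0 ≤ ‖a + b‖ * ‖c + d‖ + ‖a + c‖ * ‖b + d‖ + ‖a + d‖ * ‖b + c‖ := by positivity
    linarith
  · suffices ((‖a + b‖ - ‖c + d‖) ^ 2 - (‖a - b‖ - ‖c - d‖) ^ 2) +
        ((‖a + c‖ - ‖b + d‖) ^ 2 - (‖a - c‖ - ‖b - d‖) ^ 2) +
        ((‖a + d‖ - ‖b + c‖) ^ 2 - (‖a - d‖ - ‖b - c‖) ^ 2) ≤ 2 * ‖a + b + c + d‖ ^ 2 by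
      linarith
    refine le_of_mul_le_mul_left ?_ hWpos
    linear_combination h₁ + h₂ + h₃ - ‖a + b + c + d‖ ^ 2 * hW

lemma norm_add_eq_two_mul_cos {a b : E} (ha : ‖a‖ = 1) (hb : ‖b‖ = 1) :
    ‖a + b‖ = 2 * cos (angle a b / 2) := by
  have h0 : 0 ≤ cos (angle a b / 2) :=
    cos_nonneg_of_mem_Icc ⟨by linarith [angle_nonneg a b, pi_pos], by linarith [angle_le_pi a b]⟩
  rw [← sq_eq_sq₀ (norm_nonneg _) (by positivity), norm_add_sq_real, ha, hb, mul_pow, cos_sq,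
    mul_div_cancel₀ _ (two_ne_zero' ℝ), cos_angle, ha, hb]
  ring

lemma norm_sub_eq_two_mul_sin {a b : E} (ha : ‖a‖ = 1) (hb : ‖b‖ = 1) :
    ‖a - b‖ = 2 * sin (angle a b / 2) := by
  have h0 : 0 ≤ sin (angle a b / 2) :=
    sin_nonneg_of_mem_Icc ⟨by linarith [angle_nonneg a b], by linarith [angle_le_pi a b, pi_pos]⟩
  rw [← sq_eq_sq₀ (norm_nonneg _) (by positivity), norm_sub_sq_real, ha, hb, mul_pow, sin_sq,
    cos_sq, mul_div_cancel₀ _ (two_ne_zero' ℝ), cos_angle, ha, hb]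
  ring

lemma one_add_sum_cos_nonneg {a b c d : E} (ha : ‖a‖ = 1) (hb : ‖b‖ = 1) (hc : ‖c‖ = 1)
    (hd : ‖d‖ = 1) :
    0 ≤ 1 + cos ((angle a b + angle c d) / 2) + cos ((angle a c + angle b d) / 2) +
      cos ((angle a d + angle b c) / 2) := by
  have h := sum_norm_sub_mul_norm_sub_le ha hb hc hd
  simp only [norm_add_eq_two_mul_cos, norm_sub_eq_two_mul_sin, ha, hb, hc, hd] at h
  simp only [add_div, cos_add]
  linarith

/-- The angle under which an edge of a regular tetrahedron is seen from its centre. -/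
def tetrahedralAngle : ℝ := arccos (-1 / 3)

lemma cos_tetrahedralAngle : cos tetrahedralAngle = -1 / 3 :=
  cos_arccos (by norm_num) (by norm_num)

lemma pi_div_two_le_tetrahedralAngle : π / 2 ≤ tetrahedralAngle := by
  rw [tetrahedralAngle, arccos]
  linarith [arcsin_nonpos.2 (show (-1 / 3 : ℝ) ≤ 0 by norm_num)]

lemma one_le_cos_add_sin_mul_sin {t : ℝ} (h0 : 0 ≤ t) (ht : t ≤ π - tetrahedralAngle) :
    1 ≤ cos t + sin tetrahedralAngle * sin t := by
  have hsin : 0 ≤ sin tetrahedralAngle :=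
    sin_nonneg_of_nonneg_of_le_pi (arccos_nonneg _) (arccos_le_pi _)
  have hsin2 : sin tetrahedralAngle ^ 2 = 8 / 9 := by
    rw [sin_sq, cos_tetrahedralAngle]
    norm_num
  have hsint : 0 ≤ sin t :=
    sin_nonneg_of_nonneg_of_le_pi h0 (ht.trans (sub_le_self π (arccos_nonneg _)))
  have hcost : 1 / 3 ≤ cos t := by
    calc 1 / 3 = cos (π - tetrahedralAngle) := by rw [cos_pi_sub, cos_tetrahedralAngle]; norm_num
      _ ≤ cos t := cos_le_cos_of_nonneg_of_le_pi h0 (sub_le_self π (arccos_nonneg _)) ht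
  suffices 1 - cos t ≤ sin tetrahedralAngle * sin t by linarith
  refine le_of_sq_le_sq ?_ (mul_nonneg hsin hsint)
  rw [mul_pow, hsin2, sin_sq]
  nlinarith [cos_le_one t]

lemma add_le_two_mul_tetrahedralAngle {α β γ : ℝ} (hαγ : α ≤ γ) (hβγ : β ≤ γ) (hγ : γ ≤ π)
    (h : 0 ≤ 1 + cos α + cos β + cos γ) : α + β ≤ 2 * tetrahedralAngle := by
  wlog hαβ : α ≤ β generalizing α β
  · rw [add_comm]
    exact this hβγ hαγ (by linarith) (le_of_not_ge hαβ)
  by_contra! hlt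
  have hangle := pi_div_two_le_tetrahedralAngle
  obtain ⟨t, rfl⟩ : ∃ t, β = tetrahedralAngle + t := ⟨β - tetrahedralAngle, by ring⟩
  have hcosγ : cos γ ≤ cos (tetrahedralAngle + t) :=
    cos_le_cos_of_nonneg_of_le_pi (by linarith) hγ hβγ
  have hcosα : cos α < cos (tetrahedralAngle - t) :=
    cos_lt_cos_of_nonneg_of_le_pi (by linarith) (by linarith) (by linarith)
  have ht := one_le_cos_add_sin_mul_sin (t := t) (by linarith) (by linarith)
  rw [cos_sub, cos_tetrahedralAngle] at hcosα
  rw [cos_add, cos_tetrahedralAngle] at h hcosγ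
  linarith

lemma exists_add_le_two_mul_tetrahedralAngle {α β γ : ℝ} (hα : α ≤ π) (hβ : β ≤ π) (hγ : γ ≤ π)
    (h : 0 ≤ 1 + cos α + cos β + cos γ) :
    α + β ≤ 2 * tetrahedralAngle ∨ α + γ ≤ 2 * tetrahedralAngle ∨ β + γ ≤ 2 * tetrahedralAngle := by
  by_cases hmaxγ : α ≤ γ ∧ β ≤ γ
  · exact .inl (add_le_two_mul_tetrahedralAngle hmaxγ.1 hmaxγ.2 hγ h)
  by_cases hmaxβ : α ≤ β ∧ γ ≤ β
  · exact .inr (.inl (add_le_two_mul_tetrahedralAngle hmaxβ.1 hmaxβ.2 hβ (by linarith)))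
  · exact .inr <| .inr <|
      add_le_two_mul_tetrahedralAngle (γ := α) (by grind) (by grind) hα (by linarith)

-- The bound is the length of a closed tour through the vertices of a regular tetrahedron.
lemma exists_perm_sum_angle_le {v : Fin 4 → E} (hv : ∀ i, v i ≠ 0) :
    ∃ σ : Equiv.Perm (Fin 4), ∑ i, angle (v (σ i)) (v (σ (i + 1))) ≤ 4 * tetrahedralAngle := by
  wlog hnorm : ∀ i, ‖v i‖ = 1 generalizing v
  · simpa using this (v := fun i ↦ normalize (v i)) (by simpa using hv) (by simpa using hv)
  have hcos := one_add_sum_cos_nonneg (hnorm 0) (hnorm 1) (hnorm 2) (hnorm 3)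
  have hle i j := angle_le_pi (v i) (v j)
  obtain h | h | h := exists_add_le_two_mul_tetrahedralAngle (by linarith [hle 0 1, hle 2 3])
    (by linarith [hle 0 2, hle 1 3]) (by linarith [hle 0 3, hle 1 2]) hcos
  · refine ⟨Equiv.swap 2 3, ?_⟩
    have htour : ∑ i, angle (v (Equiv.swap 2 3 i)) (v (Equiv.swap 2 3 (i + 1))) =
        angle (v 0) (v 1) + angle (v 1) (v 3) + angle (v 3) (v 2) + angle (v 2) (v 0) :=
      Fin.sum_univ_four _
    linarith [angle_comm (v 2) (v 0), angle_comm (v 3) (v 2)]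
  · refine ⟨1, ?_⟩
    simp only [Equiv.Perm.one_apply]
    have htour : ∑ i, angle (v i) (v (i + 1)) =
        angle (v 0) (v 1) + angle (v 1) (v 2) + angle (v 2) (v 3) + angle (v 3) (v 0) :=
      Fin.sum_univ_four _
    linarith [angle_comm (v 3) (v 0)]
  · refine ⟨Equiv.swap 1 2, ?_⟩
    have htour : ∑ i, angle (v (Equiv.swap 1 2 i)) (v (Equiv.swap 1 2 (i + 1))) =
        angle (v 0) (v 2) + angle (v 2) (v 1) + angle (v 1) (v 3) + angle (v 3) (v 0) :=
      Fin.sum_univ_four _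
    linarith [angle_comm (v 2) (v 1), angle_comm (v 3) (v 0)]

end ShortTour

section RotationInvariant

lemma eq_zero_of_additive_of_bounded {H : ℝ → ℝ} {L C : ℝ}
    (hadd : ∀ s t, 0 ≤ s → 0 ≤ t → s + t ≤ L → H (s + t) = H s + H t)
    (hC : ∀ t ∈ Set.Icc 0 L, |H t| ≤ C) (hL : H L = 0) {t : ℝ} (ht : t ∈ Set.Icc 0 L) :
    H t = 0 := by
  have hdouble : ∀ t ∈ Set.Icc 0 L, ∃ t' ∈ Set.Icc 0 L, |H t'| = 2 * |H t| := by
    rintro t ⟨ht0, htL⟩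
    rcases le_total (2 * t) L with h | h
    · refine ⟨2 * t, ⟨by positivity, h⟩, ?_⟩
      rw [two_mul, hadd t t ht0 ht0 (by linarith), ← two_mul, abs_mul, abs_two]
    · have hcompl : H (L - t) = -H t := by
        have := hadd t (L - t) ht0 (by linarith) (by linarith)
        rw [add_sub_cancel, hL] at this
        linarith
      refine ⟨2 * (L - t), ⟨by linarith, by linarith⟩, ?_⟩
      rw [two_mul, hadd _ _ (by linarith) (by linarith) (by linarith), ← two_mul, abs_mul, abs_two,
        hcompl, abs_neg]
  have hpow : ∀ (n : ℕ), ∀ t ∈ Set.Icc 0 L, 2 ^ n * |H t| ≤ C := by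
    intro n
    induction n with
    | zero => simpa using hC
    | succ n ih =>
      intro t ht
      obtain ⟨t', ht', h⟩ := hdouble t ht
      calc 2 ^ (n + 1) * |H t| = 2 ^ n * |H t'| := by rw [h]; ring
        _ ≤ C := ih t' ht'
  by_contra hne
  obtain ⟨n, hn⟩ := pow_unbounded_of_one_lt (C / |H t|) one_lt_two
  exact (hpow n t ht).not_gt ((div_lt_iff₀ (abs_pos.2 hne)).1 hn)

lemma eq_div_mul_of_additive_of_bounded {G : ℝ → ℝ} {L C : ℝ} (hL : 0 < L)
    (hadd : ∀ s t, 0 ≤ s → 0 ≤ t → s + t ≤ L → G (s + t) = G s + G t)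
    (hC : ∀ t ∈ Set.Icc 0 L, |G t| ≤ C) {t : ℝ} (ht : t ∈ Set.Icc 0 L) : G t = t / L * G L := by
  refine sub_eq_zero.1 (eq_zero_of_additive_of_bounded (H := fun t ↦ G t - t / L * G L)
    (C := C + C) ?_ ?_ ?_ ht)
  · intro s t hs ht hst
    rw [hadd s t hs ht hst]
    ring
  · rintro t ⟨ht0, htL⟩
    refine (abs_sub _ _).trans (add_le_add (hC t ⟨ht0, htL⟩) ?_)
    rw [abs_mul, abs_of_nonneg (div_nonneg ht0 hL.le)]
    exact (mul_le_of_le_one_left (abs_nonneg _) ((div_le_one hL).2 htL)).trans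
      (hC L ⟨hL.le, le_rfl⟩)
  · rw [div_self hL.ne', one_mul, sub_self]

variable {E : Type*} [NormedAddCommGroup E] [InnerProductSpace ℝ E]

lemma exists_linearIsometryEquiv_apply_eq {u v u' v' : E} (hu : ‖u‖ = ‖u'‖) (hv : ‖v‖ = ‖v'‖)
    (huv : ⟪u, v⟫ = ⟪u', v'⟫) : ∃ R : E ≃ₗᵢ[ℝ] E, R u = u' ∧ R v = v' := by
  set R₁ := (ℝ ∙ (u - u'))ᗮ.reflection
  have hR₁ : R₁ u = u' := Submodule.reflection_sub hu
  set R₂ := (ℝ ∙ (R₁ v - v'))ᗮ.reflection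
  have hR₂ : R₂ (R₁ v) = v' := Submodule.reflection_sub (by rw [R₁.norm_map, hv])
  refine ⟨R₁.trans R₂, ?_, hR₂⟩
  rw [LinearIsometryEquiv.trans_apply, hR₁, Submodule.reflection_eq_self_iff,
    Submodule.mem_orthogonal_singleton_iff_inner_left, inner_sub_right, ← huv, ← hR₁,
    R₁.inner_map_map, sub_self]

lemma exists_norm_eq_one_inner_eq_zero (hE : 1 < Module.rank ℝ E) (u : E) :
    ∃ w : E, ‖w‖ = 1 ∧ ⟪u, w⟫ = 0 := by
  have hspan : (ℝ ∙ u) ≠ ⊤ := by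
    intro h
    have := rank_span_le (R := ℝ) ({u} : Set E)
    rw [h, rank_top, Cardinal.mk_singleton] at this
    exact this.not_gt hE
  obtain ⟨w, hw, hw0⟩ := Submodule.exists_mem_ne_zero_of_ne_bot
    (mt (Submodule.orthogonal_eq_bot_iff).1 hspan)
  refine ⟨normalize w, norm_normalize_eq_one_iff.2 hw0, ?_⟩
  rw [NormedSpace.normalize, real_inner_smul_right,
    Submodule.mem_orthogonal_singleton_iff_inner_right.1 hw, mul_zero]

/-- The set of points `x` such that the hyperplane orthogonal to `x` strictly separates `u` from
`v`; equivalently, `x` lies strictly on opposite sides of the hyperplanes orthogonal to `u` and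
`v`. -/
def oppositeSides (u v : E) : Set E := {x | ⟪u, x⟫ * ⟪v, x⟫ < 0}

lemma mem_oppositeSides {u v x : E} : x ∈ oppositeSides u v ↔ ⟪u, x⟫ * ⟪v, x⟫ < 0 := Iff.rfl

lemma oppositeSides_smul_smul {r s : ℝ} (hr : 0 < r) (hs : 0 < s) (u v : E) :
    oppositeSides (r • u) (s • v) = oppositeSides u v := by
  ext x
  rw [mem_oppositeSides, mem_oppositeSides, real_inner_smul_left, real_inner_smul_left,
    mul_mul_mul_comm]
  exact smul_neg_iff_of_pos_left (mul_pos hr hs)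

lemma disjoint_oppositeSides_of_smul_eq {u v w : E} {a b c : ℝ} (ha : 0 ≤ a) (hb : 0 < b)
    (hc : 0 ≤ c) (h : b • v = a • u + c • w) :
    Disjoint (oppositeSides u v) (oppositeSides v w) := by
  refine Set.disjoint_left.2 fun x huv hvw ↦ ?_
  rw [mem_oppositeSides] at huv hvw
  have hsq : b * (⟪v, x⟫ * ⟪v, x⟫) = a * (⟪u, x⟫ * ⟪v, x⟫) + c * (⟪v, x⟫ * ⟪w, x⟫) := by
    have := congrArg (⟪·, x⟫ * ⟪v, x⟫) h
    simp only [inner_add_left, real_inner_smul_left] at this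
    linarith
  have hv : 0 < ⟪v, x⟫ * ⟪v, x⟫ := mul_self_pos.2 fun h0 ↦ by simp [h0] at huv
  nlinarith

lemma disjoint_oppositeSides_neg (u v : E) :
    Disjoint (oppositeSides u v) (oppositeSides v (-u)) := by
  refine Set.disjoint_left.2 fun x huv hvu ↦ ?_
  rw [mem_oppositeSides] at huv hvu
  rw [inner_neg_left] at hvu
  linarith

/-- The point at arc length `s` on the circle through `u` towards `w`, for orthonormal `u`, `w`. -/
def arcPoint (u w : E) (s : ℝ) : E := cos s • u + sin s • w

section arcPoint

variable {u w : E}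

lemma inner_arcPoint (hu : ‖u‖ = 1) (hw : ‖w‖ = 1) (huw : ⟪u, w⟫ = 0) (s t : ℝ) :
    ⟪arcPoint u w s, arcPoint u w t⟫ = cos (s - t) := by
  simp only [arcPoint, inner_add_left, inner_add_right, real_inner_smul_left,
    real_inner_smul_right, real_inner_self_eq_norm_sq, real_inner_comm u w, hu, hw, huw, cos_sub]
  ring

lemma norm_arcPoint (hu : ‖u‖ = 1) (hw : ‖w‖ = 1) (huw : ⟪u, w⟫ = 0) (s : ℝ) :
    ‖arcPoint u w s‖ = 1 := by
  rw [norm_eq_sqrt_real_inner, inner_arcPoint hu hw huw, sub_self, cos_zero, sqrt_one]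

lemma arcPoint_zero (u w : E) : arcPoint u w 0 = u := by
  simp [arcPoint]

lemma arcPoint_pi (u w : E) : arcPoint u w π = -u := by
  simp [arcPoint]

lemma sin_add_smul_arcPoint (u w : E) (s t : ℝ) :
    sin (s + t) • arcPoint u w s = sin t • u + sin s • arcPoint u w (s + t) := by
  simp only [arcPoint, sin_add, cos_add]
  match_scalars
  · linear_combination sin t * sin_sq_add_cos_sq s
  · ring

lemma disjoint_oppositeSides_arcPoint (u w : E) {s t : ℝ} (hs : 0 ≤ s) (ht : 0 ≤ t)
    (hst : s + t ≤ π) :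
    Disjoint (oppositeSides u (arcPoint u w s))
      (oppositeSides (arcPoint u w s) (arcPoint u w (s + t))) := by
  rcases hst.eq_or_lt with hpi | hlt
  · rw [hpi, arcPoint_pi]
    exact disjoint_oppositeSides_neg _ _
  rcases (add_nonneg hs ht).eq_or_lt with hzero | hpos
  · obtain rfl : s = 0 := by linarith
    obtain rfl : t = 0 := by linarith
    exact disjoint_oppositeSides_of_smul_eq zero_le_one one_pos le_rfl
      (by rw [arcPoint_zero, zero_smul, add_zero])
  · exact disjoint_oppositeSides_of_smul_eq
      (sin_nonneg_of_nonneg_of_le_pi ht (by linarith)) (sin_pos_of_pos_of_lt_pi hpos hlt)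
      (sin_nonneg_of_nonneg_of_le_pi hs (by linarith)) (sin_add_smul_arcPoint u w s t)

end arcPoint

variable [MeasurableSpace E] {μ : Measure E}

/-- A measure on an inner product space which is invariant under linear isometries and does not
charge linear hyperplanes. -/
structure IsRotationInvariant (μ : Measure E) : Prop where
  measurePreserving : ∀ R : E ≃ₗᵢ[ℝ] E, MeasurePreserving R μ μ
  measure_hyperplane : ∀ u : E, u ≠ 0 → μ {x | ⟪u, x⟫ = 0} = 0

namespace IsRotationInvariant

lemma ae_inner_ne_zero (hμ : IsRotationInvariant μ) {u : E} (hu : u ≠ 0) :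
    ∀ᵐ x ∂μ, ⟪u, x⟫ ≠ 0 := by
  rw [ae_iff]
  simpa using hμ.measure_hyperplane u hu

end IsRotationInvariant

variable [BorelSpace E]

lemma measurableSet_oppositeSides (u v : E) : MeasurableSet (oppositeSides u v) :=
  (isOpen_lt (by fun_prop) continuous_const).measurableSet

namespace IsRotationInvariant

lemma measureReal_oppositeSides_congr (hμ : IsRotationInvariant μ) {u v u' v' : E}
    (hu : ‖u‖ = ‖u'‖) (hv : ‖v‖ = ‖v'‖) (huv : ⟪u, v⟫ = ⟪u', v'⟫) :
    μ.real (oppositeSides u v) = μ.real (oppositeSides u' v') := by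
  obtain ⟨R, rfl, rfl⟩ := exists_linearIsometryEquiv_apply_eq hu hv huv
  have hpreimage : R ⁻¹' oppositeSides (R u) (R v) = oppositeSides u v := by
    ext x
    rw [Set.mem_preimage, mem_oppositeSides, R.inner_map_map, R.inner_map_map, mem_oppositeSides]
  rw [← hpreimage, (hμ.measurePreserving R).measureReal_preimage
    (measurableSet_oppositeSides _ _).nullMeasurableSet]

lemma measureReal_oppositeSides_add [IsFiniteMeasure μ] (hμ : IsRotationInvariant μ) {u v w : E}
    (hu : u ≠ 0) (hv : v ≠ 0) (hw : w ≠ 0)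
    (hdisj : Disjoint (oppositeSides u v) (oppositeSides v w)) :
    μ.real (oppositeSides u w) = μ.real (oppositeSides u v) + μ.real (oppositeSides v w) := by
  rw [← measureReal_union hdisj (measurableSet_oppositeSides _ _)]
  refine measureReal_congr (Filter.eventuallyEq_set.2 ?_)
  filter_upwards [hμ.ae_inner_ne_zero hu, hμ.ae_inner_ne_zero hv, hμ.ae_inner_ne_zero hw]
    with x hux hvx hwx
  have hexcl : x ∈ oppositeSides u v → x ∉ oppositeSides v w := fun h ↦ Set.disjoint_left.1 hdisj h
  simp only [Set.mem_union, mem_oppositeSides, mul_neg_iff] at hexcl ⊢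
  grind

lemma measureReal_oppositeSides_neg [IsProbabilityMeasure μ] (hμ : IsRotationInvariant μ) {u : E}
    (hu : u ≠ 0) : μ.real (oppositeSides u (-u)) = 1 := by
  suffices h : ∀ᵐ x ∂μ, x ∈ oppositeSides u (-u) by
    rw [measureReal_def, (mem_ae_iff_prob_eq_one (measurableSet_oppositeSides _ _)).1 h,
      ENNReal.toReal_one]
  filter_upwards [hμ.ae_inner_ne_zero hu] with x hx
  rw [mem_oppositeSides, inner_neg_left, mul_neg, neg_lt_zero]
  exact mul_self_pos.2 hx

theorem measureReal_oppositeSides [IsProbabilityMeasure μ] (hμ : IsRotationInvariant μ)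
    (hE : 1 < Module.rank ℝ E) {u v : E} (hu : u ≠ 0) (hv : v ≠ 0) :
    μ.real (oppositeSides u v) = angle u v / π := by
  wlog hnorm : ‖u‖ = 1 ∧ ‖v‖ = 1 generalizing u v
  · have := this (u := normalize u) (v := normalize v) (by simpa) (by simpa) (by simp [*])
    rwa [angle_normalize_left, angle_normalize_right, NormedSpace.normalize, NormedSpace.normalize,
      oppositeSides_smul_smul (by positivity) (by positivity)] at this
  obtain ⟨hu1, hv1⟩ := hnorm
  obtain ⟨w, hw, huw⟩ := exists_norm_eq_one_inner_eq_zero hE u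
  have hne t : arcPoint u w t ≠ 0 := norm_pos_iff.1 (by simp [norm_arcPoint hu1 hw huw])
  have hcongr {s t s' t' : ℝ} (h : s - t = s' - t') :
      μ.real (oppositeSides (arcPoint u w s) (arcPoint u w t)) =
        μ.real (oppositeSides (arcPoint u w s') (arcPoint u w t')) :=
    hμ.measureReal_oppositeSides_congr (by simp only [norm_arcPoint hu1 hw huw])
      (by simp only [norm_arcPoint hu1 hw huw]) (by simp only [inner_arcPoint hu1 hw huw, h])
  have hlinear := eq_div_mul_of_additive_of_bounded (C := 1)
    (G := fun t ↦ μ.real (oppositeSides u (arcPoint u w t))) pi_pos ?_ ?_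
    ⟨angle_nonneg u v, angle_le_pi u v⟩
  · rw [arcPoint_pi, hμ.measureReal_oppositeSides_neg hu, mul_one] at hlinear
    rw [← hlinear]
    refine hμ.measureReal_oppositeSides_congr rfl (by rw [hv1, norm_arcPoint hu1 hw huw]) ?_
    nth_rewrite 2 [← arcPoint_zero u w]
    rw [inner_arcPoint hu1 hw huw, zero_sub, cos_neg, cos_angle, hu1, hv1]
    simp
  · intro s t hs ht hst
    rw [hμ.measureReal_oppositeSides_add hu (hne s) (hne _)
      (disjoint_oppositeSides_arcPoint u w hs ht hst), add_right_inj]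
    nth_rewrite 3 [← arcPoint_zero u w]
    exact hcongr (by ring)
  · intro t _
    rw [abs_of_nonneg measureReal_nonneg]
    exact measureReal_le_one

end IsRotationInvariant

end RotationInvariant

section SplitCone

variable {ι κ E : Type*} [NormedAddCommGroup E] [InnerProductSpace ℝ E]

/-- The set of points `x` such that the hyperplane orthogonal to `x` strictly separates the vectors
`v i` with `i ∈ s` from those with `i ∉ s`. It is the union of a cone and its antipode. -/
def splitCone (v : ι → E) (s : Finset ι) : Set E :=
  {x | ∀ i j, (i ∈ s ↔ j ∈ s) ↔ 0 < ⟪v i, x⟫ * ⟪v j, x⟫}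

lemma mem_splitCone {v : ι → E} {s : Finset ι} {x : E} :
    x ∈ splitCone v s ↔ ∀ i j, (i ∈ s ↔ j ∈ s) ↔ 0 < ⟪v i, x⟫ * ⟪v j, x⟫ := Iff.rfl

lemma mem_splitCone_of_forall_mem_oppositeSides {v : ι → E} {s : Finset ι} {x : E}
    (hs : ∃ i, i ∈ s) (hs' : ∃ i, i ∉ s)
    (h : ∀ i ∈ s, ∀ j ∉ s, x ∈ oppositeSides (v i) (v j)) : x ∈ splitCone v s := by
  obtain ⟨i₀, hi₀⟩ := hs
  obtain ⟨j₀, hj₀⟩ := hs'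
  simp only [mem_oppositeSides, mul_neg_iff] at h
  simp only [mem_splitCone, mul_pos_iff]
  grind

lemma inner_ne_zero_of_mem_splitCone {v : ι → E} {s : Finset ι} {x : E} (hx : x ∈ splitCone v s)
    (i : ι) : ⟪v i, x⟫ ≠ 0 :=
  mul_self_pos.1 ((hx i i).1 Iff.rfl)

lemma mul_inner_neg_of_mem_splitCone {v : ι → E} {s : Finset ι} {x : E} (hx : x ∈ splitCone v s)
    {i j : ι} (h : ¬(i ∈ s ↔ j ∈ s)) : ⟪v i, x⟫ * ⟪v j, x⟫ < 0 :=
  (not_lt.1 (mt (hx i j).2 h)).lt_of_ne <|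
    mul_ne_zero (inner_ne_zero_of_mem_splitCone hx i) (inner_ne_zero_of_mem_splitCone hx j)

lemma mem_splitCone_of_mul_pos {v w : ι → E} {s : Finset ι} {x : E} (hx : x ∈ splitCone v s)
    (h : ∀ i, 0 < ⟪v i, x⟫ * ⟪w i, x⟫) : x ∈ splitCone w s := fun i j ↦ by
  rw [hx i j, mul_pos_iff, mul_pos_iff]
  have hi := mul_pos_iff.1 (h i)
  have hj := mul_pos_iff.1 (h j)
  grind

lemma splitCone_compl [Fintype ι] [DecidableEq ι] (v : ι → E) (s : Finset ι) :
    splitCone v sᶜ = splitCone v s := by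
  ext x
  simp only [mem_splitCone, Finset.mem_compl, not_iff_not]

lemma splitCone_comp_equiv (v : κ → E) (e : ι ≃ κ) (s : Finset ι) :
    splitCone (v ∘ e) s = splitCone v (s.map e.toEmbedding) := by
  ext x
  simp [mem_splitCone, e.symm.forall_congr_left]

lemma splitCone_eq_empty [Fintype ι] {v : ι → E} {g : ι → ℝ} {s : Finset ι} (hg : g ≠ 0)
    (hdep : ∑ i, g i • v i = 0) (hpos : ∀ i ∈ s, 0 ≤ g i) (hneg : ∀ i ∉ s, g i ≤ 0) :
    splitCone v s = ∅ := by
  obtain ⟨i₀, hi₀⟩ := Function.ne_iff.1 hg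
  refine Set.eq_empty_of_forall_notMem fun x hx ↦ ?_
  have hsum : ∑ i, g i * g i₀ * (⟪v i, x⟫ * ⟪v i₀, x⟫) = 0 := by
    have := congrArg (⟪·, x⟫ * (g i₀ * ⟪v i₀, x⟫)) hdep
    simp only [sum_inner, real_inner_smul_left, inner_zero_left, zero_mul, Finset.sum_mul] at this
    rw [← this]
    exact Finset.sum_congr rfl fun i _ ↦ by ring
  refine hsum.not_gt (Finset.sum_pos' (fun i _ ↦ ?_) ⟨i₀, Finset.mem_univ i₀, ?_⟩)
  · by_cases h : i ∈ s ↔ i₀ ∈ s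
    · refine mul_nonneg ?_ ((hx i i₀).1 h).le
      by_cases hi : i₀ ∈ s
      · exact mul_nonneg (hpos i (h.2 hi)) (hpos i₀ hi)
      · exact mul_nonneg_of_nonpos_of_nonpos (hneg i (mt h.1 hi)) (hneg i₀ hi)
    · refine mul_nonneg_of_nonpos_of_nonpos ?_ (mul_inner_neg_of_mem_splitCone hx h).le
      by_cases hi : i₀ ∈ s
      · exact mul_nonpos_of_nonpos_of_nonneg (hneg i fun hi' ↦ h (iff_of_true hi' hi)) (hpos i₀ hi)
      · exact mul_nonpos_of_nonneg_of_nonpos (hpos i (by tauto)) (hneg i₀ hi)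
  · exact mul_pos (mul_self_pos.2 hi₀) (mul_self_pos.2 (inner_ne_zero_of_mem_splitCone hx i₀))

lemma two_le_card_changes (p : Fin 4 → Bool) (hp : ¬∀ i j, p i = p j) :
    2 ≤ Finset.card {i | p i ≠ p (i + 1)} := by
  revert p
  decide

lemma four_le_card_changes (p : Fin 4 → Bool)
    (hp : ∀ i j, (i ∈ ({0, 2} : Finset (Fin 4)) ↔ j ∈ ({0, 2} : Finset (Fin 4))) ↔ p i = p j) :
    4 ≤ Finset.card {i | p i ≠ p (i + 1)} := by
  revert p
  decide

-- Along a closed tour the number of sign changes is even: it is positive unless all signs agree,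
-- and four when the signs alternate.
lemma two_add_indicator_splitCone_le {v : Fin 4 → E} {g : Fin 4 → ℝ} (hg : g ≠ 0)
    (hg0 : ∀ i, 0 ≤ g i) (hdep : ∑ i, g i • v i = 0) {x : E} (hx : ∀ i, ⟪v i, x⟫ ≠ 0) :
    2 + 2 * (splitCone v {0, 2}).indicator (1 : E → ℝ) x ≤
      ∑ i, (oppositeSides (v i) (v (i + 1))).indicator (1 : E → ℝ) x := by
  have hsame i j : 0 < ⟪v i, x⟫ * ⟪v j, x⟫ ↔ decide (0 < ⟪v i, x⟫) = decide (0 < ⟪v j, x⟫) := by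
    have hi := hx i
    have hj := hx j
    rw [mul_pos_iff]
    grind
  have hopp i j : x ∈ oppositeSides (v i) (v j) ↔
      decide (0 < ⟪v i, x⟫) ≠ decide (0 < ⟪v j, x⟫) := by
    rw [mem_oppositeSides, ne_eq, ← hsame, not_lt]
    exact (mul_ne_zero (hx i) (hx j)).le_iff_lt.symm
  have hnot : x ∉ splitCone v Finset.univ := by
    rw [splitCone_eq_empty hg hdep (fun i _ ↦ hg0 i) (by simp)]
    exact Set.notMem_empty x
  simp only [mem_splitCone, hsame, Finset.mem_univ, true_iff] at hnot
  have hsum : ∑ i, (oppositeSides (v i) (v (i + 1))).indicator (1 : E → ℝ) x =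
      Finset.card {i | decide (0 < ⟪v i, x⟫) ≠ decide (0 < ⟪v (i + 1), x⟫)} := by
    classical
    simp only [Set.indicator_apply, hopp, Pi.one_apply, Finset.sum_boole]
  rw [hsum]
  by_cases hmem : x ∈ splitCone v {0, 2}
  · have hmem' := hmem
    simp only [mem_splitCone, hsame] at hmem'
    have hcard := (Nat.cast_le (α := ℝ)).2 (four_le_card_changes _ hmem')
    rw [Set.indicator_of_mem hmem, Pi.one_apply]
    push_cast at hcard
    linarith
  · have hcard := (Nat.cast_le (α := ℝ)).2 (two_le_card_changes _ hnot)
    rw [Set.indicator_of_notMem hmem]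
    push_cast at hcard
    linarith

variable [MeasurableSpace E] [BorelSpace E] {μ : Measure E}

lemma measurableSet_splitCone [Countable ι] (v : ι → E) (s : Finset ι) :
    MeasurableSet (splitCone v s) := by
  have hpos i j : MeasurableSet {x | 0 < ⟪v i, x⟫ * ⟪v j, x⟫} :=
    (isOpen_lt continuous_const (by fun_prop)).measurableSet
  simp only [splitCone, Set.ofPred_forall]
  exact .iInter fun i ↦ .iInter fun j ↦ (MeasurableSet.const _).iff (hpos i j)

lemma IsRotationInvariant.measureReal_splitCone_le [IsProbabilityMeasure μ]
    (hμ : IsRotationInvariant μ) (hE : 1 < Module.rank ℝ E) {v : Fin 4 → E} (hv : ∀ i, v i ≠ 0)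
    {g : Fin 4 → ℝ} (hg : g ≠ 0) (hg0 : ∀ i, 0 ≤ g i) (hdep : ∑ i, g i • v i = 0) :
    μ.real (splitCone v {0, 2}) ≤ (∑ i, angle (v i) (v (i + 1))) / (2 * π) - 1 := by
  have hint {s : Set E} (hs : MeasurableSet s) : Integrable (s.indicator (1 : E → ℝ)) μ :=
    (integrable_const 1).indicator hs
  have hcone := measurableSet_splitCone v {0, 2}
  have hopp i := measurableSet_oppositeSides (v i) (v (i + 1))
  have hmono : ∫ x, 2 + 2 * (splitCone v {0, 2}).indicator (1 : E → ℝ) x ∂μ ≤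
      ∫ x, ∑ i, (oppositeSides (v i) (v (i + 1))).indicator (1 : E → ℝ) x ∂μ := by
    refine integral_mono_ae ((integrable_const _).add ((hint hcone).const_mul _))
      (integrable_finsetSum _ fun i _ ↦ hint (hopp i)) ?_
    filter_upwards [ae_all_iff.2 fun i ↦ hμ.ae_inner_ne_zero (hv i)] with x hx
    exact two_add_indicator_splitCone_le hg hg0 hdep hx
  rw [integral_add (integrable_const _) ((hint hcone).const_mul _), integral_const,
    integral_const_mul, integral_indicator_one hcone, probReal_univ, one_smul,
    integral_finsetSum _ fun i _ ↦ hint (hopp i)] at hmono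
  simp only [integral_indicator_one (hopp _), hμ.measureReal_oppositeSides hE (hv _) (hv _),
    ← Finset.sum_div] at hmono
  have : (∑ i, angle (v i) (v (i + 1))) / (2 * π) = (∑ i, angle (v i) (v (i + 1))) / π / 2 := by
    rw [mul_comm, div_div]
  linarith

lemma four_mul_tetrahedralAngle_div_sub_one :
    4 * tetrahedralAngle / (2 * π) - 1 = 2 / π * arcsin (1 / 3) := by
  rw [tetrahedralAngle, neg_div, arccos_neg, arccos_eq_pi_div_two_sub_arcsin]
  field_simp
  ring

lemma two_div_pi_mul_arcsin_nonneg : 0 ≤ 2 / π * arcsin (1 / 3) := by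
  have := arcsin_nonneg.2 (show (0 : ℝ) ≤ 1 / 3 by norm_num)
  positivity

lemma IsRotationInvariant.exists_splitCone_le_of_nonneg [IsProbabilityMeasure μ]
    (hμ : IsRotationInvariant μ) (hE : 1 < Module.rank ℝ E) {v : Fin 4 → E} (hv : ∀ i, v i ≠ 0)
    {g : Fin 4 → ℝ} (hg : g ≠ 0) (hg0 : ∀ i, 0 ≤ g i) (hdep : ∑ i, g i • v i = 0) :
    ∃ s : Finset (Fin 4), s.card = 2 ∧ μ.real (splitCone v s) ≤ 2 / π * arcsin (1 / 3) := by
  obtain ⟨σ, hσ⟩ := exists_perm_sum_angle_le hv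
  refine ⟨Finset.map σ.toEmbedding {0, 2}, by rw [Finset.card_map]; rfl, ?_⟩
  have hgσ : g ∘ σ ≠ 0 := fun h ↦ hg (funext fun i ↦ by simpa using congrFun h (σ.symm i))
  calc μ.real (splitCone v (Finset.map σ.toEmbedding {0, 2}))
      = μ.real (splitCone (v ∘ σ) {0, 2}) := by rw [splitCone_comp_equiv]
    _ ≤ (∑ i, angle (v (σ i)) (v (σ (i + 1)))) / (2 * π) - 1 :=
      hμ.measureReal_splitCone_le hE (fun i ↦ hv (σ i)) hgσ (fun i ↦ hg0 (σ i))
        ((Equiv.sum_comp σ fun i ↦ g i • v i).trans hdep)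
    _ ≤ 4 * tetrahedralAngle / (2 * π) - 1 := by gcongr
    _ = 2 / π * arcsin (1 / 3) := four_mul_tetrahedralAngle_div_sub_one

-- Merging `v 0` into `v 3` makes the dependence nonnegative and only enlarges the split cones.
lemma IsRotationInvariant.exists_splitCone_le_of_nonpos_of_pos [IsProbabilityMeasure μ]
    (hμ : IsRotationInvariant μ) (hE : 1 < Module.rank ℝ E) {v : Fin 4 → E} (hv : ∀ i, v i ≠ 0)
    {g : Fin 4 → ℝ} (hg0 : g 0 ≤ 0) (hg1 : 0 < g 1) (hg2 : 0 < g 2) (hg3 : 0 < g 3)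
    (hdep : ∑ i, g i • v i = 0) :
    ∃ s : Finset (Fin 4), s.card = 2 ∧ μ.real (splitCone v s) ≤ 2 / π * arcsin (1 / 3) := by
  rw [Fin.sum_univ_four] at hdep
  set w := g 3 • v 3 + g 0 • v 0 with hw
  have hdep' : g 1 • v 1 + g 2 • v 2 + w = 0 := by rw [← hdep, hw]; abel
  by_cases hw0 : w = 0
  · refine ⟨{1, 2}, rfl, ?_⟩
    rw [splitCone_eq_empty (g := ![0, g 1, g 2, 0]), measureReal_empty]
    · exact two_div_pi_mul_arcsin_nonneg
    · exact fun h ↦ hg1.ne' (congrFun h 1)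
    · simpa [Fin.sum_univ_four, hw0] using hdep'
    · simp [hg1.le, hg2.le]
    · simp [Fin.forall_fin_succ]
  obtain ⟨s, hs, hle⟩ := hμ.exists_splitCone_le_of_nonneg hE (v := ![v 0, v 1, v 2, w])
    (g := ![0, g 1, g 2, 1]) (by simp [Fin.forall_fin_succ, hv, hw0])
    (fun h ↦ hg1.ne' (congrFun h 1)) (by simp [Fin.forall_fin_succ, hg1.le, hg2.le])
    (by simpa [Fin.sum_univ_four] using hdep')
  refine ⟨s, hs, (measureReal_mono fun x hx ↦ mem_splitCone_of_mul_pos hx fun i ↦ ?_).trans hle⟩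
  have hself i : 0 < ⟪v i, x⟫ * ⟪v i, x⟫ := mul_self_pos.2 (inner_ne_zero_of_mem_splitCone hx i)
  suffices 0 < ⟪v 3, x⟫ * ⟪w, x⟫ by fin_cases i <;> simp [hself, this]
  by_cases h03 : 0 ∈ s ↔ 3 ∈ s
  · have h13 : ¬(3 ∈ s ↔ 1 ∈ s) := by clear * - hs h03; decide +revert
    have h23 : ¬(3 ∈ s ↔ 2 ∈ s) := by clear * - hs h03; decide +revert
    have hw' : w = -(g 1 • v 1 + g 2 • v 2) := (neg_eq_of_add_eq_zero_right hdep').symm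
    simp only [hw', inner_neg_left, inner_add_left, real_inner_smul_left]
    linarith [mul_neg_of_pos_of_neg hg1 (mul_inner_neg_of_mem_splitCone hx h13),
      mul_neg_of_pos_of_neg hg2 (mul_inner_neg_of_mem_splitCone hx h23)]
  · have h30 := mul_inner_neg_of_mem_splitCone hx h03
    rw [hw, inner_add_left, real_inner_smul_left, real_inner_smul_left]
    linarith [mul_pos hg3 (hself 3), mul_nonneg_of_nonpos_of_nonpos hg0 h30.le]

lemma IsRotationInvariant.exists_splitCone_le_of_monotone_of_pos [IsProbabilityMeasure μ]
    (hμ : IsRotationInvariant μ) (hE : 1 < Module.rank ℝ E) {v : Fin 4 → E} (hv : ∀ i, v i ≠ 0)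
    {g : Fin 4 → ℝ} (hmono : Monotone g) (hg1 : 0 < g 1) (hdep : ∑ i, g i • v i = 0) :
    ∃ s : Finset (Fin 4), s.card = 2 ∧ μ.real (splitCone v s) ≤ 2 / π * arcsin (1 / 3) := by
  rcases le_total (g 0) 0 with hg0 | hg0
  · exact hμ.exists_splitCone_le_of_nonpos_of_pos hE hv hg0 hg1
      (hg1.trans_le (hmono (by decide))) (hg1.trans_le (hmono (by decide))) hdep
  · exact hμ.exists_splitCone_le_of_nonneg hE hv (fun h ↦ hg1.ne' (congrFun h 1))
      (fun i ↦ hg0.trans (hmono i.zero_le)) hdep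

lemma IsRotationInvariant.exists_splitCone_le_of_monotone [IsProbabilityMeasure μ]
    (hμ : IsRotationInvariant μ) (hE : 1 < Module.rank ℝ E) {v : Fin 4 → E} (hv : ∀ i, v i ≠ 0)
    {g : Fin 4 → ℝ} (hg : g ≠ 0) (hmono : Monotone g) (hdep : ∑ i, g i • v i = 0) :
    ∃ s : Finset (Fin 4), s.card = 2 ∧ μ.real (splitCone v s) ≤ 2 / π * arcsin (1 / 3) := by
  rcases lt_or_ge 0 (g 1) with hg1 | hg1
  · exact hμ.exists_splitCone_le_of_monotone_of_pos hE hv hmono hg1 hdep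
  rcases lt_or_ge (g 2) 0 with hg2 | hg2
  · have hdep' : ∑ i, -g (Fin.rev i) • v (Fin.rev i) = 0 := by
      refine (Equiv.sum_comp Fin.revPerm fun i ↦ -g i • v i).trans ?_
      simpa only [neg_smul, Finset.sum_neg_distrib, neg_eq_zero] using hdep
    obtain ⟨s, hs, hle⟩ := hμ.exists_splitCone_le_of_monotone_of_pos hE (v := v ∘ Fin.revPerm)
      (fun i ↦ hv _) (fun i j hij ↦ neg_le_neg (hmono (Fin.rev_le_rev.2 hij)))
      (neg_pos.2 hg2) hdep'
    exact ⟨_, (s.card_map _).trans hs, splitCone_comp_equiv v Fin.revPerm s ▸ hle⟩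
  · refine ⟨{2, 3}, rfl, ?_⟩
    have hg0 : g 0 ≤ 0 := (hmono (by decide)).trans hg1
    have hg3 : 0 ≤ g 3 := hg2.trans (hmono (by decide))
    rw [splitCone_eq_empty hg hdep (by simp [hg2, hg3]) (by simp [Fin.forall_fin_succ, hg0, hg1]),
      measureReal_empty]
    exact two_div_pi_mul_arcsin_nonneg

lemma IsRotationInvariant.exists_splitCone_le [IsProbabilityMeasure μ]
    (hμ : IsRotationInvariant μ) (hE : 1 < Module.rank ℝ E) {v : Fin 4 → E} (hv : ∀ i, v i ≠ 0)
    (hdep : ¬LinearIndependent ℝ v) :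
    ∃ s : Finset (Fin 4), s.card = 2 ∧ μ.real (splitCone v s) ≤ 2 / π * arcsin (1 / 3) := by
  obtain ⟨g, hdep, i, hi⟩ := Fintype.not_linearIndependent_iff.1 hdep
  set σ := Tuple.sort g
  have hgσ : g ∘ σ ≠ 0 :=
    Function.ne_iff.2 ⟨σ.symm i, by rwa [Function.comp_apply, σ.apply_symm_apply]⟩
  obtain ⟨s, hs, hle⟩ := hμ.exists_splitCone_le_of_monotone hE (v := v ∘ σ) (fun i ↦ hv _) hgσ
    (Tuple.monotone_sort g) ((Equiv.sum_comp σ fun i ↦ g i • v i).trans hdep)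
  exact ⟨_, (s.card_map _).trans hs, splitCone_comp_equiv v σ s ▸ hle⟩

lemma IsRotationInvariant.exists_splitCone_pair_le [IsProbabilityMeasure μ]
    (hμ : IsRotationInvariant μ) (hE : 1 < Module.rank ℝ E) {v : Fin 4 → E} (hv : ∀ i, v i ≠ 0)
    (hdep : ¬LinearIndependent ℝ v) :
    ∃ i : Fin 3, μ.real (splitCone v {0, i.succ}) ≤ 2 / π * arcsin (1 / 3) := by
  obtain ⟨s, hs, hle⟩ := hμ.exists_splitCone_le hE hv hdep
  obtain ⟨i, hi⟩ : ∃ i : Fin 3, s = {0, i.succ} ∨ sᶜ = {0, i.succ} := by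
    clear hle
    decide +revert
  refine ⟨i, ?_⟩
  rcases hi with hi | hi
  · rwa [← hi]
  · rwa [← hi, splitCone_compl]

end SplitCone

lemma exists_affineMap_eq_zero_of_affineSpan_ne_top {k V : Type*} [Field k] [AddCommGroup V]
    [Module k V] {s : Set V} (hne : s.Nonempty) (hs : affineSpan k s ≠ ⊤) :
    ∃ f : V →ᵃ[k] k, f.linear ≠ 0 ∧ ∀ x ∈ s, f x = 0 := by
  obtain ⟨p, hp⟩ := hne
  have hdir : (affineSpan k s).direction < ⊤ := lt_top_iff_ne_top.2 fun h ↦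
    hs ((AffineSubspace.direction_eq_top_iff_of_nonempty ⟨p, subset_affineSpan k s hp⟩).1 h)
  obtain ⟨l, hl, hker⟩ := Submodule.exists_le_ker_of_lt_top _ hdir
  refine ⟨l.toAffineMap - AffineMap.const k V (l p), by simpa, fun x hx ↦ ?_⟩
  have := hker (AffineSubspace.vsub_mem_direction (subset_affineSpan k s hx)
    (subset_affineSpan k s hp))
  simpa using this

section Dehomogenize

variable {E V : Type*} [NormedAddCommGroup E] [InnerProductSpace ℝ E] [NormedAddCommGroup V]
  [NormedSpace ℝ V]

/-- The central projection from the origin of `E ≃ V × ℝ` to the affine hyperplane at height one,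
identified with `V`. It takes the junk value `0` at height zero. -/
def dehomogenize (e : E ≃L[ℝ] V × ℝ) (x : E) : V := (e x).2⁻¹ • (e x).1

/-- The point of the affine hyperplane of `E ≃ V × ℝ` at height one which lies above `q`. -/
def homogenize (e : E ≃L[ℝ] V × ℝ) (q : V) : E := e.symm (q, 1)

lemma homogenize_ne_zero (e : E ≃L[ℝ] V × ℝ) (q : V) : homogenize e q ≠ 0 := by
  simp [homogenize]

lemma continuous_homogenize (e : E ≃L[ℝ] V × ℝ) : Continuous (homogenize e) := by
  unfold homogenize
  fun_prop

lemma continuous_normalize_homogenize (e : E ≃L[ℝ] V × ℝ) :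
    Continuous fun q ↦ normalize (homogenize e q) :=
  ((continuous_homogenize e).norm.inv₀ fun q ↦ norm_ne_zero_iff.2 (homogenize_ne_zero e q)).smul
    (continuous_homogenize e)

lemma homogenize_dehomogenize (e : E ≃L[ℝ] V × ℝ) {x : E} (hx : (e x).2 ≠ 0) :
    homogenize e (dehomogenize e x) = (e x).2⁻¹ • x := by
  rw [homogenize, ContinuousLinearEquiv.symm_apply_eq, map_smul]
  ext <;> simp [dehomogenize, hx]

lemma measurable_dehomogenize [MeasurableSpace E] [BorelSpace E] [MeasurableSpace V] [BorelSpace V]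
    [FiniteDimensional ℝ V] (e : E ≃L[ℝ] V × ℝ) : Measurable (dehomogenize e) := by
  have := FiniteDimensional.proper ℝ V
  exact e.continuous.snd.measurable.inv.smul e.continuous.fst.measurable

variable [FiniteDimensional ℝ E]

/-- The vector representing the homogenization of the affine function `f` on `V`, that is, the
linear form on `E ≃ V × ℝ` which restricts to `f` at height one. -/
def coeffVector (e : E ≃L[ℝ] V × ℝ) (f : V →ᵃ[ℝ] ℝ) : E :=
  haveI := FiniteDimensional.complete ℝ E
  (InnerProductSpace.toDual ℝ E).symm <| LinearMap.toContinuousLinearMap <|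
    f.linear ∘ₗ LinearMap.fst ℝ V ℝ ∘ₗ e + f 0 • LinearMap.snd ℝ V ℝ ∘ₗ e

lemma inner_coeffVector (e : E ≃L[ℝ] V × ℝ) (f : V →ᵃ[ℝ] ℝ) (x : E) :
    ⟪coeffVector e f, x⟫ = f.linear (e x).1 + f 0 * (e x).2 := by
  have := FiniteDimensional.complete ℝ E
  rw [coeffVector, InnerProductSpace.toDual_symm_apply]
  simp

lemma inner_coeffVector_homogenize (e : E ≃L[ℝ] V × ℝ) (f : V →ᵃ[ℝ] ℝ) (q : V) :
    ⟪coeffVector e f, homogenize e q⟫ = f q := by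
  rw [inner_coeffVector, homogenize, e.apply_symm_apply, mul_one]
  exact (congrFun f.decomp q).symm

lemma inner_coeffVector_const_one (e : E ≃L[ℝ] V × ℝ) (x : E) :
    ⟪coeffVector e (AffineMap.const ℝ V 1), x⟫ = (e x).2 := by
  simp [inner_coeffVector]

lemma inner_coeffVector_eq_mul (e : E ≃L[ℝ] V × ℝ) (f : V →ᵃ[ℝ] ℝ) {x : E} (hx : (e x).2 ≠ 0) :
    ⟪coeffVector e f, x⟫ = (e x).2 * f (dehomogenize e x) := by
  rw [← inner_coeffVector_homogenize e, homogenize_dehomogenize e hx, real_inner_smul_right,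
    mul_inv_cancel_left₀ hx]

lemma coeffVector_ne_zero (e : E ≃L[ℝ] V × ℝ) {f : V →ᵃ[ℝ] ℝ} (hf : f ≠ 0) :
    coeffVector e f ≠ 0 := by
  contrapose! hf
  ext q
  rw [← inner_coeffVector_homogenize e, hf, inner_zero_left]
  rfl

variable [MeasurableSpace E] {μ : Measure E}

lemma IsRotationInvariant.ae_snd_ne_zero (hμ : IsRotationInvariant μ) (e : E ≃L[ℝ] V × ℝ) :
    ∀ᵐ x ∂μ, (e x).2 ≠ 0 := by
  have hone : AffineMap.const ℝ V (1 : ℝ) ≠ 0 := fun h ↦ one_ne_zero (DFunLike.congr_fun h 0)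
  simpa only [inner_coeffVector_const_one] using hμ.ae_inner_ne_zero (coeffVector_ne_zero e hone)

variable [BorelSpace E] [MeasurableSpace V] [BorelSpace V] [FiniteDimensional ℝ V]

lemma IsRotationInvariant.map_dehomogenize_le (hμ : IsRotationInvariant μ) (e : E ≃L[ℝ] V × ℝ)
    {s : Set V} (hs : MeasurableSet s) {t : Set E}
    (hst : ∀ x, (e x).2 ≠ 0 → dehomogenize e x ∈ s → x ∈ t) :
    μ.map (dehomogenize e) s ≤ μ t := by
  rw [Measure.map_apply (measurable_dehomogenize e) hs]
  refine measure_mono_ae ?_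
  filter_upwards [hμ.ae_snd_ne_zero e] with x hx
  exact hst x hx

lemma IsRotationInvariant.map_dehomogenize_zeros (hμ : IsRotationInvariant μ)
    (e : E ≃L[ℝ] V × ℝ) {f : V →ᵃ[ℝ] ℝ} (hf : f ≠ 0) :
    μ.map (dehomogenize e) {q | f q = 0} = 0 := by
  have hmeas : MeasurableSet {q | f q = 0} :=
    (isClosed_eq f.continuous_of_finiteDimensional continuous_const).measurableSet
  refine le_antisymm ((hμ.map_dehomogenize_le e hmeas (t := {x | ⟪coeffVector e f, x⟫ = 0})
    fun x hx hfx ↦ ?_).trans_eq (hμ.measure_hyperplane _ (coeffVector_ne_zero e hf))) bot_le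
  have hfx : f (dehomogenize e x) = 0 := hfx
  rw [Set.mem_ofPred_eq, inner_coeffVector_eq_mul e f hx, hfx, mul_zero]

lemma IsRotationInvariant.nullSingletonClass_map_dehomogenize [Nontrivial V]
    (hμ : IsRotationInvariant μ) (e : E ≃L[ℝ] V × ℝ) :
    NullSingletonClass (μ.map (dehomogenize e)) where
  measure_singleton q := by
    have hspan : affineSpan ℝ {q} ≠ ⊤ := fun h ↦ not_subsingleton V <|
      AffineSubspace.subsingleton_of_subsingleton_span_eq_top Set.subsingleton_singleton h
    obtain ⟨f, hf, hfq⟩ := exists_affineMap_eq_zero_of_affineSpan_ne_top (Set.singleton_nonempty q)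
      hspan
    have hf0 : f ≠ 0 := fun h ↦ hf (h ▸ rfl)
    exact measure_mono_null hfq (hμ.map_dehomogenize_zeros e hf0)

lemma IsRotationInvariant.map_dehomogenize_split_le [IsFiniteMeasure μ] {ι : Type*} [Countable ι]
    (hμ : IsRotationInvariant μ) (e : E ≃L[ℝ] V × ℝ) {s : Finset ι} (hs : ∃ i, i ∈ s)
    (hs' : ∃ i, i ∉ s) (h : ι → V →ᵃ[ℝ] ℝ) :
    (μ.map (dehomogenize e)).real {q | ∀ i ∈ s, ∀ j ∉ s, h i q * h j q < 0} ≤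
      μ.real (splitCone (fun i ↦ coeffVector e (h i)) s) := by
  have hcont i : Continuous (h i) := (h i).continuous_of_finiteDimensional
  have hmeas : MeasurableSet {q | ∀ i ∈ s, ∀ j ∉ s, h i q * h j q < 0} := by
    simp only [Set.ofPred_forall]
    exact .iInter fun i ↦ .iInter fun _ ↦ .iInter fun j ↦ .iInter fun _ ↦
      (isOpen_lt ((hcont i).mul (hcont j)) continuous_const).measurableSet
  refine ENNReal.toReal_mono (measure_ne_top _ _) (hμ.map_dehomogenize_le e hmeas fun x hx hq ↦
    mem_splitCone_of_forall_mem_oppositeSides hs hs' fun i hi j hj ↦ ?_)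
  rw [mem_oppositeSides, inner_coeffVector_eq_mul e _ hx, inner_coeffVector_eq_mul e _ hx]
  nlinarith [hq i hi j hj, mul_self_pos.2 hx]

end Dehomogenize

section CrossedCells

/-- The union of the cells `g = const` on which the function `f` takes values of weakly opposite
signs, the diagonal pairs included. -/
def crossedCells {X Y : Type*} (g : X → Y) (f : X → ℝ) : Set X :=
  {q | ∃ r, g q = g r ∧ f q * f r ≤ 0}

lemma measureReal_preimage_image_le {X Y ι : Type*} [MeasurableSpace X] {m : Measure X}
    [IsFiniteMeasure m] [Fintype ι] (g : X → Y) (h : ι → X → ℝ) (s : Finset ι) :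
    m.real (g ⁻¹' (g '' {q | ∀ i ∈ s, ∀ j ∉ s, h i q * h j q ≤ 0})) ≤
      m.real {q | ∀ i ∈ s, ∀ j ∉ s, h i q * h j q < 0} + ∑ i, m.real (crossedCells g (h i)) := by
  have hsub : g ⁻¹' (g '' {q | ∀ i ∈ s, ∀ j ∉ s, h i q * h j q ≤ 0}) ⊆
      {q | ∀ i ∈ s, ∀ j ∉ s, h i q * h j q < 0} ∪ ⋃ i, crossedCells g (h i) := by
    rintro q ⟨r, hr, hrq⟩
    rw [Set.mem_union, or_iff_not_imp_right]
    intro hq i hi j hj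
    have hpos i : 0 < h i q * h i r :=
      not_le.1 fun hle ↦ hq (Set.mem_iUnion.2 ⟨i, r, hrq.symm, hle⟩)
    have hi' := hpos i
    have hj' := hpos j
    have hr' := hr i hi j hj
    rw [mul_pos_iff] at hi' hj'
    rw [mul_nonpos_iff] at hr'
    rw [mul_neg_iff]
    grind
  exact (measureReal_mono hsub).trans <| (measureReal_union_le _ _).trans <|
    add_le_add_right (measureReal_iUnion_fintype_le _) _

lemma exists_simpleFunc_dist_lt {X : Type*} [PseudoMetricSpace X] [Nonempty X]
    [TopologicalSpace.SeparableSpace X] [MeasurableSpace X] [OpensMeasurableSpace X] {K : Set X}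
    (hK : IsCompact K) {δ : ℝ} (hδ : 0 < δ) : ∃ g : SimpleFunc X X, ∀ x ∈ K, dist (g x) x < δ := by
  obtain ⟨t, ht⟩ := hK.elim_finite_subcover
    (fun n ↦ Metric.ball (TopologicalSpace.denseSeq X n) δ) (fun _ ↦ Metric.isOpen_ball)
    fun x _ ↦ by
      obtain ⟨n, hn⟩ := (TopologicalSpace.denseRange_denseSeq X).exists_dist_lt x hδ
      exact Set.mem_iUnion.2 ⟨n, hn⟩
  refine ⟨SimpleFunc.nearestPt (TopologicalSpace.denseSeq X) (t.sup id), fun x hx ↦ ?_⟩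
  obtain ⟨n, hn, hxn⟩ := Set.mem_iUnion₂.1 (ht hx)
  rw [← edist_lt_ofReal]
  refine (SimpleFunc.edist_nearestPt_le _ x (Finset.le_sup (f := id) hn)).trans_lt ?_
  rwa [edist_lt_ofReal, dist_comm]

variable {E V : Type*} [NormedAddCommGroup E] [InnerProductSpace ℝ E] [NormedAddCommGroup V]
  [NormedSpace ℝ V]

-- A cell crossed by `f = 0` lifts to a subset of the unit sphere of diameter less than `δ` which
-- meets both closed sides of the hyperplane of `f`, so it lies in the band of width `δ` around it.
lemma crossedCells_subset_band [FiniteDimensional ℝ E] (e : E ≃L[ℝ] V × ℝ) {δ : ℝ} {g : V → E}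
    (hg : ∀ q, dist (g q) (normalize (homogenize e q)) < δ / 2) {f : V →ᵃ[ℝ] ℝ} (hf : f ≠ 0) :
    crossedCells g f ⊆
      {q | |⟪normalize (coeffVector e f), normalize (homogenize e q)⟫| ≤ δ} := by
  rintro q ⟨r, hqr, hfqr⟩
  set u := normalize (coeffVector e f)
  have hu : ‖u‖ = 1 := norm_normalize_eq_one_iff.2 (coeffVector_ne_zero e hf)
  have hinner q : ⟪u, normalize (homogenize e q)⟫ =
      ‖coeffVector e f‖⁻¹ * ‖homogenize e q‖⁻¹ * f q := by
    simp only [u, NormedSpace.normalize]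
    rw [real_inner_smul_left, real_inner_smul_right, inner_coeffVector_homogenize, mul_assoc]
  have hopp : ⟪u, normalize (homogenize e q)⟫ * ⟪u, normalize (homogenize e r)⟫ ≤ 0 := by
    rw [hinner, hinner, mul_mul_mul_comm]
    exact mul_nonpos_of_nonneg_of_nonpos (by positivity) hfqr
  have hdist : dist (normalize (homogenize e q)) (normalize (homogenize e r)) < δ := by
    have hq := hg q
    have hr := hg r
    rw [hqr] at hq
    linarith [dist_triangle_left (normalize (homogenize e q)) (normalize (homogenize e r)) (g r)]
  calc |⟪u, normalize (homogenize e q)⟫|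
      ≤ |⟪u, normalize (homogenize e q)⟫ - ⟪u, normalize (homogenize e r)⟫| :=
        sq_le_sq.1 (by nlinarith [sq_nonneg ⟪u, normalize (homogenize e r)⟫])
    _ = |⟪u, normalize (homogenize e q) - normalize (homogenize e r)⟫| := by rw [inner_sub_right]
    _ ≤ ‖u‖ * ‖normalize (homogenize e q) - normalize (homogenize e r)‖ :=
        abs_real_inner_le_norm _ _
    _ ≤ δ := by rw [hu, one_mul, ← dist_eq_norm]; exact hdist.le

variable [MeasurableSpace E] [BorelSpace E] {μ : Measure E}

lemma measurableSet_band (u : E) (δ : ℝ) : MeasurableSet {x : E | |⟪u, x⟫| ≤ δ * ‖x‖} :=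
  (isClosed_le (by fun_prop) (by fun_prop)).measurableSet

lemma IsRotationInvariant.measureReal_band_congr (hμ : IsRotationInvariant μ) {u v : E}
    (huv : ‖u‖ = ‖v‖) (δ : ℝ) :
    μ.real {x | |⟪u, x⟫| ≤ δ * ‖x‖} = μ.real {x | |⟪v, x⟫| ≤ δ * ‖x‖} := by
  obtain ⟨R, rfl, -⟩ := exists_linearIsometryEquiv_apply_eq huv huv (by simp [huv])
  rw [← (hμ.measurePreserving R).measureReal_preimage
    (measurableSet_band (R u) δ).nullMeasurableSet]
  simp only [Set.preimage_ofPred_eq, R.inner_map_map, R.norm_map]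

lemma IsRotationInvariant.exists_band_le [IsFiniteMeasure μ] (hμ : IsRotationInvariant μ)
    {ε : ℝ} (hε : 0 < ε) :
    ∃ δ > 0, ∀ u : E, ‖u‖ = 1 → μ.real {x | |⟪u, x⟫| ≤ δ * ‖x‖} ≤ ε := by
  by_cases hE : ∃ u₀ : E, ‖u₀‖ = 1
  swap
  · exact ⟨1, one_pos, fun u hu ↦ absurd ⟨u, hu⟩ hE⟩
  obtain ⟨u₀, hu₀⟩ := hE
  set band : ℕ → Set E := fun n ↦ {x | |⟪u₀, x⟫| ≤ 1 / ((n : ℝ) + 1) * ‖x‖}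
  have hanti : Antitone band := fun m n hmn x hx ↦
    hx.trans <| mul_le_mul_of_nonneg_right (by gcongr) (norm_nonneg x)
  have hinter : μ (⋂ n, band n) = 0 := by
    refine measure_mono_null (fun x hx ↦ ?_)
      (hμ.measure_hyperplane u₀ (norm_ne_zero_iff.1 (by simp [hu₀])))
    have hlim := tendsto_one_div_add_atTop_nhds_zero_nat (𝕜 := ℝ).mul_const ‖x‖
    rw [zero_mul] at hlim
    exact abs_nonpos_iff.1 (ge_of_tendsto' hlim (Set.mem_iInter.1 hx))
  have hlim := tendsto_measure_iInter_atTop (μ := μ)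
    (fun n ↦ (measurableSet_band u₀ _).nullMeasurableSet) hanti ⟨0, measure_ne_top _ _⟩
  rw [hinter] at hlim
  obtain ⟨n, hn⟩ := (hlim.eventually_lt_const (ENNReal.ofReal_pos.2 hε)).exists
  refine ⟨1 / ((n : ℝ) + 1), by positivity, fun u hu ↦ ?_⟩
  rw [hμ.measureReal_band_congr (hu.trans hu₀.symm)]
  exact ENNReal.toReal_le_of_le_ofReal hε.le hn.le

variable [MeasurableSpace V] [BorelSpace V] [FiniteDimensional ℝ V] [FiniteDimensional ℝ E]

lemma IsRotationInvariant.map_dehomogenize_band_le [IsFiniteMeasure μ]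
    (hμ : IsRotationInvariant μ) (e : E ≃L[ℝ] V × ℝ) (u : E) (δ : ℝ) :
    (μ.map (dehomogenize e)).real {q | |⟪u, normalize (homogenize e q)⟫| ≤ δ} ≤
      μ.real {x | |⟪u, x⟫| ≤ δ * ‖x‖} := by
  have hmeas : MeasurableSet {q | |⟪u, normalize (homogenize e q)⟫| ≤ δ} :=
    (isClosed_le (continuous_const.inner (continuous_normalize_homogenize e)).abs
      continuous_const).measurableSet
  refine ENNReal.toReal_mono (measure_ne_top _ _)
    (hμ.map_dehomogenize_le e hmeas fun x hx hq ↦ ?_)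
  have hx0 : x ≠ 0 := by
    rintro rfl
    simp at hx
  simp only [Set.mem_ofPred_eq, homogenize_dehomogenize e hx, NormedSpace.normalize, norm_smul,
    inner_smul_right, abs_mul, norm_inv, Real.norm_eq_abs, abs_inv, abs_norm, mul_inv,
    inv_inv] at hq ⊢
  field_simp at hq
  linarith

lemma IsRotationInvariant.exists_simpleFunc_crossedCells_le [IsFiniteMeasure μ]
    (hμ : IsRotationInvariant μ) (e : E ≃L[ℝ] V × ℝ) {ε : ℝ} (hε : 0 < ε) :
    ∃ g : SimpleFunc V E, ∀ f : V →ᵃ[ℝ] ℝ, f ≠ 0 →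
      (μ.map (dehomogenize e)).real (crossedCells g f) ≤ ε := by
  have := FiniteDimensional.proper ℝ E
  obtain ⟨δ, hδ, hband⟩ := hμ.exists_band_le hε
  obtain ⟨g, hg⟩ := exists_simpleFunc_dist_lt (isCompact_sphere (0 : E) 1) (half_pos hδ)
  refine ⟨g.comp _ (continuous_normalize_homogenize e).measurable, fun f hf ↦ ?_⟩
  refine (measureReal_mono (crossedCells_subset_band e (fun q ↦ hg _ ?_) hf)).trans <|
    (hμ.map_dehomogenize_band_le e _ δ).trans (hband _ ?_)
  · simpa using homogenize_ne_zero e q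
  · exact norm_normalize_eq_one_iff.2 (coeffVector_ne_zero e hf)

end CrossedCells

section BallMeasure

variable (E : Type*) [NormedAddCommGroup E] [InnerProductSpace ℝ E] [FiniteDimensional ℝ E]
  [MeasurableSpace E] [BorelSpace E]

/-- The uniform probability measure on the unit ball of a Euclidean space. -/
def ballMeasure : Measure E := ProbabilityTheory.cond volume (Metric.ball 0 1)

instance : IsProbabilityMeasure (ballMeasure E) :=
  ProbabilityTheory.cond_isProbabilityMeasure_of_finite
    (Metric.measure_ball_pos volume 0 one_pos).ne' measure_ball_lt_top.ne

lemma isRotationInvariant_ballMeasure : IsRotationInvariant (ballMeasure E) where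
  measurePreserving R := by
    refine ⟨R.continuous.measurable, ?_⟩
    ext s hs
    have hball : R ⁻¹' Metric.ball 0 1 = Metric.ball 0 1 := by
      rw [R.preimage_ball, map_zero]
    rw [Measure.map_apply R.continuous.measurable hs, ballMeasure,
      ProbabilityTheory.cond_apply measurableSet_ball,
      ProbabilityTheory.cond_apply measurableSet_ball]
    nth_rewrite 2 [← hball]
    rw [← Set.preimage_inter, R.measurePreserving.measure_preimage
      (measurableSet_ball.inter hs).nullMeasurableSet]
  measure_hyperplane u hu := by
    have horth : (ℝ ∙ u)ᗮ ≠ ⊤ := by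
      rwa [Ne, Submodule.orthogonal_eq_top_iff, Submodule.span_singleton_eq_bot]
    apply ProbabilityTheory.cond_absolutelyContinuous
    convert Measure.addHaar_submodule volume _ horth using 2
    ext x
    simp [Submodule.mem_orthogonal_singleton_iff_inner_right]

end BallMeasure

section Discretization

variable {X Y : Type*} [MeasurableSpace X] (m : Measure X) [NullSingletonClass m]

lemma exists_finset_subset_card_eq_floor (s : Set X) (N : ℝ) :
    ∃ F : Finset X, ↑F ⊆ s ∧ F.card = ⌊N * m.real s⌋₊ := by
  by_cases hs : m s = 0
  · exact ⟨∅, by simp, by simp [measureReal_def, hs]⟩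
  · have hinf : s.Infinite := fun hfin ↦ hs (hfin.measure_zero m)
    exact hinf.exists_subset_card_eq _

variable [IsProbabilityMeasure m] (g : SimpleFunc X Y)

lemma exists_finset_card_le_mul_measureReal (N : ℕ) :
    ∃ S : Finset X, (N : ℝ) ≤ S.card + g.range.card ∧
      ∀ T ⊆ S, (T.card : ℝ) ≤ N * m.real (g ⁻¹' (g '' T)) := by
  classical
  choose F hF hcard using fun y ↦ exists_finset_subset_card_eq_floor m (g ⁻¹' {y}) N
  have hdisj : (g.range : Set Y).PairwiseDisjoint F := fun y _ z _ hyz ↦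
    Finset.disjoint_left.2 fun x hy hz ↦ hyz ((hF y hy).symm.trans (hF z hz))
  have hsum (I : Finset Y) : ∑ y ∈ I, m.real (g ⁻¹' {y}) = m.real (g ⁻¹' I) :=
    sum_measureReal_preimage_singleton I fun y _ ↦ g.measurableSet_fiber y
  refine ⟨g.range.biUnion F, ?_, fun T hT ↦ ?_⟩
  · calc (N : ℝ) = ∑ y ∈ g.range, N * m.real (g ⁻¹' {y}) := by
          rw [← Finset.mul_sum, hsum, SimpleFunc.coe_range, Set.preimage_range, probReal_univ,
            mul_one]
      _ ≤ ∑ y ∈ g.range, ((F y).card + 1 : ℝ) :=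
          Finset.sum_le_sum fun y _ ↦ by rw [hcard]; exact (Nat.lt_floor_add_one _).le
      _ = (g.range.biUnion F).card + g.range.card := by
          rw [Finset.card_biUnion hdisj, Finset.sum_add_distrib]
          simp
  · have hsub : T ⊆ (T.image g).biUnion F := fun x hx ↦ by
      obtain ⟨y, -, hxy⟩ := Finset.mem_biUnion.1 (hT hx)
      exact Finset.mem_biUnion.2 ⟨y, Finset.mem_image.2 ⟨x, hx, hF y hxy⟩, hxy⟩
    calc (T.card : ℝ) ≤ ∑ y ∈ T.image g, ((F y).card : ℝ) :=
          mod_cast (Finset.card_le_card hsub).trans Finset.card_biUnion_le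
      _ ≤ ∑ y ∈ T.image g, N * m.real (g ⁻¹' {y}) :=
          Finset.sum_le_sum fun y _ ↦ by rw [hcard]; exact Nat.floor_le (by positivity)
      _ = N * m.real (g ⁻¹' (g '' T)) := by rw [← Finset.mul_sum, hsum, Finset.coe_image]

lemma exists_finset_card_lt {c' c : ℝ} (hc' : 0 ≤ c') (hc : c' < c) (n : ℕ) :
    ∃ S : Finset X, n ≤ S.card ∧
      ∀ T ⊆ S, m.real (g ⁻¹' (g '' T)) ≤ c' → (T.card : ℝ) < c * S.card := by
  obtain ⟨k, hk⟩ := exists_nat_gt (c * g.range.card / (c - c'))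
  rw [div_lt_iff₀ (sub_pos.2 hc)] at hk
  obtain ⟨S, hcard, hS⟩ := exists_finset_card_le_mul_measureReal m g (k + n + g.range.card)
  push_cast at hcard hS
  refine ⟨S, ?_, fun T hT hTc ↦ ?_⟩
  · have : (n : ℝ) ≤ S.card := by linarith [k.cast_nonneg (α := ℝ)]
    exact_mod_cast this
  · calc (T.card : ℝ) ≤ (k + n + g.range.card) * m.real (g ⁻¹' (g '' T)) := hS T hT
      _ ≤ (k + n + g.range.card) * c' := by gcongr
      _ < c * (k + n) := by nlinarith [n.cast_nonneg (α := ℝ)]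
      _ ≤ c * S.card := by nlinarith

end Discretization

section Separation

variable {V : Type*} [NormedAddCommGroup V] [NormedSpace ℝ V]

lemma exists_mem_convexHull_range_of_mem_convexHull_iUnion {κ : Type*} [Finite κ]
    {C : κ → Set V} (hC : ∀ j, Convex ℝ (C j)) (hne : ∀ j, (C j).Nonempty) {p : V}
    (hp : p ∈ convexHull ℝ (⋃ j, C j)) :
    ∃ q : κ → V, (∀ j, q j ∈ C j) ∧ p ∈ convexHull ℝ (Set.range q) := by
  classical
  cases nonempty_fintype κ
  obtain ⟨α, _, w, z, hw, hw1, hz, rfl⟩ := mem_convexHull_iff_exists_fintype.1 hp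
  choose idx hidx using fun a ↦ Set.mem_iUnion.1 (hz a)
  have hfiber j : ∃ q ∈ C j,
      ∑ a with idx a = j, w a • z a = (∑ a with idx a = j, w a) • q := by
    by_cases h0 : ∑ a with idx a = j, w a = 0
    · obtain ⟨q, hq⟩ := hne j
      have hw0 := (Finset.sum_eq_zero_iff_of_nonneg fun a _ ↦ hw a).1 h0
      refine ⟨q, hq, ?_⟩
      rw [h0, zero_smul, Finset.sum_eq_zero fun a ha ↦ by rw [hw0 a ha, zero_smul]]
    · refine ⟨_, (hC j).centerMass_mem (fun a _ ↦ hw a)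
        ((Finset.sum_nonneg fun a _ ↦ hw a).lt_of_ne' h0) (z := z) fun a ha ↦ ?_,
        (smul_inv_smul₀ h0 _).symm⟩
      rw [← (Finset.mem_filter.1 ha).2]
      exact hidx a
  choose q hq hsum using hfiber
  refine ⟨q, hq, ?_⟩
  rw [← Finset.sum_fiberwise Finset.univ idx, Finset.sum_congr rfl fun j _ ↦ hsum j]
  exact (convex_convexHull ℝ _).sum_mem (fun j _ ↦ Finset.sum_nonneg fun a _ ↦ hw a)
    ((Finset.sum_fiberwise Finset.univ idx w).trans hw1)
    fun j _ ↦ subset_convexHull ℝ _ (Set.mem_range_self j)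

lemma exists_affineMap_nonneg_nonpos_of_disjoint {κ : Type*} [Nonempty κ] {s : Set V}
    {t : κ → Set V} (hs : (interior (convexHull ℝ s)).Nonempty)
    (ht : ∀ j, (interior (convexHull ℝ (t j))).Nonempty)
    (hdisj : Disjoint (interior (convexHull ℝ s))
      (convexHull ℝ (⋃ j, interior (convexHull ℝ (t j))))) :
    ∃ f : V →ᵃ[ℝ] ℝ, f.linear ≠ 0 ∧ (∀ x ∈ s, 0 ≤ f x) ∧ ∀ j, ∀ x ∈ t j, f x ≤ 0 := by
  obtain ⟨l, u, hls, hlt⟩ := geometric_hahn_banach_open (convex_convexHull ℝ s).interior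
    isOpen_interior (convex_convexHull ℝ _) hdisj
  have hlt j x (hx : x ∈ interior (convexHull ℝ (t j))) : u ≤ l x :=
    hlt x (subset_convexHull ℝ _ (Set.mem_iUnion_of_mem j hx))
  have hclosure {r : Set V} (hr : (interior (convexHull ℝ r)).Nonempty) :
      r ⊆ closure (interior (convexHull ℝ r)) := by
    rw [(convex_convexHull ℝ r).closure_interior_eq_closure_of_nonempty_interior hr]
    exact (subset_convexHull ℝ r).trans subset_closure
  refine ⟨AffineMap.const ℝ V u - (l : V →ₗ[ℝ] ℝ).toAffineMap, fun hlin ↦ ?_, fun x hx ↦ ?_,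
    fun j x hx ↦ ?_⟩
  · obtain ⟨x, hx⟩ := hs
    obtain ⟨y, hy⟩ := ht (Classical.arbitrary κ)
    have hl z : l z = 0 := by simpa using LinearMap.congr_fun hlin z
    have hxu := hls x hx
    have hyu := hlt _ y hy
    rw [hl] at hxu hyu
    exact hxu.not_ge hyu
  · exact sub_nonneg.2 <| closure_minimal (t := {x | l x ≤ u}) (fun y hy ↦ (hls y hy).le)
      (isClosed_le l.continuous continuous_const) (hclosure hs hx)
  · exact sub_nonpos.2 <| closure_minimal (t := {x | u ≤ l x}) (hlt j)
      (isClosed_le continuous_const l.continuous) (hclosure (ht j) hx)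

lemma exists_affineMap_eq_zero_of_card_le_finrank {κ : Type*} [Fintype κ] [Nonempty κ]
    (hκ : Fintype.card κ ≤ Module.finrank ℝ V) (q : κ → V) :
    ∃ f : V →ᵃ[ℝ] ℝ, f.linear ≠ 0 ∧ ∀ j, f (q j) = 0 := by
  have hspan : affineSpan ℝ (Set.range q) ≠ ⊤ := fun htop ↦ by
    have hfin := finrank_vectorSpan_range_add_one_le ℝ q
    rw [← direction_affineSpan, htop, AffineSubspace.direction_top, finrank_top] at hfin
    lia
  obtain ⟨f, hf, hfq⟩ := exists_affineMap_eq_zero_of_affineSpan_ne_top (Set.range_nonempty q) hspan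
  exact ⟨f, hf, fun j ↦ hfq _ (Set.mem_range_self j)⟩

lemma exists_pos_of_mem_interior_convexHull {f : V →ᵃ[ℝ] ℝ} (hf : f.linear ≠ 0) {s : Set V}
    {p : V} (hp : p ∈ interior (convexHull ℝ s)) (hfp : f p = 0) : ∃ x ∈ s, 0 < f x := by
  by_contra! hs
  have hhull : convexHull ℝ s ⊆ f ⁻¹' Set.Iic 0 :=
    convexHull_min hs ((convex_Iic 0).affine_preimage f)
  have hopen : IsOpenMap f := AffineMap.isOpenMap_linear_iff.1
    (f.linear.isOpenMap_of_finiteDimensional (LinearMap.surjective hf))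
  have hmem := interior_maximal (Set.image_subset_iff.2 (interior_subset.trans hhull))
    (hopen _ isOpen_interior) (Set.mem_image_of_mem f hp)
  rw [interior_Iic, hfp] at hmem
  exact lt_irrefl (0 : ℝ) hmem

lemma exists_neg_of_mem_interior_convexHull {f : V →ᵃ[ℝ] ℝ} (hf : f.linear ≠ 0) {s : Set V}
    {p : V} (hp : p ∈ interior (convexHull ℝ s)) (hfp : f p = 0) : ∃ x ∈ s, f x < 0 := by
  simpa using exists_pos_of_mem_interior_convexHull (f := -f) (by simpa using hf) hp
    (by simpa using hfp)

variable {ι : Type*} [Fintype ι] [Nontrivial ι] {A : ι → Set V}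

-- Through a point of `conv A i` which is a convex combination of points of the other `conv A j`
-- there is a hyperplane containing all of these points.
lemma disjoint_interior_convexHull_of_not_cut (hι : Fintype.card ι ≤ Module.finrank ℝ V + 1)
    (hA : ∀ i, (interior (convexHull ℝ (A i))).Nonempty)
    (hcut : ¬∃ f : V →ᵃ[ℝ] ℝ, f.linear ≠ 0 ∧ ∀ i, (∃ x ∈ A i, 0 < f x) ∧ ∃ x ∈ A i, f x < 0)
    (i : ι) :
    Disjoint (interior (convexHull ℝ (A i)))
      (convexHull ℝ (⋃ j : {j // j ≠ i}, interior (convexHull ℝ (A j)))) := by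
  classical
  refine Set.disjoint_left.2 fun p hpi hp ↦ hcut ?_
  obtain ⟨q, hq, hpq⟩ := exists_mem_convexHull_range_of_mem_convexHull_iUnion
    (fun j : {j // j ≠ i} ↦ (convex_convexHull ℝ (A j)).interior) (fun j ↦ hA j) hp
  have : Nonempty {j // j ≠ i} := nonempty_subtype.2 (exists_ne i)
  have hcard : Fintype.card {j // j ≠ i} ≤ Module.finrank ℝ V := by
    rw [Fintype.card_subtype_compl, Fintype.card_subtype_eq]
    lia
  obtain ⟨f, hf, hfq⟩ := exists_affineMap_eq_zero_of_card_le_finrank hcard q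
  have hfp : f p = 0 := convexHull_min (Set.range_subset_iff.2 hfq)
    ((convex_singleton (0 : ℝ)).affine_preimage f) hpq
  refine ⟨f, hf, fun j ↦ ?_⟩
  obtain ⟨r, hr, hfr⟩ : ∃ r ∈ interior (convexHull ℝ (A j)), f r = 0 := by
    by_cases hj : j = i
    · exact ⟨p, hj ▸ hpi, hfp⟩
    · exact ⟨q ⟨j, hj⟩, hq ⟨j, hj⟩, hfq ⟨j, hj⟩⟩
  exact ⟨exists_pos_of_mem_interior_convexHull hf hr hfr,
    exists_neg_of_mem_interior_convexHull hf hr hfr⟩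

lemma exists_affineMap_nonneg_nonpos_of_not_cut (hι : Fintype.card ι ≤ Module.finrank ℝ V + 1)
    (hA : ∀ i, (interior (convexHull ℝ (A i))).Nonempty)
    (hcut : ¬∃ f : V →ᵃ[ℝ] ℝ, f.linear ≠ 0 ∧ ∀ i, (∃ x ∈ A i, 0 < f x) ∧ ∃ x ∈ A i, f x < 0)
    (i : ι) :
    ∃ f : V →ᵃ[ℝ] ℝ, f.linear ≠ 0 ∧ (∀ x ∈ A i, 0 ≤ f x) ∧ ∀ j ≠ i, ∀ x ∈ A j, f x ≤ 0 := by
  have : Nonempty {j // j ≠ i} := nonempty_subtype.2 (exists_ne i)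
  obtain ⟨f, hf, hfi, hfj⟩ := exists_affineMap_nonneg_nonpos_of_disjoint (hA i)
    (t := fun j : {j // j ≠ i} ↦ A j) (fun j ↦ hA j)
    (disjoint_interior_convexHull_of_not_cut hι hA hcut i)
  exact ⟨f, hf, hfi, fun j hj ↦ hfj ⟨j, hj⟩⟩

end Separation

section NontransversalTriple

lemma mul_nonpos_of_mem_pair_of_notMem_pair {n : ℕ} {h : Fin (n + 1) → ℝ} {i : Fin n}
    (h0 : 0 ≤ h 0) (hi : 0 ≤ h i.succ) (hj : ∀ j ≠ i, h j.succ ≤ 0) {a b : Fin (n + 1)}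
    (ha : a ∈ ({0, i.succ} : Finset (Fin (n + 1))))
    (hb : b ∉ ({0, i.succ} : Finset (Fin (n + 1)))) : h a * h b ≤ 0 := by
  have hha : 0 ≤ h a := by
    rcases Finset.mem_insert.1 ha with rfl | ha
    · exact h0
    · rwa [Finset.mem_singleton.1 ha]
  simp only [Finset.mem_insert, Finset.mem_singleton, not_or] at hb
  obtain ⟨j, rfl⟩ := Fin.exists_succ_eq.2 hb.1
  exact mul_nonpos_of_nonneg_of_nonpos hha (hj j (ne_of_apply_ne Fin.succ hb.2))

variable {V E Y : Type*} [NormedAddCommGroup V] [NormedSpace ℝ V] [FiniteDimensional ℝ V]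
  [MeasurableSpace V]

lemma interior_convexHull_nonempty_of_crossedCells_le {m : Measure V} [IsFiniteMeasure m]
    {g : V → Y} {ε : ℝ} (hg : ∀ f : V →ᵃ[ℝ] ℝ, f ≠ 0 → m.real (crossedCells g f) ≤ ε)
    {s : Set V} (hne : s.Nonempty) (hs : ε < m.real (g ⁻¹' (g '' s))) :
    (interior (convexHull ℝ s)).Nonempty := by
  rw [interior_convexHull_nonempty_iff_affineSpan_eq_top]
  by_contra hspan
  obtain ⟨f, hf, hfs⟩ := exists_affineMap_eq_zero_of_affineSpan_ne_top hne hspan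
  have hsub : g ⁻¹' (g '' s) ⊆ crossedCells g f := by
    rintro q ⟨r, hr, hrq⟩
    exact ⟨r, hrq.symm, by rw [hfs r hr, mul_zero]⟩
  have hf0 : f ≠ 0 := fun h ↦ hf (h ▸ rfl)
  exact hs.not_ge ((measureReal_mono hsub).trans (hg f hf0))

variable [BorelSpace V] [NormedAddCommGroup E] [InnerProductSpace ℝ E] [FiniteDimensional ℝ E]
  [MeasurableSpace E] [BorelSpace E] {μ : Measure E} [IsProbabilityMeasure μ]

-- The fourth plane is the one of the line at infinity, on which `AffineMap.const ℝ V 1` vanishes.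
lemma IsRotationInvariant.exists_measureReal_le_of_separated (hμ : IsRotationInvariant μ)
    (e : E ≃L[ℝ] V × ℝ) (hV : Module.finrank ℝ V = 2) {g : V → Y} {ε : ℝ}
    (hg : ∀ f : V →ᵃ[ℝ] ℝ, f ≠ 0 → (μ.map (dehomogenize e)).real (crossedCells g f) ≤ ε)
    {A : Fin 3 → Set V} {f : Fin 3 → V →ᵃ[ℝ] ℝ} (hf : ∀ i, f i ≠ 0)
    (hfi : ∀ i, ∀ x ∈ A i, 0 ≤ f i x) (hfj : ∀ i, ∀ j ≠ i, ∀ x ∈ A j, f i x ≤ 0) :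
    ∃ i, (μ.map (dehomogenize e)).real (g ⁻¹' (g '' A i)) ≤ 2 / π * arcsin (1 / 3) + 4 * ε := by
  have hfin : Module.finrank ℝ E = 3 := by
    rw [e.toLinearEquiv.finrank_eq, Module.finrank_prod, hV, Module.finrank_self]
  have hrank : 1 < Module.rank ℝ E := by
    rw [← Module.finrank_eq_rank, hfin]
    norm_num
  set h : Fin 4 → V →ᵃ[ℝ] ℝ := Fin.cons (AffineMap.const ℝ V 1) f
  have hh : ∀ i, h i ≠ 0 :=
    Fin.cases (fun h0 ↦ one_ne_zero (α := ℝ) (DFunLike.congr_fun h0 0)) hf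
  have hdep : ¬LinearIndependent ℝ fun i ↦ coeffVector e (h i) := fun hind ↦ by
    simpa [hfin] using hind.fintype_card_le_finrank
  obtain ⟨i, hi⟩ := hμ.exists_splitCone_pair_le hrank (fun i ↦ coeffVector_ne_zero e (hh i)) hdep
  refine ⟨i, ?_⟩
  have : IsProbabilityMeasure (μ.map (dehomogenize e)) :=
    Measure.isProbabilityMeasure_map (measurable_dehomogenize e).aemeasurable
  have hsub : A i ⊆ {q | ∀ a ∈ ({0, i.succ} : Finset (Fin 4)), ∀ b ∉ ({0, i.succ} : Finset (Fin 4)),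
      h a q * h b q ≤ 0} := fun x hx a ha b hb ↦
    mul_nonpos_of_mem_pair_of_notMem_pair (h := fun a ↦ h a x) zero_le_one (hfi i x hx)
      (fun j hj ↦ hfj j i hj.symm x hx) ha hb
  have hproper : ∀ i : Fin 3, ∃ b, b ∉ ({0, i.succ} : Finset (Fin 4)) := by decide
  calc (μ.map (dehomogenize e)).real (g ⁻¹' (g '' A i))
      ≤ _ := measureReal_mono (Set.preimage_mono (Set.image_mono hsub))
    _ ≤ _ := measureReal_preimage_image_le g (fun i ↦ h i) {0, i.succ}
    _ ≤ 2 / π * arcsin (1 / 3) + ∑ _ : Fin 4, ε := by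
        refine add_le_add ?_ (Finset.sum_le_sum fun i _ ↦ hg (h i) (hh i))
        exact (hμ.map_dehomogenize_split_le e ⟨0, by simp⟩ (hproper i) h).trans hi
    _ = 2 / π * arcsin (1 / 3) + 4 * ε := by simp

lemma IsRotationInvariant.exists_measureReal_le_of_not_cut (hμ : IsRotationInvariant μ)
    (e : E ≃L[ℝ] V × ℝ) (hV : Module.finrank ℝ V = 2) {g : V → Y} {ε : ℝ} (hε : 0 ≤ ε)
    (hg : ∀ f : V →ᵃ[ℝ] ℝ, f ≠ 0 → (μ.map (dehomogenize e)).real (crossedCells g f) ≤ ε)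
    {A : Fin 3 → Set V}
    (hA : ¬∃ f : V →ᵃ[ℝ] ℝ, f.linear ≠ 0 ∧ ∀ i, (∃ x ∈ A i, 0 < f x) ∧ ∃ x ∈ A i, f x < 0) :
    ∃ i, (μ.map (dehomogenize e)).real (g ⁻¹' (g '' A i)) ≤ 2 / π * arcsin (1 / 3) + 4 * ε := by
  have := two_div_pi_mul_arcsin_nonneg
  by_contra! hlarge
  have hthick i : (interior (convexHull ℝ (A i))).Nonempty := by
    refine interior_convexHull_nonempty_of_crossedCells_le hg ?_ (lt_of_le_of_lt ?_ (hlarge i))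
    · rw [Set.nonempty_iff_ne_empty]
      intro hempty
      have := hlarge i
      rw [hempty, Set.image_empty, Set.preimage_empty, measureReal_empty] at this
      linarith
    · linarith
  choose f hf hfi hfj using exists_affineMap_nonneg_nonpos_of_not_cut (by simp [hV]) hthick hA
  obtain ⟨i, hi⟩ := hμ.exists_measureReal_le_of_separated e hV hg
    (fun i h0 ↦ hf i (by rw [h0]; rfl)) hfi hfj
  exact (hlarge i).not_ge hi

end NontransversalTriple

/-- Lower bound `P(2) ≥ π / (2 arcsin (1/3))`: for any `c > (2/π) arcsin (1/3)` and any `n₀`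
there is a set of `n ≥ n₀` points in ℝ² such that in any non-transversal family of three
subsets, some subset has fewer than `c·n` points. -/
theorem nontransversal_triple_lower_bound (c : ℝ)
    (hc : (2 / Real.pi) * Real.arcsin (1 / 3) < c) (n₀ : ℕ) :
    ∃ S : Finset (Fin 2 → ℝ), n₀ ≤ S.card ∧
      ∀ S₁ S₂ S₃ : Finset (Fin 2 → ℝ), S₁ ⊆ S → S₂ ⊆ S → S₃ ⊆ S →
        (¬ ∃ f : (Fin 2 → ℝ) →ᵃ[ℝ] ℝ, f.linear ≠ 0 ∧
            Cuts f S₁ ∧ Cuts f S₂ ∧ Cuts f S₃) →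
        ((S₁.card : ℝ) < c * S.card ∨ (S₂.card : ℝ) < c * S.card ∨
          (S₃.card : ℝ) < c * S.card) := by
  obtain ⟨ε, hε, hεc⟩ : ∃ ε > 0, 2 / π * arcsin (1 / 3) + 4 * ε < c :=
    ⟨(c - 2 / π * arcsin (1 / 3)) / 5, by linarith, by linarith⟩
  have hμ := isRotationInvariant_ballMeasure (EuclideanSpace ℝ (Fin 3))
  let e : EuclideanSpace ℝ (Fin 3) ≃L[ℝ] (Fin 2 → ℝ) × ℝ := .ofFinrankEq (by simp)
  set m := (ballMeasure (EuclideanSpace ℝ (Fin 3))).map (dehomogenize e)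
  have : NullSingletonClass m := hμ.nullSingletonClass_map_dehomogenize e
  have : IsProbabilityMeasure m :=
    Measure.isProbabilityMeasure_map (measurable_dehomogenize e).aemeasurable
  obtain ⟨g, hg⟩ := hμ.exists_simpleFunc_crossedCells_le e hε
  obtain ⟨S, hn, hS⟩ := exists_finset_card_lt m g
    (by linarith [two_div_pi_mul_arcsin_nonneg]) hεc n₀
  refine ⟨S, hn, fun S₁ S₂ S₃ h₁ h₂ h₃ hcut ↦ ?_⟩
  have hcut' : ¬∃ f : (Fin 2 → ℝ) →ᵃ[ℝ] ℝ, f.linear ≠ 0 ∧ ∀ i,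
      (∃ x ∈ (![S₁, S₂, S₃] i : Set (Fin 2 → ℝ)), 0 < f x) ∧
        ∃ x ∈ (![S₁, S₂, S₃] i : Set (Fin 2 → ℝ)), f x < 0 := by
    simpa [Fin.forall_fin_succ, Cuts] using hcut
  obtain ⟨i, hi⟩ := hμ.exists_measureReal_le_of_not_cut e (by simp) hε.le hg hcut'
  fin_cases i
  · exact .inl (hS _ h₁ hi)
  · exact .inr (.inl (hS _ h₂ hi))
  · exact .inr (.inr (hS _ h₃ hi))
end
end

section
/- For every integer d ≥ 2, every finite set X of n points in ℝ^d admits a line (a 1-dimensional affine subspace) whose regression depth with respect to X is at least n/(2d−1). (Equivalently, R(d,1) ≤ 2d−1.) -/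
noncomputable section

/-- Regression depth of a flat `F` with respect to a finite point set `X`, where
ℝ^d is regarded as ℝ^k × ℝ^(d−k), the first factor carrying the independent
variables: the minimum, over all nonconstant affine functionals `f` vanishing on
`F` and all vertical affine functionals `g = h ∘ π` (with `h` a nonconstant
affine functional on ℝ^k and `π` the projection onto the first factor), of the
number of points `x ∈ X` with `f x * g x ≤ 0` (the points of `X` in the closed
double wedge bounded by the hyperplane `{f = 0}` containing `F` and the vertical
hyperplane `{g = 0}`). -/
def regDepth {k m : ℕ} (F : AffineSubspace ℝ ((Fin k → ℝ) × (Fin m → ℝ)))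
    (X : Finset ((Fin k → ℝ) × (Fin m → ℝ))) : ℕ :=
  sInf { n : ℕ | ∃ f : ((Fin k → ℝ) × (Fin m → ℝ)) →ᵃ[ℝ] ℝ, f.linear ≠ 0 ∧
    (∀ x ∈ F, f x = 0) ∧
    ∃ h : (Fin k → ℝ) →ᵃ[ℝ] ℝ, h.linear ≠ 0 ∧
      n = {x ∈ (X : Set ((Fin k → ℝ) × (Fin m → ℝ))) | f x * h x.1 ≤ 0}.ncard }

/-- `F` is a (nonempty) affine flat of dimension `j`. -/
def IsFlatOfDim {k m : ℕ} (j : ℕ)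
    (F : AffineSubspace ℝ ((Fin k → ℝ) × (Fin m → ℝ))) : Prop :=
  (F : Set ((Fin k → ℝ) × (Fin m → ℝ))).Nonempty ∧ Module.finrank ℝ F.direction = j

/-!
Fitting `y = a + B t` to `n` points is a problem with `D = (k + 1) m` parameters. Add
`ε ‖(a, B)‖² / 2` to half of each squared residual; the `n` gradients are vector fields pointing
outward on a large sphere of parameters. At a given parameter call a direction shallow if fewer than
`n / (D + 1)` of the gradients have a nonpositive component along it. By pigeonhole any `D + 1`
shallow directions share a gradient with positive components along all of them, so by Carathéodory
the origin is never a convex combination of shallow directions. If every parameter had a shallow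
direction, a partition of unity would therefore yield a `C¹` field without zeros equal to the
identity on the sphere, hence a `C¹` retraction of the ball, which the integral of the Jacobian
determinant rules out. So some parameter has no shallow direction, and letting `ε → 0` along an
ultrafilter turns it into a deep flat.
-/

open Filter Finset MeasureTheory Metric Polynomial Topology

section Determinant

lemma exists_polynomial_eval_eq_det_one_add_smul {R M : Type*} [CommRing R] [Nontrivial R]
    [AddCommGroup M] [Module R M] [Module.Free R M] [Module.Finite R M] (A : M →ₗ[R] M) :
    ∃ P : R[X], P.natDegree ≤ Module.finrank R M ∧
      ∀ s : R, P.eval s = LinearMap.det (1 + s • A) := by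
  let b := Module.finBasis R M
  refine ⟨((X : R[X]) • (LinearMap.toMatrix b b A).map C + (1 : Matrix _ _ R).map C).det,
    by simpa using natDegree_det_X_add_C_le (LinearMap.toMatrix b b A) 1, fun s => ?_⟩
  rw [← LinearMap.det_toMatrix b, ← coe_evalRingHom, RingHom.map_det]
  congr 1
  ext i j
  simp [Matrix.one_apply, LinearMap.toMatrix_one, apply_ite, add_comm, mul_comm s]

lemma integral_eval_eq_of_forall_mem {α : Type*} [MeasurableSpace α] {μ : Measure α}
    {P : α → ℝ[X]} {n : ℕ} {t : Finset ℝ} {c : ℝ} (hP : ∀ x, (P x).natDegree ≤ n) (ht : n < #t)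
    (hint : ∀ s ∈ t, Integrable (fun x => (P x).eval s) μ)
    (hc : ∀ s ∈ t, ∫ x, (P x).eval s ∂μ = c) (r : ℝ) : ∫ x, (P x).eval r ∂μ = c := by
  have hinj : Set.InjOn id (t : Set ℝ) := Set.injOn_id _
  have hdeg : ∀ x, (P x).degree < #t := fun x =>
    degree_le_natDegree.trans_lt (by exact_mod_cast (hP x).trans_lt ht)
  calc ∫ x, (P x).eval r ∂μ
      = ∫ x, ∑ s ∈ t, (P x).eval s * (Lagrange.basis t id s).eval r ∂μ := by
        refine integral_congr_ae (.of_forall fun x => ?_)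
        dsimp only
        conv_lhs => rw [Lagrange.eq_interpolate hinj (hdeg x)]
        simp [Lagrange.interpolate_apply, eval_finsetSum]
    _ = ∑ s ∈ t, c * (Lagrange.basis t id s).eval r := by
        rw [integral_finsetSum _ fun s hs => (hint s hs).mul_const _]
        exact sum_congr rfl fun s hs => by rw [integral_mul_const, hc s hs]
    _ = c := by
        rw [← mul_sum, ← eval_finsetSum, Lagrange.sum_basis hinj (card_pos.1 (by omega)), eval_one,
          mul_one]

lemma det_one_add_ne_zero {E : Type*} [NormedAddCommGroup E] [NormedSpace ℝ E] [CompleteSpace E]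
    {A : E →L[ℝ] E} (hA : ‖A‖ < 1) : (1 + A).det ≠ 0 := by
  have hunit := isUnit_one_sub_of_norm_lt_one ((norm_neg A).trans_lt hA)
  rw [sub_neg_eq_add] at hunit
  exact ((hunit.map (ContinuousLinearMap.toLinearMapRingHom (R₁ := ℝ) (M₁ := E))).map
    LinearMap.det).ne_zero

lemma det_one_add_pos {E : Type*} [NormedAddCommGroup E] [NormedSpace ℝ E]
    [FiniteDimensional ℝ E] {A : E →L[ℝ] E} (hA : ‖A‖ < 1) : 0 < (1 + A).det := by
  have := FiniteDimensional.complete ℝ E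
  have hne : ∀ s ∈ Set.Icc (0 : ℝ) 1, (1 + s • A).det ≠ 0 := fun s hs =>
    det_one_add_ne_zero <| by
      rw [norm_smul, Real.norm_of_nonneg hs.1]
      exact (mul_le_of_le_one_left (norm_nonneg A) hs.2).trans_lt hA
  have hcont : Continuous fun s : ℝ => (1 + s • A).det :=
    ContinuousLinearMap.continuous_det.comp (by fun_prop)
  by_contra! hneg
  have hone : (1 + (0 : ℝ) • A).det = 1 := by simp [ContinuousLinearMap.det]
  obtain ⟨s, hs, hs0⟩ := intermediate_value_Icc' zero_le_one hcont.continuousOn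
    (show (0 : ℝ) ∈ Set.Icc _ _ from ⟨by simpa using hneg, hone ▸ zero_le_one⟩)
  exact hne s hs hs0

end Determinant

section Lipschitz

lemma bijective_id_add_of_lipschitzWith {E : Type*} [NormedAddCommGroup E] [NormedSpace ℝ E]
    [CompleteSpace E] {K : NNReal} {u : E → E} (hu : LipschitzWith K u) (hK : K < 1) :
    Function.Bijective fun x => x + u x := by
  have happrox : ApproximatesLinearOn (fun x => x + u x)
      (ContinuousLinearEquiv.refl ℝ E : E →L[ℝ] E) Set.univ K := by
    refine LipschitzOnWith.approximatesLinearOn ?_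
    convert hu.lipschitzOnWith using 1
    ext; simp
  have hinv : Subsingleton E ∨ K < ‖((ContinuousLinearEquiv.refl ℝ E).symm : E →L[ℝ] E)‖₊⁻¹ := by
    rcases subsingleton_or_nontrivial E with hE | hE
    · exact .inl hE
    · have : ‖((ContinuousLinearEquiv.refl ℝ E).symm : E →L[ℝ] E)‖₊ = 1 := by ext; simp
      exact .inr (by rwa [this, inv_one])
  exact (happrox.toHomeomorph _ hinv).bijective

lemma inter_frontier_nonempty_of_isPreconnected {X : Type*} [TopologicalSpace X] {s t : Set X}
    (ht : IsPreconnected t) (hs : (t ∩ s).Nonempty) (hsc : (t ∩ sᶜ).Nonempty) :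
    (t ∩ frontier s).Nonempty := by
  by_contra hempty
  have hfr : ∀ x ∈ t, x ∉ frontier s := fun x hx hxs => hempty ⟨x, hx, hxs⟩
  have hint : ∀ x ∈ t, x ∈ closure s → x ∈ interior s := fun x hx hxs =>
    not_not.1 fun h => hfr x hx ⟨hxs, h⟩
  obtain ⟨x, hxt, hxs⟩ := hs
  obtain ⟨y, hyt, hys⟩ := hsc
  obtain ⟨z, -, hzi, hzc⟩ := ht (interior s) (closure s)ᶜ isOpen_interior
    isClosed_closure.isOpen_compl
    (fun z hz => or_iff_not_imp_right.2 fun h => hint z hz (not_not.1 h))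
    ⟨x, hxt, hint x hxt (subset_closure hxs)⟩
    ⟨y, hyt, fun h => hys (interior_subset (hint y hyt h))⟩
  exact hzc (interior_subset_closure hzi)

lemma lipschitzWith_indicator_of_frontier {E F : Type*} [SeminormedAddCommGroup E]
    [NormedSpace ℝ E] [SeminormedAddCommGroup F] {K : NNReal} {u : E → F} {s : Set E}
    (hu : LipschitzOnWith K u (closure s)) (h0 : ∀ x ∈ frontier s, u x = 0) :
    LipschitzWith K (s.indicator u) := by
  have hcross : ∀ x ∈ s, ∀ y ∉ s, dist (u x) 0 ≤ K * dist x y := by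
    intro x hx y hy
    obtain ⟨z, hz, hzs⟩ := inter_frontier_nonempty_of_isPreconnected
      (convex_segment (𝕜 := ℝ) x y).isPreconnected
      ⟨x, left_mem_segment ℝ x y, hx⟩ ⟨y, right_mem_segment ℝ x y, hy⟩
    rw [← h0 z hzs]
    refine (hu.dist_le_mul x (subset_closure hx) z hzs.1).trans ?_
    gcongr
    rw [← dist_add_dist_of_mem_segment hz]
    exact le_add_of_nonneg_right dist_nonneg
  refine LipschitzWith.of_dist_le_mul fun x y => ?_
  by_cases hx : x ∈ s <;> by_cases hy : y ∈ s
  · simpa [hx, hy] using hu.dist_le_mul x (subset_closure hx) y (subset_closure hy)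
  · simpa [hx, hy] using hcross x hx y hy
  · simpa [hx, hy, dist_comm] using hcross y hy x hx
  · simpa [hx, hy] using by positivity

end Lipschitz

section Degree

lemma image_eq_self_of_bijective_of_eqOn_compl {α : Type*} {f : α → α} {s : Set α}
    (hf : Function.Bijective f) (hs : Set.EqOn f id sᶜ) : f '' s = s :=
  compl_injective <| by rw [← Set.image_compl_eq hf, hs.image_eq, Set.image_id]

variable {E : Type*} [NormedAddCommGroup E] [NormedSpace ℝ E] [FiniteDimensional ℝ E]
  [MeasurableSpace E] [BorelSpace E] (μ : Measure E) [μ.IsAddHaarMeasure] {Ω : Set E}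

lemma setIntegral_det_one_add_fderiv {u : E → E} {K : NNReal} (hΩ : IsOpen Ω)
    (hd : DifferentiableOn ℝ u Ω) (hu : LipschitzOnWith K u (closure Ω))
    (h0 : ∀ x ∈ frontier Ω, u x = 0) (hK : K < 1) :
    ∫ x in Ω, (1 + fderiv ℝ u x).det ∂μ = μ.real Ω := by
  have := FiniteDimensional.complete ℝ E
  have hbij := bijective_id_add_of_lipschitzWith (lipschitzWith_indicator_of_frontier hu h0) hK
  have himage : (fun x => x + Ω.indicator u x) '' Ω = Ω :=
    image_eq_self_of_bijective_of_eqOn_compl hbij fun x hx => by simp [show x ∉ Ω from hx]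
  have hderiv : ∀ x ∈ Ω, HasFDerivWithinAt (fun x => x + Ω.indicator u x)
      (1 + fderiv ℝ u x) Ω x := fun x hx =>
    ((hasFDerivAt_id x).add
      (hd.differentiableAt (hΩ.mem_nhds hx)).hasFDerivAt).hasFDerivWithinAt.congr
      (fun y hy => by simp [hy]) (by simp [hx])
  have hdet : ∀ x ∈ Ω, |(1 + fderiv ℝ u x).det| = (1 + fderiv ℝ u x).det := fun x hx =>
    abs_of_pos <| det_one_add_pos <| (norm_fderiv_le_of_lipschitzOn ℝ
      (mem_of_superset (hΩ.mem_nhds hx) subset_closure) hu).trans_lt hK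
  calc ∫ x in Ω, (1 + fderiv ℝ u x).det ∂μ
      = ∫ x in Ω, |(1 + fderiv ℝ u x).det| • (1 : ℝ) ∂μ :=
        setIntegral_congr_fun hΩ.measurableSet fun x hx => by simp [hdet x hx]
    _ = ∫ _ in (fun x => x + Ω.indicator u x) '' Ω, (1 : ℝ) ∂μ :=
        (integral_image_eq_integral_abs_det_fderiv_smul μ hΩ.measurableSet hderiv
          hbij.injective.injOn fun _ => (1 : ℝ)).symm
    _ = μ.real Ω := by simp [himage]

lemma setIntegral_det_one_add_smul_fderiv {u : E → E} {K : NNReal} {s : ℝ} (hΩ : IsOpen Ω)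
    (hd : DifferentiableOn ℝ u Ω) (hu : LipschitzOnWith K u (closure Ω))
    (h0 : ∀ x ∈ frontier Ω, u x = 0) (hs : ‖s‖₊ * K < 1) :
    ∫ x in Ω, (1 + s • fderiv ℝ u x).det ∂μ = μ.real Ω := by
  rw [← setIntegral_det_one_add_fderiv μ hΩ (hd.const_smul s)
    ((lipschitzWith_smul s).comp_lipschitzOnWith hu) (fun x hx => by simp [h0 x hx]) hs]
  exact setIntegral_congr_fun hΩ.measurableSet fun x hx => by
    simp [fderiv_const_smul (hd.differentiableAt (hΩ.mem_nhds hx))]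

/-- `∫ det (1 + s • Du)` is a polynomial in `s`, constant for small `s` because there
`x ↦ x + s • u x` permutes `Ω`; hence it is still constant at `s = 1`. -/
theorem setIntegral_det_fderiv_of_eqOn_frontier {r : E → E} (hr : ContDiff ℝ 1 r)
    (hΩ : IsOpen Ω) (hbdd : Bornology.IsBounded Ω) (hid : ∀ x ∈ frontier Ω, r x = x) :
    ∫ x in Ω, (fderiv ℝ r x).det ∂μ = μ.real Ω := by
  have := FiniteDimensional.proper ℝ E
  let u : E → E := fun x => r x - x
  have hu : ContDiff ℝ 1 u := hr.sub contDiff_id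
  have hcomp : IsCompact (closure Ω) := hbdd.isCompact_closure
  obtain ⟨K, hK⟩ := hu.locallyLipschitz.locallyLipschitzOn.exists_lipschitzOnWith_of_compact hcomp
  choose P hdeg hP using fun x =>
    exists_polynomial_eval_eq_det_one_add_smul (fderiv ℝ u x : E →ₗ[ℝ] E)
  replace hP : ∀ x s, (P x).eval s = (1 + s • fderiv ℝ u x).det := hP
  have hone : ∀ x, (P x).eval 1 = (fderiv ℝ r x).det := fun x => by
    have : fderiv ℝ u x = fderiv ℝ r x - 1 :=
      ((hr.differentiable one_ne_zero x).hasFDerivAt.sub (hasFDerivAt_id x)).fderiv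
    rw [hP, this, one_smul, add_sub_cancel]
  have hint : ∀ s, IntegrableOn (fun x => (P x).eval s) Ω μ := fun s => by
    have hcont : Continuous fun x => (P x).eval s := by
      simp_rw [hP]
      exact ContinuousLinearMap.continuous_det.comp
        (continuous_const.add ((hu.continuous_fderiv one_ne_zero).const_smul s))
    exact (hcont.continuousOn.integrableOn_compact hcomp).mono_set subset_closure
  have hsmall : ∀ s ∈ Set.Ioo (0 : ℝ) (1 / (K + 1)), ∫ x in Ω, (P x).eval s ∂μ = μ.real Ω := by
    intro s hs
    simp_rw [hP]
    refine setIntegral_det_one_add_smul_fderiv μ hΩ (hu.differentiable one_ne_zero).differentiableOn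
      hK (fun x hx => by simp [u, hid x hx]) ?_
    rw [← NNReal.coe_lt_coe, NNReal.coe_mul, coe_nnnorm, Real.norm_of_nonneg hs.1.le]
    linarith [(lt_div_iff₀ (by positivity)).1 hs.2, hs.1, NNReal.coe_one]
  obtain ⟨t, hts, htcard⟩ :=
    (Set.Ioo_infinite (show (0 : ℝ) < 1 / (K + 1) by positivity)).exists_subset_card_eq
      (Module.finrank ℝ E + 1)
  simp_rw [← hone]
  exact integral_eval_eq_of_forall_mem (t := t) hdeg (by omega) (fun s _ => hint s)
    (fun s hs => hsmall s (hts hs)) 1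

end Degree

section FixedPoint

variable {E : Type*} [NormedAddCommGroup E] [InnerProductSpace ℝ E]

lemma inner_fderiv_eq_zero_of_norm_eq {r : E → E} {r' : E →L[ℝ] E} {x : E} {R : ℝ}
    (hr : HasFDerivAt r r' x) (hR : ∀ᶠ y in 𝓝 x, ‖r y‖ = R) (w : E) : inner ℝ (r x) (r' w) = 0 := by
  have hconst : HasFDerivAt (fun y => ‖r y‖ ^ 2) (0 : E →L[ℝ] ℝ) x :=
    (hasFDerivAt_const (R ^ 2) x).congr_of_eventuallyEq (hR.mono fun y hy => by simp [hy])
  simpa using DFunLike.congr_fun (hr.norm_sq.unique hconst) w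

variable [FiniteDimensional ℝ E]

lemma det_fderiv_eq_zero_of_norm_eq {r : E → E} {r' : E →L[ℝ] E} {x : E} {R : ℝ} (h0 : R ≠ 0)
    (hr : HasFDerivAt r r' x) (hR : ∀ᶠ y in 𝓝 x, ‖r y‖ = R) : r'.det = 0 := by
  by_contra hdet
  have hunit := (LinearMap.isUnit_iff_isUnit_det (r' : E →ₗ[ℝ] E)).2 (Ne.isUnit hdet)
  obtain ⟨w, hw⟩ := ((Module.End.isUnit_iff _).1 hunit).2 (r x)
  have horth := inner_fderiv_eq_zero_of_norm_eq hr hR w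
  replace hw : r' w = r x := hw
  rw [hw, inner_self_eq_zero, ← norm_eq_zero, hR.self_of_nhds] at horth
  exact h0 horth

theorem no_contDiff_retraction_sphere {r : E → E} {R : ℝ} (h0 : 0 < R) (hr : ContDiff ℝ 1 r)
    (hR : ∀ x ∈ ball 0 R, ‖r x‖ = R) (hid : ∀ x ∈ sphere 0 R, r x = x) : False := by
  borelize E
  have hdet : ∀ x ∈ ball 0 R, (fderiv ℝ r x).det = 0 := fun x hx =>
    det_fderiv_eq_zero_of_norm_eq h0.ne' (hr.differentiable one_ne_zero x).hasFDerivAt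
      (mem_of_superset (isOpen_ball.mem_nhds hx) hR)
  have hvol := setIntegral_det_fderiv_of_eqOn_frontier volume hr isOpen_ball isBounded_ball
    (fun x hx => hid x (frontier_ball_subset_sphere hx))
  rw [setIntegral_congr_fun measurableSet_ball hdet, integral_zero] at hvol
  exact (ENNReal.toReal_pos (measure_ball_pos volume 0 h0).ne' measure_ball_lt_top.ne).ne hvol

theorem exists_eq_zero_of_contDiff_of_eqOn_sphere {f : E → E} {R : ℝ} (h0 : 0 < R)
    (hf : ContDiff ℝ 1 f) (hid : ∀ x ∈ sphere 0 R, f x = x) : ∃ x, f x = 0 := by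
  by_contra! hne
  refine no_contDiff_retraction_sphere (r := fun x => (R / ‖f x‖) • f x) h0
    ((contDiff_const.div (hf.norm ℝ hne) fun x => norm_ne_zero_iff.2 (hne x)).smul hf)
    (fun x _ => ?_) (fun x hx => ?_)
  · rw [norm_smul, norm_div, norm_norm, Real.norm_of_nonneg h0.le,
      div_mul_cancel₀ _ (norm_ne_zero_iff.2 (hne x))]
  · rw [hid x hx, mem_sphere_zero_iff_norm.1 hx, div_self h0.ne', one_smul]

theorem exists_zero_mem_convexHull {Φ : E → Set E} {R : ℝ} (h0 : 0 < R)
    (hopen : IsOpen {x : E × E | x.2 ∈ Φ x.1}) (hne : ∀ p, (Φ p).Nonempty)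
    (hR : ∀ p ∈ sphere 0 R, p ∈ Φ p) : ∃ p, 0 ∈ convexHull ℝ (Φ p) := by
  have hconv : ∀ p, Convex ℝ {v | v ∈ convexHull ℝ (Φ p) ∧ (p ∈ sphere 0 R → v = p)} := fun p =>
    (convex_convexHull ℝ (Φ p)).inter fun a ha b hb s t _ _ hst hp => by
      rw [ha hp, hb hp, ← add_smul, hst, one_smul]
  obtain ⟨f, hf⟩ := exists_contMDiffMap_forall_mem_convex_of_local (n := 1)
    (modelWithCornersSelf ℝ E) hconv fun p => by
    by_cases hp : p ∈ sphere 0 R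
    · have hev : ∀ᶠ q in 𝓝 p, q ∈ Φ q :=
        (continuous_id.prodMk continuous_id).continuousAt.eventually_mem
          (hopen.mem_nhds (hR p hp))
      exact ⟨_, hev, id, contMDiffOn_id, fun q hq => ⟨subset_convexHull ℝ _ hq, fun _ => rfl⟩⟩
    · obtain ⟨v, hv⟩ := hne p
      have hev : ∀ᶠ q in 𝓝 p, v ∈ Φ q :=
        (continuous_id.prodMk continuous_const).continuousAt.eventually_mem (hopen.mem_nhds hv)
      exact ⟨_, hev.and (isClosed_sphere.isOpen_compl.mem_nhds hp), fun _ => v, contMDiffOn_const,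
        fun q hq => ⟨subset_convexHull ℝ _ hq.1, fun hqs => absurd hqs hq.2⟩⟩
  obtain ⟨p, hp⟩ := exists_eq_zero_of_contDiff_of_eqOn_sphere h0 f.contMDiff.contDiff
    fun x hx => (hf x).2 hx
  exact ⟨p, hp ▸ (hf p).1⟩

end FixedPoint

section ShallowDirections

variable {ι E : Type*} [Fintype ι] [NormedAddCommGroup E] [InnerProductSpace ℝ E]

/-- The directions `v` in which fewer than `1 / (dim E + 1)` of the vectors `w i` have a
nonpositive component. The inequality is multiplied out to stay in `ℕ`. -/
def shallowDirections (w : ι → E) : Set E :=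
  {v | (Module.finrank ℝ E + 1) * #{i | inner ℝ (w i) v ≤ 0} < Fintype.card ι}

lemma exists_forall_inner_pos_of_subset_shallowDirections {w : ι → E} {T : Finset E}
    (hT : T.Nonempty) (hcard : #T ≤ Module.finrank ℝ E + 1) (hTw : ↑T ⊆ shallowDirections w) :
    ∃ i, ∀ v ∈ T, 0 < inner ℝ (w i) v := by
  classical
  by_contra! hbad
  have hcover : (univ : Finset ι) ⊆ T.biUnion fun v => {i | inner ℝ (w i) v ≤ 0} := fun i _ => by
    simpa using hbad i
  have : (Module.finrank ℝ E + 1) * Fintype.card ι < (Module.finrank ℝ E + 1) * Fintype.card ι :=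
    calc (Module.finrank ℝ E + 1) * Fintype.card ι
      _ ≤ (Module.finrank ℝ E + 1) * ∑ v ∈ T, #{i | inner ℝ (w i) v ≤ 0} :=
          Nat.mul_le_mul_left _ ((card_le_card hcover).trans card_biUnion_le)
      _ = ∑ v ∈ T, (Module.finrank ℝ E + 1) * #{i | inner ℝ (w i) v ≤ 0} := mul_sum ..
      _ < ∑ _v ∈ T, Fintype.card ι := sum_lt_sum_of_nonempty hT fun v hv => hTw hv
      _ = #T * Fintype.card ι := by simp
      _ ≤ (Module.finrank ℝ E + 1) * Fintype.card ι := Nat.mul_le_mul_right _ hcard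
  exact this.false

lemma zero_notMem_convexHull_shallowDirections [FiniteDimensional ℝ E] (w : ι → E) :
    0 ∉ convexHull ℝ (shallowDirections w) := by
  intro h0
  rw [convexHull_eq_union] at h0
  simp only [Set.mem_iUnion, exists_prop] at h0
  obtain ⟨T, hTw, hind, hT⟩ := h0
  have hcard : #T ≤ Module.finrank ℝ E + 1 := by
    simpa using hind.card_le_finrank_succ.trans (Nat.succ_le_succ (Submodule.finrank_le _))
  have hne : T.Nonempty := by simpa using convexHull_nonempty_iff.1 ⟨0, hT⟩
  obtain ⟨i, hi⟩ := exists_forall_inner_pos_of_subset_shallowDirections hne hcard hTw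
  have hpos : (0 : E) ∈ {v | 0 < inner ℝ (w i) v} :=
    convexHull_min hi (convex_halfSpace_gt (innerSL ℝ (w i)).isLinear 0) hT
  simp at hpos

lemma isOpen_setOf_mem_shallowDirections {X : Type*} [TopologicalSpace X] {w : ι → X → E}
    (hw : ∀ i, Continuous (w i)) : IsOpen {x : X × E | x.2 ∈ shallowDirections (w · x.1)} := by
  refine isOpen_iff_mem_nhds.2 fun x hx => ?_
  have hstable : ∀ᶠ y in 𝓝 x, ∀ i, 0 < inner ℝ (w i x.1) x.2 → 0 < inner ℝ (w i y.1) y.2 := by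
    have hcont : ∀ i, Continuous fun y : X × E => inner ℝ (w i y.1) y.2 := fun i =>
      ((hw i).comp continuous_fst).inner continuous_snd
    exact eventually_all.2 fun i => eventually_imp_distrib_left.2 fun hi =>
      (hcont i).continuousAt.eventually (lt_mem_nhds hi)
  filter_upwards [hstable] with y hy
  refine (Nat.mul_le_mul_left _ (card_le_card ?_)).trans_lt hx
  exact monotone_filter_right _ fun i _ hi => not_lt.1 fun hlt => hi.not_gt (hy i hlt)

theorem exists_shallowDirections_eq_empty [FiniteDimensional ℝ E] {w : ι → E → E}
    (hw : ∀ i, Continuous (w i)) {R : ℝ} (h0 : 0 < R)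
    (hR : ∀ i, ∀ x ∈ sphere 0 R, 0 < inner ℝ (w i x) x) :
    ∃ p, shallowDirections (w · p) = ∅ := by
  by_contra! hne
  have hcard : 0 < Fintype.card ι := (Nat.zero_le _).trans_lt (hne 0).choose_spec
  obtain ⟨p, hp⟩ := exists_zero_mem_convexHull h0 (isOpen_setOf_mem_shallowDirections hw) hne
    fun x hx => by simpa [shallowDirections, fun i => (hR i x hx).not_ge] using hcard
  exact zero_notMem_convexHull_shallowDirections (w · p) hp

end ShallowDirections

section Limit

lemma exists_tendsto_nhds_or_tendsto_cocompact {α X : Type*} [TopologicalSpace X]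
    (U : Ultrafilter α) (f : α → X) :
    (∃ c, Tendsto f U (𝓝 c)) ∨ Tendsto f U (cocompact X) := by
  by_cases h : ∃ K, IsCompact K ∧ ∀ᶠ a in U, f a ∈ K
  · obtain ⟨K, hK, hfK⟩ := h
    obtain ⟨c, -, hc⟩ := hK.ultrafilter_le_nhds (U.map f) (le_principal_iff.2 hfK)
    exact .inl ⟨c, hc⟩
  · push Not at h
    exact .inr (hasBasis_cocompact.tendsto_right_iff.2 h)

lemma tendsto_inner_sub_sub_cocompact_atTop {V : Type*} [NormedAddCommGroup V]
    [InnerProductSpace ℝ V] [ProperSpace V] (y z : V) :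
    Tendsto (fun x => inner ℝ (y - x) (z - x)) (cocompact V) atTop := by
  have hsq : ∀ x, inner ℝ (y - x) (z - x) =
      dist x (midpoint ℝ y z) ^ 2 - (dist y z / 2) ^ 2 := fun x => by
    have hadd : (y - x) + (z - x) = (-2 : ℝ) • (x - midpoint ℝ y z) := by
      rw [midpoint_eq_smul_add, invOf_eq_inv]
      module
    refine (re_inner_eq_norm_add_mul_self_sub_norm_sub_mul_self_div_four (𝕜 := ℝ) _ _).trans ?_
    rw [hadd, norm_smul, sub_sub_sub_cancel_right, ← dist_eq_norm, ← dist_eq_norm]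
    norm_num
    ring
  simp_rw [hsq]
  exact tendsto_atTop_add_const_right _ _
    ((tendsto_pow_atTop two_ne_zero).comp (tendsto_dist_right_cocompact_atTop _))

lemma eventually_lt_inner_sub_sub {α V : Type*} [NormedAddCommGroup V] [InnerProductSpace ℝ V]
    [ProperSpace V] {U : Ultrafilter α} {x : α → V} {δ : α → ℝ} {y z : V}
    (hδ : Tendsto δ U (𝓝 0))
    (hx : ∀ c, Tendsto x U (𝓝 c) → 0 < inner ℝ (y - c) (z - c)) :
    ∀ᶠ a in U, δ a < inner ℝ (y - x a) (z - x a) := by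
  rcases exists_tendsto_nhds_or_tendsto_cocompact U x with ⟨c, hc⟩ | hc
  · exact hδ.eventually_lt ((tendsto_const_nhds.sub hc).inner (tendsto_const_nhds.sub hc)) (hx c hc)
  · filter_upwards [hδ.eventually_lt_const one_pos,
      ((tendsto_inner_sub_sub_cocompact_atTop y z).comp hc).eventually_gt_atTop 1] with a h1 h2
    exact h1.trans h2

lemma exists_forall_apply_eq_of_forall_tendsto {𝕜 α ι E : Type*} {F : ι → Type*}
    [NontriviallyNormedField 𝕜] [CompleteSpace 𝕜] [AddCommGroup E] [Module 𝕜 E]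
    [FiniteDimensional 𝕜 E] [∀ i, AddCommGroup (F i)] [∀ i, Module 𝕜 (F i)]
    [∀ i, TopologicalSpace (F i)] [∀ i, IsTopologicalAddGroup (F i)]
    [∀ i, ContinuousSMul 𝕜 (F i)] [∀ i, T2Space (F i)] {l : Filter α} [l.NeBot]
    (L : ∀ i, E →ₗ[𝕜] F i) {p : α → E} {c : ∀ i, F i}
    (hc : ∀ i, Tendsto (fun a => L i (p a)) l (𝓝 (c i))) : ∃ q, ∀ i, L i q = c i := by
  obtain ⟨q, hq⟩ := (LinearMap.range (LinearMap.pi L)).closed_of_finiteDimensional.mem_of_tendsto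
    (tendsto_pi_nhds.2 hc) (.of_forall fun a => ⟨p a, rfl⟩)
  exact ⟨q, congrFun hq⟩

end Limit

section Fit

variable {ι E : Type*} {F : ι → Type*} [Fintype ι] [NormedAddCommGroup E] [InnerProductSpace ℝ E]
  [FiniteDimensional ℝ E] [∀ i, NormedAddCommGroup (F i)] [∀ i, InnerProductSpace ℝ (F i)]
  [∀ i, FiniteDimensional ℝ (F i)] (L : ∀ i, E →ₗ[ℝ] F i) (y : ∀ i, F i)

/-- The vector fields are the gradients of `‖L i p - y i‖ ^ 2 / 2 + ε * ‖p‖ ^ 2 / 2`, which point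
outward on large spheres thanks to the regularising term. -/
lemma exists_deep_regularized_fit {ε : ℝ} (hε : 0 < ε) :
    ∃ p, ∀ v, Fintype.card ι ≤ (Module.finrank ℝ E + 1) *
      #{i | inner ℝ (y i - L i p) (L i v) ≤ ε * inner ℝ p v} := by
  let w : ι → E → E := fun i p => LinearMap.adjoint (L i) (L i p - y i) + ε • p
  have hinner : ∀ i p v, inner ℝ (w i p) v =
      ε * inner ℝ p v - inner ℝ (y i - L i p) (L i v) := fun i p v => by
    rw [inner_add_left, LinearMap.adjoint_inner_left, real_inner_smul_left, ← neg_sub (y i),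
      inner_neg_left]
    ring
  have hcont : ∀ i, Continuous (w i) := fun i => by
    have := (L i).continuous_of_finiteDimensional
    have := (LinearMap.adjoint (L i)).continuous_of_finiteDimensional
    fun_prop
  let R := √((∑ i, ‖y i‖ ^ 2 + 1) / ε)
  have hR : 0 < R := by positivity
  obtain ⟨p, hp⟩ := exists_shallowDirections_eq_empty hcont hR fun i x hx => by
    have hx : ε * ‖x‖ ^ 2 = ∑ i, ‖y i‖ ^ 2 + 1 := by
      rw [mem_sphere_zero_iff_norm.1 hx, Real.sq_sqrt (by positivity), mul_div_cancel₀ _ hε.ne']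
    have hy : ‖y i‖ ^ 2 ≤ ∑ i, ‖y i‖ ^ 2 :=
      single_le_sum (f := fun i => ‖y i‖ ^ 2) (fun _ _ => by positivity) (mem_univ i)
    rw [hinner, inner_sub_left, real_inner_self_eq_norm_sq, real_inner_self_eq_norm_sq]
    nlinarith [real_inner_le_norm (y i) (L i x), sq_nonneg (‖y i‖ - 2 * ‖L i x‖)]
  refine ⟨p, fun v => ?_⟩
  have hv : -v ∉ shallowDirections (w · p) := by simp [hp]
  simpa [shallowDirections, hinner] using hv

theorem exists_deep_fit_of_inner : ∃ q, ∀ v, Fintype.card ι ≤ (Module.finrank ℝ E + 1) *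
      #{i | inner ℝ (y i - L i q) (L i v) ≤ 0} := by
  choose! p hp using fun ε (hε : 0 < ε) => exists_deep_regularized_fit L y hε
  let U := Ultrafilter.of (𝓝[>] (0 : ℝ))
  have hU : (U : Filter ℝ) ≤ 𝓝[>] 0 := Ultrafilter.of_le _
  let I := {i // ∃ c, Tendsto (fun ε => L i (p ε)) U (𝓝 c)}
  obtain ⟨q, hq⟩ := exists_forall_apply_eq_of_forall_tendsto (fun i : I => L i)
    fun i => i.2.choose_spec
  refine ⟨q, fun v => ?_⟩
  have hδ : Tendsto (fun ε : ℝ => ε * (‖q + v‖ ^ 2 / 4)) U (𝓝 0) := by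
    simpa using ((tendsto_id.mono_left inf_le_left).mono_left hU).mul_const (‖q + v‖ ^ 2 / 4)
  have hpos : ∀ᶠ ε : ℝ in U, 0 < ε := hU self_mem_nhdsWithin
  -- The test direction leads from `p ε` to `q + v`, so a residual that diverges only helps.
  have hfit : ∀ᶠ ε in U, ∀ i, 0 < inner ℝ (y i - L i q) (L i v) →
      ε * (‖q + v‖ ^ 2 / 4) < inner ℝ (y i - L i (p ε)) (L i (q + v) - L i (p ε)) := by
    refine eventually_all.2 fun i => eventually_imp_distrib_left.2 fun hi =>
      eventually_lt_inner_sub_sub hδ fun c hc => ?_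
    have hcq : L i q = c := (hq ⟨i, c, hc⟩).trans
      (tendsto_nhds_unique (Exists.choose_spec (⟨i, c, hc⟩ : I).2) hc)
    simpa [← hcq] using hi
  obtain ⟨ε, hε, hεfit⟩ := (hpos.and hfit).exists
  refine (hp ε hε (q + v - p ε)).trans (Nat.mul_le_mul_left _ (card_le_card ?_))
  refine monotone_filter_right _ fun i _ hi => not_lt.1 fun hlt => ?_
  have hquarter : inner ℝ (p ε) (q + v - p ε) ≤ ‖q + v‖ ^ 2 / 4 := by
    rw [inner_sub_right, real_inner_self_eq_norm_sq]
    nlinarith [real_inner_le_norm (p ε) (q + v), sq_nonneg (‖q + v‖ - 2 * ‖p ε‖)]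
  have := hεfit i hlt
  rw [← map_sub] at this
  exact (this.trans_le hi).not_ge (by gcongr)

end Fit

theorem exists_deep_fit {ι E : Type*} {F : ι → Type*} [Fintype ι] [AddCommGroup E] [Module ℝ E]
    [FiniteDimensional ℝ E] [∀ i, NormedAddCommGroup (F i)] [∀ i, InnerProductSpace ℝ (F i)]
    [∀ i, FiniteDimensional ℝ (F i)] (L : ∀ i, E →ₗ[ℝ] F i) (y : ∀ i, F i) :
    ∃ q, ∀ v, Fintype.card ι ≤ (Module.finrank ℝ E + 1) *
      #{i | inner ℝ (y i - L i q) (L i v) ≤ 0} := by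
  let e : EuclideanSpace ℝ (Fin (Module.finrank ℝ E)) ≃ₗ[ℝ] E :=
    LinearEquiv.ofFinrankEq _ _ finrank_euclideanSpace_fin
  obtain ⟨q, hq⟩ := exists_deep_fit_of_inner (fun i => L i ∘ₗ e.toLinearMap) y
  exact ⟨e q, fun v => by simpa using hq (e.symm v)⟩

theorem exists_deep_affine_fit {ι T V : Type*} [Fintype ι] [AddCommGroup T] [Module ℝ T]
    [FiniteDimensional ℝ T] [NormedAddCommGroup V] [InnerProductSpace ℝ V]
    [FiniteDimensional ℝ V] (t : ι → T) (y : ι → V) :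
    ∃ (a : V) (B : T →ₗ[ℝ] V), ∀ (α : V) (β : T →ₗ[ℝ] V), Fintype.card ι ≤
      ((Module.finrank ℝ T + 1) * Module.finrank ℝ V + 1) *
        #{i | inner ℝ (y i - (a + B (t i))) (α + β (t i)) ≤ 0} := by
  obtain ⟨⟨a, B⟩, hq⟩ := exists_deep_fit
    (fun i => (LinearMap.id : V →ₗ[ℝ] V).coprod (LinearMap.applyₗ (R := ℝ) (M₂ := V) (t i))) y
  refine ⟨a, B, fun α β => ?_⟩
  have hdim : Module.finrank ℝ (V × (T →ₗ[ℝ] V)) =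
      (Module.finrank ℝ T + 1) * Module.finrank ℝ V := by
    rw [Module.finrank_prod, Module.finrank_linearMap]
    ring
  exact hdim ▸ hq (α, β)

section Flat

variable {k m : ℕ}

/-- The graph `{(t, a + B t)}` of an affine map from the space of independent variables to the
space of dependent ones. -/
def graphFlat (a : Fin m → ℝ) (B : (Fin k → ℝ) →ₗ[ℝ] Fin m → ℝ) :
    AffineSubspace ℝ ((Fin k → ℝ) × (Fin m → ℝ)) :=
  AffineSubspace.mk' (0, a) B.graph

lemma mem_graphFlat {a : Fin m → ℝ} {B : (Fin k → ℝ) →ₗ[ℝ] Fin m → ℝ}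
    {x : (Fin k → ℝ) × (Fin m → ℝ)} : x ∈ graphFlat a B ↔ x.2 = a + B x.1 := by
  simp [graphFlat, AffineSubspace.mem_mk', LinearMap.mem_graph_iff, sub_eq_iff_eq_add']

lemma isFlatOfDim_graphFlat (a : Fin m → ℝ) (B : (Fin k → ℝ) →ₗ[ℝ] Fin m → ℝ) :
    IsFlatOfDim k (graphFlat a B) := by
  refine ⟨⟨(0, a), by simp [mem_graphFlat]⟩, ?_⟩
  have hinj : Function.Injective (LinearMap.id.prod B) := fun s t h => (Prod.ext_iff.1 h).1
  rw [graphFlat, AffineSubspace.direction_mk', LinearMap.graph_eq_range_prod,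
    LinearMap.finrank_range_of_inj hinj, Module.finrank_fin_fun]

lemma exists_eq_inner_of_eqOn_graphFlat {a : Fin m → ℝ} {B : (Fin k → ℝ) →ₗ[ℝ] Fin m → ℝ}
    {f : ((Fin k → ℝ) × (Fin m → ℝ)) →ᵃ[ℝ] ℝ} (hf : ∀ x ∈ graphFlat a B, f x = 0) :
    ∃ c : EuclideanSpace ℝ (Fin m), ∀ x, f x = inner ℝ (WithLp.toLp 2 (x.2 - (a + B x.1))) c := by
  let g : EuclideanSpace ℝ (Fin m) →ₗ[ℝ] ℝ :=
    f.linear ∘ₗ LinearMap.inr ℝ (Fin k → ℝ) (Fin m → ℝ) ∘ₗ (WithLp.linearEquiv 2 ℝ _).toLinearMap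
  refine ⟨(InnerProductSpace.toDual ℝ _).symm g.toContinuousLinearMap, fun x => ?_⟩
  have hx : f (x.1, a + B x.1) = 0 := hf _ (mem_graphFlat.2 rfl)
  have hsub : x - (x.1, a + B x.1) = ((0, x.2 - (a + B x.1)) : (Fin k → ℝ) × (Fin m → ℝ)) := by
    ext <;> simp
  rw [real_inner_comm, InnerProductSpace.toDual_symm_apply]
  simpa [hx, hsub, g] using (f.linearMap_vsub x (x.1, a + B x.1)).symm

lemma exists_mul_eq_inner_of_eqOn_graphFlat {a : Fin m → ℝ} {B : (Fin k → ℝ) →ₗ[ℝ] Fin m → ℝ}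
    {f : ((Fin k → ℝ) × (Fin m → ℝ)) →ᵃ[ℝ] ℝ} (hf : ∀ x ∈ graphFlat a B, f x = 0)
    (h : (Fin k → ℝ) →ᵃ[ℝ] ℝ) :
    ∃ (α : EuclideanSpace ℝ (Fin m)) (β : (Fin k → ℝ) →ₗ[ℝ] EuclideanSpace ℝ (Fin m)), ∀ x,
      f x * h x.1 = inner ℝ (WithLp.toLp 2 (x.2 - (a + B x.1))) (α + β x.1) := by
  obtain ⟨c, hc⟩ := exists_eq_inner_of_eqOn_graphFlat hf
  refine ⟨h 0 • c, h.linear.smulRight c, fun x => ?_⟩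
  have hx : h x.1 = h 0 + h.linear x.1 := by rw [add_comm]; exact congrFun h.decomp x.1
  rw [hc, hx, LinearMap.smulRight_apply, ← add_smul, real_inner_smul_right, mul_comm]

lemma exists_regDepth_graphFlat_eq (hk : k ≠ 0) (hm : m ≠ 0) (a : Fin m → ℝ)
    (B : (Fin k → ℝ) →ₗ[ℝ] Fin m → ℝ) (X : Finset ((Fin k → ℝ) × (Fin m → ℝ))) :
    ∃ (f : ((Fin k → ℝ) × (Fin m → ℝ)) →ᵃ[ℝ] ℝ) (h : (Fin k → ℝ) →ᵃ[ℝ] ℝ),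
      (∀ x ∈ graphFlat a B, f x = 0) ∧ regDepth (graphFlat a B) X = #{x ∈ X | f x * h x.1 ≤ 0} := by
  let i : Fin k := ⟨0, Nat.pos_of_ne_zero hk⟩
  let j : Fin m := ⟨0, Nat.pos_of_ne_zero hm⟩
  let g : ((Fin k → ℝ) × (Fin m → ℝ)) →ₗ[ℝ] ℝ :=
    LinearMap.proj j ∘ₗ (LinearMap.snd ℝ _ _ - B ∘ₗ LinearMap.fst ℝ _ _)
  let t : (Fin k → ℝ) →ₗ[ℝ] ℝ := LinearMap.proj i
  have hg : g ≠ 0 := fun h0 => by simpa [g] using LinearMap.congr_fun h0 (0, Pi.single j 1)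
  have ht : t ≠ 0 := fun h0 => by simpa [t] using LinearMap.congr_fun h0 (Pi.single i 1)
  obtain ⟨f, -, hf, h, -, hfh⟩ := Nat.sInf_mem (s := {n | ∃ f : _ →ᵃ[ℝ] ℝ, f.linear ≠ 0 ∧
      (∀ x ∈ graphFlat a B, f x = 0) ∧ ∃ h : (Fin k → ℝ) →ᵃ[ℝ] ℝ, h.linear ≠ 0 ∧
        n = {x ∈ (X : Set _) | f x * h x.1 ≤ 0}.ncard})
    ⟨_, g.toAffineMap - AffineMap.const ℝ _ (a j), by simpa, fun x hx => by
      simp [g, mem_graphFlat.1 hx], t.toAffineMap, by simpa, rfl⟩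
  refine ⟨f, h, hf, ?_⟩
  rw [regDepth, hfh, ← Set.ncard_coe_finset, coe_filter]
  rfl

end Flat

theorem deep_line_exists_general (k m : ℕ) (hk : k ≠ 0) (hm : m ≠ 0)
    (X : Finset ((Fin k → ℝ) × (Fin m → ℝ))) :
    ∃ F : AffineSubspace ℝ ((Fin k → ℝ) × (Fin m → ℝ)),
      IsFlatOfDim k F ∧ (X.card : ℝ) / ((k + 1) * m + 1) ≤ (regDepth F X : ℝ) := by
  obtain ⟨a, B, haB⟩ := exists_deep_affine_fit (fun x : X => x.1.1) fun x => WithLp.toLp 2 x.1.2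
  let B' := (WithLp.linearEquiv 2 ℝ (Fin m → ℝ)).toLinearMap ∘ₗ B
  refine ⟨graphFlat a.ofLp B', isFlatOfDim_graphFlat _ _, ?_⟩
  obtain ⟨f, h, hf, hdepth⟩ := exists_regDepth_graphFlat_eq hk hm a.ofLp B' X
  obtain ⟨α, β, hαβ⟩ := exists_mul_eq_inner_of_eqOn_graphFlat hf h
  have hcard : #{x ∈ X | f x * h x.1 ≤ 0} = #{x : X |
      inner ℝ (WithLp.toLp 2 x.1.2 - (a + B x.1.1)) (α + β x.1.1) ≤ 0} := by
    simp_rw [hαβ, card_filter]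
    exact (sum_coe_sort X _).symm
  rw [div_le_iff₀' (by positivity), hdepth, hcard]
  simpa using (Nat.cast_le (α := ℝ)).2 (haB α β)

/-- Deep lines exist, with `R(d,1) ≤ 2d − 1`: for `d ≥ 2`, every finite set `X` of
`n` points in ℝ^d = ℝ × ℝ^(d−1) admits a line (1-dimensional affine subspace) of
regression depth at least `n / (2d − 1)`. -/
theorem deep_line_exists (d : ℕ) (hd : 2 ≤ d)
    (X : Finset ((Fin 1 → ℝ) × (Fin (d - 1) → ℝ))) :
    ∃ F : AffineSubspace ℝ ((Fin 1 → ℝ) × (Fin (d - 1) → ℝ)),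
      IsFlatOfDim 1 F ∧ (X.card : ℝ) / (2 * d - 1) ≤ (regDepth F X : ℝ) := by
  have hbound : ((1 : ℕ) + 1) * ((d - 1 : ℕ) : ℝ) + 1 = 2 * d - 1 := by
    push_cast [Nat.cast_sub (one_le_two.trans hd)]
    ring
  simpa only [hbound] using deep_line_exists_general 1 (d - 1) one_ne_zero (by omega) X
end
end

section
/- (Center Transversal Theorem) Let 0 ≤ k < d be integers and let S₁, …, S_{k+1} be finite point sets in ℝ^d, each containing at least m points. Then there exists a k-dimensional affine subspace F of ℝ^d such that every closed halfspace of ℝ^d containing F contains at least ⌈m/(d−k+1)⌉ points from each set S_i. -/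
noncomputable section

/-!
For affine `f ≥ 0` on `V`, a halfspace `{f ≥ 0}` with fewer than `r` points of `S` would leave a
subset of `S`, missing fewer than `r` points, whose convex hull lies in `{f < 0}` and avoids `V`. So
it suffices that the `k`-flat `V` meets the convex hull of every subset of `S i` missing fewer than
`r = ⌈m / (d - k + 1)⌉` points. Any `d - k + 1` such subsets of one `S i` have a common point. By
Dol'nikov's theorem, `k + 1` families of compact convex sets with this intersection property have a
common transversal `k`-flat.

Under a linear map to `ℝ^(d - k)`, the images of the members of each family have a common point by
Helly's theorem. The map has to be chosen so that the `k + 1` points agree; its fibre over the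
resulting point is then the transversal. Parametrize the maps by orthogonal frames
`u 0, …, u (d - k - 1)`, and choose preimages `c i` of the `k + 1` points by minimizing a convex
defect, regularized so that the minimizer depends continuously and evenly on `u`. The equations
`u j ⬝ᵥ (c i - c 0) = 0` and `u j ⬝ᵥ u i = 0` for `i < j` then have a solution by a Borsuk–Ulam
theorem on a product of spheres.

The latter reduces to a product of hemispheres, that is to a cube with antipodal identifications
on its boundary. On a fine grid, sign patterns of the equations become 1-cochains mod 2, and their
cup product counts, with parity, the simplices of Kuhn's triangulation on which every equation
changes sign. The Leibniz rule for cup products computes this parity by induction on the dimension: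
it is odd.
-/

namespace CenterTransversal

section CupProduct

open Finset

variable {X : Type*} {M : ℕ}

/-- The cup product modulo 2 of the coboundaries of the vertex labellings `s 0, …, s (M - 1)`,
evaluated on the simplex with ordered vertices `y 0, …, y M`. -/
def cup (s : Fin M → X → ZMod 2) (y : Fin (M + 1) → X) : ZMod 2 :=
  ∏ i, (s i (y i.castSucc) + s i (y i.succ))

theorem cup_cons (h : X → ZMod 2) (s : Fin M → X → ZMod 2) (y : Fin (M + 2) → X) :
    cup (Fin.cons h s : Fin (M + 1) → X → ZMod 2) y =
      (h (y 0) + h (y 1)) * cup s (Fin.tail y) := by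
  simp [cup, Fin.prod_univ_succ, Fin.tail]

theorem tail_removeNth_succ (j : Fin (M + 1)) (y : Fin (M + 2) → X) :
    Fin.tail (j.succ.removeNth y) = j.removeNth (Fin.tail y) := by
  funext t
  simp [Fin.tail, Fin.removeNth_apply]

theorem sum_mul_cup_removeNth (h : X → ZMod 2) (s : Fin M → X → ZMod 2) (y : Fin (M + 2) → X) :
    ∑ j : Fin (M + 2), h (j.removeNth y 0) * cup s (j.removeNth y) =
      h (y 0) * ∑ j : Fin (M + 2), cup s (j.removeNth y) +
        cup (Fin.cons h s : Fin (M + 1) → X → ZMod 2) y := by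
  have first_vertex (j : Fin (M + 1)) : j.succ.removeNth y 0 = y 0 := by
    simp [Fin.removeNth_apply]
  simp only [Fin.sum_univ_succ (n := M + 1), Fin.removeNth_zero, first_vertex, ← mul_sum, cup_cons,
    show Fin.tail y 0 = y 1 from rfl]
  linear_combination
    -(h (y 0) * cup s (Fin.tail y)) * CharTwo.two_eq_zero (R := ZMod 2)

theorem sum_cup_removeNth (s : Fin M → X → ZMod 2) (y : Fin (M + 2) → X) :
    ∑ j : Fin (M + 2), cup s (j.removeNth y) = 0 := by
  induction M with
  | zero => simp [cup, CharTwo.two_eq_zero]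
  | succ M ih =>
    rw [← Fin.cons_self_tail s, Fin.sum_univ_succ]
    have face_succ (j : Fin (M + 2)) :
        cup (Fin.cons (s 0) (Fin.tail s) : Fin (M + 1) → X → ZMod 2) (j.succ.removeNth y) =
          s 0 (y 0) * cup (Fin.tail s) (j.removeNth (Fin.tail y)) +
            s 0 (j.removeNth (Fin.tail y) 0) * cup (Fin.tail s) (j.removeNth (Fin.tail y)) := by
      rw [cup_cons, tail_removeNth_succ, add_mul]
      simp [Fin.removeNth_apply, Fin.tail]
    simp only [face_succ, sum_add_distrib, ← mul_sum, sum_mul_cup_removeNth, ih, mul_zero, zero_add,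
      Fin.removeNth_zero, CharTwo.add_self_eq_zero]

/-- The Leibniz rule: `cup (Fin.cons h s)` is the coboundary of the cochain `h ⌣ cup s`. -/
theorem cup_cons_eq_sum (h : X → ZMod 2) (s : Fin M → X → ZMod 2) (y : Fin (M + 2) → X) :
    cup (Fin.cons h s : Fin (M + 1) → X → ZMod 2) y =
      ∑ j : Fin (M + 2), h (j.removeNth y 0) * cup s (j.removeNth y) := by
  rw [sum_mul_cup_removeNth, sum_cup_removeNth, mul_zero, zero_add]

end CupProduct

section SymmetricTriangulation

open Finset Equiv

variable {ι J : Type*} [DecidableEq J]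

/-- The vector obtained from `x` by negating the coordinates in the block `j` of the partition of
`ι` into the fibres of `b`. -/
def negBlock {R : Type*} [Neg R] (b : ι → J) (j : J) (x : ι → R) : ι → R :=
  fun c => if b c = j then -x c else x c

theorem negBlock_negBlock {R : Type*} [InvolutiveNeg R] (b : ι → J) (j : J) (x : ι → R) :
    negBlock b j (negBlock b j x) = x := by
  funext c
  unfold negBlock
  split_ifs <;> simp

/-- A cochain on the cube `[-L, L]^ι` is symmetric when it takes the same value on a simplex in a
facet `x c = ±L` and on its mirror image under the negation of the block of `c`. For the partition
given by `b`, these are the cochains of the product of projective spaces obtained by identifying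
antipodal boundary points of each block. -/
def IsSymmetric {T : Type*} (b : ι → J) (L : ℤ) (c : (T → ι → ℤ) → ZMod 2) : Prop :=
  ∀ y, (∀ t e, |y t e| ≤ L) → ∀ e, (∀ t, |y t e| = L) →
    c (fun t => negBlock b (b e) (y t)) = c y

/-- The edges, oriented towards their even endpoint, of the triangulation of `[-L, L]` with
integral vertices. -/
def gridEdges (L : ℤ) : Finset (ℤ × ℤ) :=
  (Icc (-L) L ×ˢ Icc (-L) L).filter fun e => Even e.1 ∧ |e.1 - e.2| = 1

section GridEdges

variable {L : ℤ} {e : ℤ × ℤ}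

theorem mem_gridEdges :
    e ∈ gridEdges L ↔ (|e.1| ≤ L ∧ |e.2| ≤ L) ∧ Even e.1 ∧ |e.1 - e.2| = 1 := by
  simp [gridEdges, abs_le]

theorem fst_ne_snd_of_mem_gridEdges (he : e ∈ gridEdges L) : e.1 ≠ e.2 := by
  intro h
  simp [mem_gridEdges, h] at he

theorem snd_ne_zero_of_mem_gridEdges (he : e ∈ gridEdges L) : e.2 ≠ 0 := by
  obtain ⟨-, ⟨p, hp⟩, h⟩ := mem_gridEdges.1 he
  grind

theorem neg_mem_gridEdges (he : e ∈ gridEdges L) : -e ∈ gridEdges L := by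
  rw [mem_gridEdges] at he ⊢
  simpa [neg_add_eq_sub, abs_sub_comm] using he

theorem reflect_fst_mem_gridEdges (hL : Even L) (he : e ∈ gridEdges L) :
    (2 * e.2 - e.1, e.2) ∈ gridEdges L := by
  rw [mem_gridEdges] at he ⊢
  obtain ⟨⟨h1, h2⟩, ⟨p, hp⟩, h⟩ := he
  obtain ⟨l, rfl⟩ := hL
  refine ⟨⟨?_, h2⟩, ⟨e.2 - p, by grind⟩, ?_⟩ <;> grind

theorem reflect_snd_mem_gridEdges (he : e ∈ gridEdges L) (h : |e.1| ≠ L) :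
    (e.1, 2 * e.1 - e.2) ∈ gridEdges L := by
  rw [mem_gridEdges] at he ⊢
  grind

end GridEdges

/-- The cells of the grid `[-L, L]^N`, each one given by an edge for every coordinate. -/
def gridCubes (N : ℕ) (L : ℤ) : Finset (Fin N → ℤ × ℤ) :=
  Fintype.piFinset fun _ => gridEdges L

/-- The simplex of the Kuhn triangulation of the cell `w` in which coordinate `c` moves from
`(w c).2` to `(w c).1` between the vertices `π c` and `π c + 1`. As all moves end at an even
coordinate, adjacent cells are triangulated compatibly and the triangulation is symmetric. -/
def kuhnSimplex {N : ℕ} (π : Perm (Fin N)) (w : Fin N → ℤ × ℤ) (t : Fin (N + 1)) : Fin N → ℤ :=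
  fun c => if (π c).castSucc < t then (w c).1 else (w c).2

section KuhnSimplex

variable {N M : ℕ} {L : ℤ}

theorem mem_gridCubes {w : Fin N → ℤ × ℤ} : w ∈ gridCubes N L ↔ ∀ c, w c ∈ gridEdges L :=
  Fintype.mem_piFinset

theorem update_mem_gridCubes {w : Fin N → ℤ × ℤ} (hw : w ∈ gridCubes N L) {a : Fin N} {e : ℤ × ℤ}
    (he : e ∈ gridEdges L) : Function.update w a e ∈ gridCubes N L :=
  mem_gridCubes.2 <| (Function.forall_update_iff w fun _ e => e ∈ gridEdges L).2
    ⟨he, fun c _ => mem_gridCubes.1 hw c⟩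

theorem negBlock_mem_gridCubes {w : Fin N → ℤ × ℤ} (hw : w ∈ gridCubes N L) (b : Fin N → J)
    (j : J) : negBlock b j w ∈ gridCubes N L := by
  rw [mem_gridCubes] at hw ⊢
  intro c
  unfold negBlock
  split_ifs
  exacts [neg_mem_gridEdges (hw c), hw c]

theorem abs_kuhnSimplex_le (π : Perm (Fin N)) {w : Fin N → ℤ × ℤ} (hw : w ∈ gridCubes N L)
    (t : Fin (N + 1)) (c : Fin N) : |kuhnSimplex π w t c| ≤ L := by
  have h := (mem_gridEdges.1 (mem_gridCubes.1 hw c)).1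
  unfold kuhnSimplex
  split_ifs
  exacts [h.1, h.2]

theorem abs_kuhnSimplex_sub_le (π : Perm (Fin N)) {w : Fin N → ℤ × ℤ} (hw : w ∈ gridCubes N L)
    (t : Fin (N + 1)) (c : Fin N) : |kuhnSimplex π w t c - (w c).2| ≤ 1 := by
  have h := (mem_gridEdges.1 (mem_gridCubes.1 hw c)).2.2
  unfold kuhnSimplex
  split_ifs
  exacts [h.le, by simp]

theorem kuhnSimplex_negBlock (b : Fin N → J) (j : J) (π : Perm (Fin N)) (w : Fin N → ℤ × ℤ)
    (t : Fin (N + 1)) : kuhnSimplex π (negBlock b j w) t = negBlock b j (kuhnSimplex π w t) := by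
  funext c
  simp only [kuhnSimplex, negBlock]
  split_ifs <;> rfl

theorem kuhnSimplex_update (π : Perm (Fin N)) (w : Fin N → ℤ × ℤ) {a : Fin N} {e : ℤ × ℤ}
    {t : Fin (N + 1)} (h : if (π a).castSucc < t then e.1 = (w a).1 else e.2 = (w a).2) :
    kuhnSimplex π (Function.update w a e) t = kuhnSimplex π w t := by
  funext c
  obtain rfl | hc := eq_or_ne c a
  · simp only [kuhnSimplex, Function.update_self]
    split_ifs at h ⊢ <;> exact h
  · simp [kuhnSimplex, Function.update_of_ne hc]

theorem kuhnSimplex_swap_mul (π : Perm (Fin (M + 1))) (w : Fin (M + 1) → ℤ × ℤ) {i : Fin M}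
    {t : Fin (M + 2)} (ht : t ≠ i.succ.castSucc) :
    kuhnSimplex (swap i.castSucc i.succ * π) w t = kuhnSimplex π w t := by
  funext c
  have : (swap i.castSucc i.succ (π c)).castSucc < t ↔ (π c).castSucc < t := by
    rw [swap_apply_def]
    simp only [Fin.lt_def, Fin.ext_iff, ne_eq, Fin.val_castSucc, Fin.val_succ] at ht ⊢
    split_ifs <;> grind
  simp only [kuhnSimplex, Perm.mul_apply, this]

theorem sum_removeNth_interior_kuhnSimplex (w : Fin (M + 1) → ℤ × ℤ) (i : Fin M)
    (c : (Fin (M + 1) → Fin (M + 1) → ℤ) → ZMod 2) :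
    ∑ π : Perm (Fin (M + 1)), c (i.succ.castSucc.removeNth (kuhnSimplex π w)) = 0 := by
  refine sum_involution (fun π _ => swap i.castSucc i.succ * π) (fun π _ => ?_) (fun π _ _ h => ?_)
    (fun _ _ => mem_univ _) fun π _ => swap_mul_self_mul _ _ _
  · have same_face : i.succ.castSucc.removeNth (kuhnSimplex (swap i.castSucc i.succ * π) w) =
        i.succ.castSucc.removeNth (kuhnSimplex π w) :=
      funext fun t => kuhnSimplex_swap_mul π w (Fin.succAbove_ne _ _)
    rw [same_face, CharTwo.add_self_eq_zero]
  · exact Fin.castSucc_lt_succ.ne (swap_eq_one_iff.1 (mul_eq_right.1 h))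

theorem sum_init_kuhnSimplex (hL : Even L) (π : Perm (Fin (M + 1)))
    (c : (Fin (M + 1) → Fin (M + 1) → ℤ) → ZMod 2) :
    ∑ w ∈ gridCubes (M + 1) L, c (Fin.init (kuhnSimplex π w)) = 0 := by
  set a := π.symm (Fin.last M) with ha
  have hπa : π a = Fin.last M := by simp [ha]
  refine sum_involution (fun w _ => Function.update w a (2 * (w a).2 - (w a).1, (w a).2))
    (fun w _ => ?_) (fun w hw _ h => ?_)
    (fun w hw => update_mem_gridCubes hw (reflect_fst_mem_gridEdges hL (mem_gridCubes.1 hw a)))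
    fun w _ => by simp
  · have same_face : Fin.init (kuhnSimplex π (Function.update w a (2 * (w a).2 - (w a).1, (w a).2)))
        = Fin.init (kuhnSimplex π w) :=
      funext fun t => kuhnSimplex_update π w (by simp [hπa, (Fin.le_last t).not_gt])
    rw [same_face, CharTwo.add_self_eq_zero]
  · have reflect_eq := congrArg Prod.fst (congrFun h a)
    simp only [Function.update_self] at reflect_eq
    exact fst_ne_snd_of_mem_gridEdges (mem_gridCubes.1 hw a) (by omega)

theorem sum_tail_kuhnSimplex (b : Fin (M + 1) → J) (π : Perm (Fin (M + 1)))
    {c : (Fin (M + 1) → Fin (M + 1) → ℤ) → ZMod 2} (hc : IsSymmetric b L c) :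
    ∑ w ∈ gridCubes (M + 1) L, c (Fin.tail (kuhnSimplex π w)) = 0 := by
  set a := π.symm 0 with ha
  have hπa : π a = 0 := by simp [ha]
  refine sum_involution
    (fun w _ => if |(w a).1| = L then negBlock b (b a) w
      else Function.update w a ((w a).1, 2 * (w a).1 - (w a).2))
    (fun w hw => ?_) (fun w hw _ h => ?_) (fun w hw => ?_) fun w _ => ?_
  · split_ifs with hwa
    · have mirror_face : Fin.tail (kuhnSimplex π (negBlock b (b a) w)) =
          fun t => negBlock b (b a) (Fin.tail (kuhnSimplex π w) t) :=
        funext fun t => kuhnSimplex_negBlock _ _ _ _ _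
      rw [mirror_face, hc (Fin.tail (kuhnSimplex π w)) (fun t => abs_kuhnSimplex_le π hw _) a,
        CharTwo.add_self_eq_zero]
      intro t
      simpa [kuhnSimplex, Fin.tail, hπa] using hwa
    · have same_face : Fin.tail (kuhnSimplex π
          (Function.update w a ((w a).1, 2 * (w a).1 - (w a).2))) = Fin.tail (kuhnSimplex π w) :=
        funext fun t => kuhnSimplex_update π w (by simp [hπa])
      rw [same_face, CharTwo.add_self_eq_zero]
  · have hwa := mem_gridCubes.1 hw a
    have := fst_ne_snd_of_mem_gridEdges hwa
    have := snd_ne_zero_of_mem_gridEdges hwa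
    have reflect_eq := congrArg Prod.snd (congrFun h a)
    split_ifs at reflect_eq
    · simp only [negBlock, if_true, Prod.snd_neg] at reflect_eq
      omega
    · simp only [Function.update_self] at reflect_eq
      omega
  · split_ifs with hwa
    · exact negBlock_mem_gridCubes hw b (b a)
    · exact update_mem_gridCubes hw (reflect_snd_mem_gridEdges (mem_gridCubes.1 hw a) hwa)
  · by_cases hwa : |(w a).1| = L
    · have : |(negBlock b (b a) w a).1| = L := by simpa [negBlock] using hwa
      rw [if_pos hwa, if_pos this, negBlock_negBlock]
    · simp [hwa]

/-- Every face lies in two simplices of the triangulation, or lies on the boundary of the cube and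
is paired with its mirror image. -/
theorem sum_removeNth_kuhnSimplex (b : Fin (M + 1) → J) (hL : Even L)
    {c : (Fin (M + 1) → Fin (M + 1) → ℤ) → ZMod 2} (hc : IsSymmetric b L c) :
    ∑ π : Perm (Fin (M + 1)), ∑ w ∈ gridCubes (M + 1) L, ∑ j : Fin (M + 2),
      c (j.removeNth (kuhnSimplex π w)) = 0 := by
  simp_rw [sum_comm (t := (univ : Finset (Fin (M + 2))))]
  refine sum_eq_zero fun j _ => ?_
  cases j using Fin.cases with
  | zero => exact sum_eq_zero fun π _ => by simpa using sum_tail_kuhnSimplex b π hc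
  | succ j =>
    cases j using Fin.lastCases with
    | last =>
      exact sum_eq_zero fun π _ => by simpa using sum_init_kuhnSimplex hL π c
    | cast i =>
      rw [sum_comm]
      exact sum_eq_zero fun w _ => sum_removeNth_interior_kuhnSimplex w i c

end KuhnSimplex

end SymmetricTriangulation

section ParityCount

open Finset Equiv

variable {J : Type*} [DecidableEq J]

/-- A labelling of the integral points of `[-L, L]^ι` is equivariant with character `χ` when the
negation of a block one of whose coordinates is `±L` changes it by the value of `χ` at that
block. -/
def Equivariant {ι : Type*} (b : ι → J) (L : ℤ) (χ : J → ZMod 2) (s : (ι → ℤ) → ZMod 2) : Prop :=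
  ∀ x, (∀ c, |x c| ≤ L) → ∀ c, |x c| = L → s (negBlock b (b c) x) = s x + χ (b c)

theorem Equivariant.add {ι : Type*} {b : ι → J} {L : ℤ} {χ χ' : J → ZMod 2}
    {s s' : (ι → ℤ) → ZMod 2} (hs : Equivariant b L χ s) (hs' : Equivariant b L χ' s') :
    Equivariant b L (χ + χ') (s + s') := by
  intro x hx c hc
  simp only [Pi.add_apply, hs x hx c hc, hs' x hx c hc]
  ring

theorem isSymmetric_mul_cup {ι : Type*} {M : ℕ} {b : ι → J} {L : ℤ} {h : (ι → ℤ) → ZMod 2}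
    (hh : Equivariant b L 0 h) {χ : Fin M → J → ZMod 2} {s : Fin M → (ι → ℤ) → ZMod 2}
    (hs : ∀ i, Equivariant b L (χ i) (s i)) :
    IsSymmetric b L fun y : Fin (M + 1) → ι → ℤ => h (y 0) * cup s y := by
  intro y hy e he
  have edge_invariant (i : Fin M) (t t' : Fin (M + 1)) :
      s i (negBlock b (b e) (y t)) + s i (negBlock b (b e) (y t')) = s i (y t) + s i (y t') := by
    rw [hs i _ (hy t) e (he t), hs i _ (hy t') e (he t'), add_add_add_comm,
      CharTwo.add_self_eq_zero, add_zero]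
  simp only [cup, edge_invariant, hh _ (hy 0) e (he 0), Pi.zero_apply, add_zero]

/-- The sum of the cup product of the labellings `s` over the triangulated cube `[-L, L]^N`. -/
def cupSum {N : ℕ} (L : ℤ) (s : Fin N → (Fin N → ℤ) → ZMod 2) : ZMod 2 :=
  ∑ π : Perm (Fin N), ∑ w ∈ gridCubes N L, cup s (kuhnSimplex π w)

section

variable {M : ℕ} {L : ℤ}

theorem cupSum_cons_add (h h' : (Fin (M + 1) → ℤ) → ZMod 2)
    (s : Fin M → (Fin (M + 1) → ℤ) → ZMod 2) :
    cupSum L (Fin.cons (h + h') s) = cupSum L (Fin.cons h s) + cupSum L (Fin.cons h' s) := by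
  simp only [cupSum, ← sum_add_distrib]
  refine sum_congr rfl fun π _ => sum_congr rfl fun w _ => ?_
  simp only [cup_cons, Pi.add_apply]
  ring

/-- A coboundary sums to zero over a closed chain. -/
theorem cupSum_cons_eq_zero (hL : Even L) {b : Fin (M + 1) → J} {h : (Fin (M + 1) → ℤ) → ZMod 2}
    (hh : Equivariant b L 0 h) {χ : Fin M → J → ZMod 2} {s : Fin M → (Fin (M + 1) → ℤ) → ZMod 2}
    (hs : ∀ i, Equivariant b L (χ i) (s i)) : cupSum L (Fin.cons h s) = 0 := by
  simp only [cupSum, cup_cons_eq_sum]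
  exact sum_removeNth_kuhnSimplex (c := fun y => h (y 0) * cup s y) b hL (isSymmetric_mul_cup hh hs)

theorem cupSum_cons_congr (hL : Even L) {b : Fin (M + 1) → J} {χ₀ : J → ZMod 2}
    {h h' : (Fin (M + 1) → ℤ) → ZMod 2} (hh : Equivariant b L χ₀ h) (hh' : Equivariant b L χ₀ h')
    {χ : Fin M → J → ZMod 2} {s : Fin M → (Fin (M + 1) → ℤ) → ZMod 2}
    (hs : ∀ i, Equivariant b L (χ i) (s i)) :
    cupSum L (Fin.cons h s) = cupSum L (Fin.cons h' s) := by
  have hadd : Equivariant b L 0 (h + h') := by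
    have : χ₀ + χ₀ = 0 := funext fun _ => CharTwo.add_self_eq_zero _
    exact this ▸ hh.add hh'
  rw [← sub_eq_zero, CharTwo.sub_eq_add, ← cupSum_cons_add, cupSum_cons_eq_zero hL hadd hs]

end

/-- The sign of `r`, as an element of `ZMod 2`, with the value `t` at `r = 0`. -/
def signOr {R : Type*} [Zero R] [LinearOrder R] (r : R) (t : ZMod 2) : ZMod 2 :=
  if 0 < r then 0 else if r < 0 then 1 else t

theorem signOr_of_ne_zero {R : Type*} [Zero R] [LinearOrder R] {r : R} (h : r ≠ 0)
    (t t' : ZMod 2) : signOr r t = signOr r t' := by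
  rcases h.lt_or_gt with h | h <;> simp [signOr, h]

theorem signOr_neg {R : Type*} [AddCommGroup R] [LinearOrder R] [IsOrderedAddMonoid R] (r : R)
    (t : ZMod 2) : signOr (-r) (t + 1) = signOr r t + 1 := by
  rcases lt_trichotomy r 0 with h | rfl | h
  · simp [signOr, h, h.not_gt, CharTwo.two_eq_zero, one_add_one_eq_two]
  · simp [signOr]
  · simp [signOr, h, h.not_gt]

/-- The sign of the first nonzero coordinate of `x` in the block `j`. -/
def blockSign {N : ℕ} (b : Fin N → J) (j : J) (x : Fin N → ℤ) : ZMod 2 :=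
  signOr (toLex fun c => if b c = j then x c else 0) 0

theorem blockSign_negBlock_self {N : ℕ} (b : Fin N → J) {x : Fin N → ℤ} {c : Fin N}
    (hc : x c ≠ 0) : blockSign b (b c) (negBlock b (b c) x) = blockSign b (b c) x + 1 := by
  set y : Lex (Fin N → ℤ) := toLex fun e => if b e = b c then x e else 0 with hy
  have block_neg : toLex (fun e => if b e = b c then negBlock b (b c) x e else 0) = -y := by
    apply toLex.symm.injective
    funext e
    change _ = -(if b e = b c then x e else 0)
    simp only [negBlock]
    split_ifs <;> simp_all
  have hy0 : y ≠ 0 := fun h => hc <| by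
    have : (if b c = b c then x c else 0) = 0 := congrFun (congrArg ofLex h) c
    simpa using this
  rw [blockSign, blockSign, block_neg, ← hy, ← signOr_neg]
  exact signOr_of_ne_zero (neg_ne_zero.2 hy0) _ _

theorem blockSign_negBlock_of_ne {N : ℕ} (b : Fin N → J) {i j : J} (h : i ≠ j) (x : Fin N → ℤ) :
    blockSign b i (negBlock b j x) = blockSign b i x := by
  unfold blockSign negBlock
  congr! 4 with e he
  simp [he, h]

/-- The standard equivariant labelling with character `χ`. It resolves the sign of an equivariant
real function at its zeros. -/
def charSign {N : ℕ} (b : Fin N → J) (χ : J → ZMod 2) (x : Fin N → ℤ) : ZMod 2 :=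
  ∑ j ∈ univ.image b, χ j * blockSign b j x

theorem charSign_equivariant {N : ℕ} (b : Fin N → J) {L : ℤ} (hL : 0 < L) (χ : J → ZMod 2) :
    Equivariant b L χ (charSign b χ) := by
  intro x _ c hc
  have hxc : x c ≠ 0 := by rintro h; simp [h, hL.ne] at hc
  have blockSign_negBlock (j : J) : χ j * blockSign b j (negBlock b (b c) x) =
      χ j * blockSign b j x + if j = b c then χ j else 0 := by
    split_ifs with h
    · rw [h, blockSign_negBlock_self b hxc, mul_add, mul_one]
    · rw [blockSign_negBlock_of_ne b h, add_zero]
  simp [charSign, blockSign_negBlock, sum_add_distrib]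

/-- Only the two edges at `0` contribute: a sign is constant on every other edge. -/
theorem sum_gridEdges_signOr {L : ℤ} (hL : 0 < L) (hL2 : Even L) (f g : ℤ → ZMod 2) :
    ∑ e ∈ gridEdges L, (signOr e.2 (f e.2) + signOr e.1 (f e.1)) * g e.1 = g 0 := by
  have hsub : ({(0, 1), (0, -1)} : Finset (ℤ × ℤ)) ⊆ gridEdges L := by
    have : 1 < L := by obtain ⟨l, rfl⟩ := hL2; omega
    rw [insert_subset_iff, singleton_subset_iff, mem_gridEdges, mem_gridEdges]
    norm_num
    omega
  rw [← sum_subset hsub]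
  · rw [sum_pair (by simp)]
    simp only [signOr]
    norm_num
    linear_combination f 0 * g 0 * CharTwo.two_eq_zero (R := ZMod 2)
  · rintro ⟨r, r'⟩ he hne
    obtain ⟨-, ⟨p, rfl⟩, hadj⟩ := mem_gridEdges.1 he
    have hp : p ≠ 0 := by
      rintro rfl
      simp only [mem_insert, mem_singleton, Prod.mk.injEq] at hne hadj
      grind
    have same_sign : signOr r' (f r') = signOr (p + p) (f (p + p)) := by
      unfold signOr
      split_ifs <;> grind
    simp only [same_sign, CharTwo.add_self_eq_zero, zero_mul]

section Slice

variable {M : ℕ} {L : ℤ}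

theorem sum_gridCubes_succ (f : (Fin (M + 1) → ℤ × ℤ) → ZMod 2) :
    ∑ w ∈ gridCubes (M + 1) L, f w =
      ∑ w ∈ gridCubes M L, ∑ e ∈ gridEdges L, f (Fin.cons e w) := by
  rw [← sum_product_right']
  refine sum_nbij' (fun w => (w 0, Fin.tail w)) (fun q => Fin.cons q.1 q.2) ?_ ?_ ?_ ?_ ?_ <;>
    simp +contextual [mem_gridCubes, Fin.forall_fin_succ, Fin.tail]

theorem kuhnSimplex_decomposeFin_zero_zero (π : Perm (Fin M)) (e : ℤ × ℤ) (w : Fin M → ℤ × ℤ) :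
    kuhnSimplex (Perm.decomposeFin.symm (0, π)) (Fin.cons e w : Fin (M + 1) → ℤ × ℤ) 0 =
      Fin.cons e.2 (kuhnSimplex π w 0) := by
  funext c
  cases c using Fin.cases <;> simp [kuhnSimplex]

theorem kuhnSimplex_decomposeFin_zero_succ (π : Perm (Fin M)) (e : ℤ × ℤ) (w : Fin M → ℤ × ℤ)
    (t : Fin (M + 1)) :
    kuhnSimplex (Perm.decomposeFin.symm (0, π)) (Fin.cons e w : Fin (M + 1) → ℤ × ℤ) t.succ =
      Fin.cons e.1 (kuhnSimplex π w t) := by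
  funext c
  cases c using Fin.cases <;>
    simp [kuhnSimplex, Perm.decomposeFin_symm_apply_succ]

variable (t : (Fin (M + 1) → ℤ) → ZMod 2) (s : Fin M → (Fin (M + 1) → ℤ) → ZMod 2)

theorem cup_signOr_kuhnSimplex_eq_zero {π : Perm (Fin (M + 1))} (hπ : π 0 ≠ 0)
    {w : Fin (M + 1) → ℤ × ℤ} (hw : w ∈ gridCubes (M + 1) L) :
    cup (Fin.cons (fun x => signOr (x 0) (t x)) s : Fin (M + 1) → _) (kuhnSimplex π w) = 0 := by
  have h0 : kuhnSimplex π w 0 0 = (w 0).2 := by simp [kuhnSimplex]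
  have h1 : kuhnSimplex π w 1 0 = (w 0).2 :=
    if_neg fun h => hπ (Fin.val_eq_zero_iff.1 (Nat.lt_one_iff.1 h))
  rw [cup_cons, h0, h1, signOr_of_ne_zero (snd_ne_zero_of_mem_gridEdges (mem_gridCubes.1 hw 0)) _
    (t (kuhnSimplex π w 1)), CharTwo.add_self_eq_zero, zero_mul]

/-- The sign of the zeroth coordinate cuts the cube along the hyperplane on which that coordinate
vanishes. -/
theorem cupSum_cons_signOr (hL : 0 < L) (hL2 : Even L) :
    cupSum L (Fin.cons (fun x => signOr (x 0) (t x)) s) =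
      cupSum L fun i z => s i (Fin.cons 0 z) := by
  unfold cupSum
  rw [← Equiv.sum_comp (Perm.decomposeFin (n := M)).symm, Fintype.sum_prod_type,
    Fintype.sum_eq_single 0 fun a ha => sum_eq_zero fun π _ => sum_eq_zero fun w hw =>
      cup_signOr_kuhnSimplex_eq_zero t s (by simpa using ha) hw]
  refine sum_congr rfl fun π _ => ?_
  rw [sum_gridCubes_succ]
  refine sum_congr rfl fun w _ => ?_
  have restrict (r : ℤ) : cup s (fun τ => Fin.cons r (kuhnSimplex π w τ)) =
      cup (fun i z => s i (Fin.cons r z)) (kuhnSimplex π w) := rfl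
  rw [← restrict, ← sum_gridEdges_signOr hL hL2 (fun r => t (Fin.cons r (kuhnSimplex π w 0)))
    fun r => cup s fun τ => Fin.cons r (kuhnSimplex π w τ)]
  refine sum_congr rfl fun e _ => ?_
  rw [cup_cons, ← Fin.succ_zero_eq_one]
  unfold Fin.tail
  simp only [kuhnSimplex_decomposeFin_zero_zero, kuhnSimplex_decomposeFin_zero_succ, Fin.cons_zero]

end Slice

theorem negBlock_cons_zero {M : ℕ} (b : Fin (M + 1) → J) (j : J) (z : Fin M → ℤ) :
    negBlock b j (Fin.cons 0 z) = Fin.cons 0 (negBlock (Fin.tail b) j z) := by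
  funext c
  cases c using Fin.cases with
  | zero => simp [negBlock]
  | succ c => rfl

theorem Equivariant.cons_zero {M : ℕ} {b : Fin (M + 1) → J} {L : ℤ} (hL : 0 ≤ L) {χ : J → ZMod 2}
    {s : (Fin (M + 1) → ℤ) → ZMod 2} (hs : Equivariant b L χ s) :
    Equivariant (Fin.tail b) L χ fun z => s (Fin.cons 0 z) := by
  intro z hz c hc
  simp only [← negBlock_cons_zero]
  exact hs (Fin.cons 0 z) (by simpa [Fin.forall_fin_succ, hL] using hz) c.succ (by simpa using hc)

theorem Equivariant.signOr {ι R : Type*} [AddCommGroup R] [LinearOrder R] [IsOrderedAddMonoid R]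
    {b : ι → J} {L : ℤ} {χ : J → ZMod 2} {t : (ι → ℤ) → ZMod 2} (ht : Equivariant b L χ t)
    {r : (ι → ℤ) → R} (hr : ∀ x, (∀ c, |x c| ≤ L) → ∀ c, |x c| = L →
      r (negBlock b (b c) x) = if χ (b c) = 0 then r x else -r x) :
    Equivariant b L χ fun x => signOr (r x) (t x) := by
  intro x hx c hc
  have zero_or_one : ∀ a : ZMod 2, a = 0 ∨ a = 1 := by decide
  simp only [hr x hx c hc, ht x hx c hc]
  rcases zero_or_one (χ (b c)) with h | h
  · simp [h]
  · simp [h, signOr_neg]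

theorem equivariant_signOr_apply_zero {M : ℕ} {b : Fin (M + 1) → J} {L : ℤ} {χ : J → ZMod 2}
    (hχ : ∀ c, χ (b c) = if b c = b 0 then 1 else 0) {t : (Fin (M + 1) → ℤ) → ZMod 2}
    (ht : Equivariant b L χ t) : Equivariant b L χ fun x => signOr (x 0) (t x) := by
  refine ht.signOr fun x _ c _ => ?_
  by_cases h : b c = b 0
  · simp [hχ, negBlock, h]
  · simp [hχ, negBlock, h, Ne.symm h]

/-- The Borsuk–Ulam theorem for a product of projective spaces: the top cohomology class is a
product of classes whose characters form a triangular system. -/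
theorem cupSum_eq_one {L : ℤ} (hL : 0 < L) (hL2 : Even L) {N : ℕ} (b : Fin N → J)
    (χ : Fin N → J → ZMod 2) (hχ : ∀ i c, i ≤ c → χ i (b c) = if b c = b i then 1 else 0)
    (s : Fin N → (Fin N → ℤ) → ZMod 2) (hs : ∀ i, Equivariant b L (χ i) (s i)) :
    cupSum L s = 1 := by
  induction N with
  | zero => simp [cupSum, cup, gridCubes]
  | succ M ih =>
    rw [← Fin.cons_self_tail s,
      cupSum_cons_congr hL2 (hs 0) (equivariant_signOr_apply_zero
        (fun c => hχ 0 c (Fin.zero_le c)) (charSign_equivariant b hL (χ 0)))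
        (s := Fin.tail s) fun i => hs i.succ,
      cupSum_cons_signOr _ _ hL hL2]
    exact ih (Fin.tail b) (Fin.tail χ)
      (fun i c hic => hχ i.succ c.succ (Fin.succ_le_succ_iff.2 hic)) _
      fun i => (hs i.succ).cons_zero hL.le

theorem exists_nonconstant_cell {L : ℤ} (hL : 0 < L) (hL2 : Even L) {N : ℕ} (b : Fin N → J)
    (χ : Fin N → J → ZMod 2) (hχ : ∀ i c, i ≤ c → χ i (b c) = if b c = b i then 1 else 0)
    (s : Fin N → (Fin N → ℤ) → ZMod 2) (hs : ∀ i, Equivariant b L (χ i) (s i)) :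
    ∃ z : Fin N → ℤ, (∀ c, |z c| ≤ L) ∧ ∀ i, ∃ x y : Fin N → ℤ,
      (∀ c, |x c| ≤ L) ∧ (∀ c, |y c| ≤ L) ∧ (∀ c, |x c - z c| ≤ 1) ∧ (∀ c, |y c - z c| ≤ 1) ∧
      s i x ≠ s i y := by
  have hsum : cupSum L s ≠ 0 := by simp [cupSum_eq_one hL hL2 b χ hχ s hs]
  obtain ⟨π, -, hπ⟩ := exists_ne_zero_of_sum_ne_zero hsum
  obtain ⟨w, hw, hcup⟩ := exists_ne_zero_of_sum_ne_zero hπ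
  refine ⟨fun c => (w c).2, fun c => (mem_gridEdges.1 (mem_gridCubes.1 hw c)).1.2, fun i =>
    ⟨kuhnSimplex π w i.castSucc, kuhnSimplex π w i.succ, abs_kuhnSimplex_le π hw _,
      abs_kuhnSimplex_le π hw _, abs_kuhnSimplex_sub_le π hw _, abs_kuhnSimplex_sub_le π hw _,
      fun heq => prod_ne_zero_iff.1 hcup i (mem_univ i) ?_⟩⟩
  rw [heq, CharTwo.add_self_eq_zero]

end ParityCount

section BorsukUlam

open Equiv

theorem mul_nonpos_of_signOr_ne {r r' : ℝ} {t t' : ZMod 2} (h : signOr r t ≠ signOr r' t') :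
    r * r' ≤ 0 := by
  by_contra! hpos
  rcases mul_pos_iff.1 hpos with ⟨hr, hr'⟩ | ⟨hr, hr'⟩
  · exact h (by simp [signOr, hr, hr'])
  · exact h (by simp [signOr, hr, hr', hr.not_gt, hr'.not_gt])

/-- The point of the cube `[-1, 1]^ι` represented by a point of the grid `[-L, L]^ι`. -/
def gridPoint {ι : Type*} (L : ℤ) (x : ι → ℤ) : ι → ℝ := fun c => x c / L

theorem abs_gridPoint {ι : Type*} {L : ℤ} (hL : 0 < L) (x : ι → ℤ) (c : ι) :
    |gridPoint L x c| = (|x c| : ℤ) / L := by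
  rw [gridPoint, abs_div, abs_of_pos (by exact_mod_cast hL : (0 : ℝ) < L), Int.cast_abs]

theorem norm_gridPoint_le {ι : Type*} [Fintype ι] {L : ℤ} (hL : 0 < L) {x : ι → ℤ} {r : ℤ}
    (hr : 0 ≤ r) (hx : ∀ c, |x c| ≤ r) : ‖gridPoint L x‖ ≤ r / L := by
  have hrL : (0 : ℝ) ≤ r / L := div_nonneg (Int.cast_nonneg hr) (Int.cast_nonneg hL.le)
  refine (pi_norm_le_iff_of_nonneg hrL).2 fun c => ?_
  rw [Real.norm_eq_abs, abs_gridPoint hL]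
  gcongr
  exact hx c

theorem gridPoint_sub {ι : Type*} (L : ℤ) (x y : ι → ℤ) :
    gridPoint L x - gridPoint L y = gridPoint L (x - y) := by
  funext c
  simp [gridPoint, sub_div]

theorem gridPoint_negBlock {ι J : Type*} [DecidableEq J] (L : ℤ) (b : ι → J) (j : J)
    (x : ι → ℤ) : gridPoint L (negBlock b j x) = negBlock b j (gridPoint L x) := by
  funext c
  simp only [gridPoint, negBlock]
  split_ifs <;> simp [neg_div]

section

variable {J : Type*} [DecidableEq J] {N : ℕ} (b : Fin N → J) (χ : Fin N → J → ZMod 2)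
  (hχ : ∀ i c, i ≤ c → χ i (b c) = if b c = b i then 1 else 0) (f : Fin N → (Fin N → ℝ) → ℝ)
  (hodd : ∀ i x, ‖x‖ ≤ 1 → ∀ c, |x c| = 1 →
    f i (negBlock b (b c) x) = if χ i (b c) = 0 then f i x else -f i x)

include hχ hodd

theorem exists_sign_change {η : ℝ} (hη : 0 < η) :
    ∃ z : Fin N → ℝ, ‖z‖ ≤ 1 ∧ ∀ i, ∃ x y : Fin N → ℝ,
      ‖x‖ ≤ 1 ∧ ‖y‖ ≤ 1 ∧ dist x z < η ∧ dist y z < η ∧ f i x * f i y ≤ 0 := by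
  obtain ⟨n, hn⟩ := exists_nat_one_div_lt hη
  set L : ℤ := 2 * (n + 1) with hLdef
  have hL : 0 < L := by positivity
  have hL' : (0 : ℝ) < L := by exact_mod_cast hL
  have hLη : ((1 : ℤ) : ℝ) / L < η := by
    refine lt_of_le_of_lt ?_ hn
    rw [hLdef]
    push_cast
    gcongr
    linarith [(n.cast_nonneg : (0 : ℝ) ≤ n)]
  have norm_le_one {x : Fin N → ℤ} (hx : ∀ c, |x c| ≤ L) : ‖gridPoint L x‖ ≤ 1 := by
    simpa [div_self hL'.ne'] using norm_gridPoint_le hL hL.le hx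
  have dist_lt {x z : Fin N → ℤ} (h : ∀ c, |x c - z c| ≤ 1) :
      dist (gridPoint L x) (gridPoint L z) < η := by
    rw [dist_eq_norm, gridPoint_sub]
    exact (norm_gridPoint_le hL zero_le_one h).trans_lt hLη
  obtain ⟨z, hz, hcell⟩ := exists_nonconstant_cell hL (even_two_mul _) b χ hχ
    (fun i x => signOr (f i (gridPoint L x)) (charSign b (χ i) x)) fun i =>
      (charSign_equivariant b hL (χ i)).signOr fun x hx c hc => by
        rw [gridPoint_negBlock]
        exact hodd i _ (norm_le_one hx) c (by rw [abs_gridPoint hL, hc, div_self hL'.ne'])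
  refine ⟨gridPoint L z, norm_le_one hz, fun i => ?_⟩
  obtain ⟨x, y, hx, hy, hxz, hyz, hne⟩ := hcell i
  exact ⟨gridPoint L x, gridPoint L y, norm_le_one hx, norm_le_one hy, dist_lt hxz, dist_lt hyz,
    mul_nonpos_of_signOr_ne hne⟩

theorem borsukUlam_cube (hf : ∀ i, Continuous (f i)) :
    ∃ x : Fin N → ℝ, ‖x‖ ≤ 1 ∧ ∀ i, f i x = 0 := by
  set F : (Fin N → ℝ) → Fin N → ℝ := fun x i => f i x with hF
  have hFc : Continuous F := continuous_pi hf
  have hball : IsCompact (Metric.closedBall (0 : Fin N → ℝ) 1) := isCompact_closedBall 0 1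
  obtain ⟨x₀, hx₀, hmin⟩ := hball.exists_isMinOn ⟨0, by simp⟩ hFc.norm.continuousOn
  suffices F x₀ = 0 from ⟨x₀, mem_closedBall_zero_iff.1 hx₀, congrFun this⟩
  by_contra hne
  have hpos : 0 < ‖F x₀‖ := norm_pos_iff.2 hne
  obtain ⟨η, hη, hclose⟩ := Metric.uniformContinuousOn_iff.1
    (hball.uniformContinuousOn_of_continuous hFc.continuousOn) _ hpos
  obtain ⟨z, hz, hsign⟩ := exists_sign_change b χ hχ f hodd hη
  refine (isMinOn_iff.1 hmin z (by simpa using hz)).not_gt ((pi_norm_lt_iff hpos).2 fun i => ?_)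
  obtain ⟨x, y, hx, hy, hxz, hyz, hxy⟩ := hsign i
  have near {u : Fin N → ℝ} (hu : ‖u‖ ≤ 1) (huz : dist u z < η) : |f i u - f i z| < ‖F x₀‖ :=
    (dist_le_pi_dist (F u) (F z) i).trans_lt
      (hclose u (by simpa using hu) z (by simpa using hz) huz)
  have hfx := abs_lt.1 (near hx hxz)
  have hfy := abs_lt.1 (near hy hyz)
  rw [Real.norm_eq_abs, abs_lt]
  rcases mul_nonpos_iff.1 hxy with h | h <;> constructor <;> simp only [hF] <;> linarith

end

theorem borsukUlam_prod_cube {n m : ℕ} (χ : Fin n → Fin m → Fin n → ZMod 2)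
    (hχ : ∀ j l a, j ≤ a → χ j l a = if a = j then 1 else 0)
    (f : Fin n → Fin m → (Fin n → Fin m → ℝ) → ℝ) (hf : ∀ j l, Continuous (f j l))
    (hodd : ∀ j l x a, ‖x a‖ = 1 →
      f j l (Function.update x a (-x a)) = if χ j l a = 0 then f j l x else -f j l x) :
    ∃ x, ∀ j l, f j l x = 0 := by
  obtain ⟨p, block_mono⟩ : ∃ p : Fin (n * m) ≃ Fin n × Fin m, ∀ {i c}, i ≤ c → (p i).1 ≤ (p c).1 :=
    ⟨finProdFinEquiv.symm, fun h => Nat.div_le_div_right h⟩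
  set curry : (Fin (n * m) → ℝ) → Fin n → Fin m → ℝ := fun x a e => x (p.symm (a, e)) with hcurry
  have curry_negBlock (x : Fin (n * m) → ℝ) (a : Fin n) :
      curry (negBlock (fun i => (p i).1) a x) = Function.update (curry x) a (-curry x a) := by
    funext a' e
    obtain rfl | h := eq_or_ne a' a <;> simp [negBlock, *]
  obtain ⟨x, -, hx⟩ := borsukUlam_cube (fun i => (p i).1) (fun i => χ (p i).1 (p i).2)
    (fun i c hic => hχ _ _ _ (block_mono hic)) (fun i x => f (p i).1 (p i).2 (curry x))
    (fun i x hx c hc => by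
      rw [curry_negBlock]
      refine hodd _ _ _ _ (le_antisymm ?_ ?_)
      · exact (pi_norm_le_iff_of_nonneg zero_le_one).2 fun e => (norm_le_pi_norm x _).trans hx
      · simpa [hcurry, hc] using norm_le_pi_norm (curry x (p c).1) (p c).2)
    fun i => (hf _ _).comp (by fun_prop)
  exact ⟨curry x, fun j l => by simpa using hx (p.symm (j, l))⟩

/-- The map from the cube `[-1, 1]^m` onto a hemisphere of the unit sphere of the sup norm of
`ℝ^(m + 1)`, under which the boundary of the cube corresponds to the equator. -/
def hemisphere {m : ℕ} (v : Fin m → ℝ) : Fin (m + 1) → ℝ :=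
  ‖(Fin.cons (1 - ‖v‖) v : Fin (m + 1) → ℝ)‖⁻¹ • Fin.cons (1 - ‖v‖) v

section Hemisphere

variable {m : ℕ}

theorem cons_one_sub_norm_ne_zero (v : Fin m → ℝ) :
    (Fin.cons (1 - ‖v‖) v : Fin (m + 1) → ℝ) ≠ 0 := by
  intro h
  have hv : v = 0 := funext fun c => congrFun h c.succ
  simpa [hv] using congrFun h 0

theorem continuous_hemisphere : Continuous (hemisphere (m := m)) := by
  have hcons : Continuous fun v : Fin m → ℝ => (Fin.cons (1 - ‖v‖) v : Fin (m + 1) → ℝ) :=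
    (continuous_const.sub continuous_norm).finCons continuous_id
  exact (hcons.norm.inv₀ fun v => norm_ne_zero_iff.2 (cons_one_sub_norm_ne_zero v)).smul hcons

theorem norm_hemisphere (v : Fin m → ℝ) : ‖hemisphere v‖ = 1 :=
  norm_smul_inv_norm (𝕜 := ℝ) (cons_one_sub_norm_ne_zero v)

theorem hemisphere_neg {v : Fin m → ℝ} (hv : ‖v‖ = 1) : hemisphere (-v) = -hemisphere v := by
  have hcons : (Fin.cons (1 - ‖-v‖) (-v) : Fin (m + 1) → ℝ) = -Fin.cons (1 - ‖v‖) v := by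
    funext c
    cases c using Fin.cases <;> simp [hv]
  rw [hemisphere, hcons, norm_neg, smul_neg, hemisphere]

end Hemisphere

theorem borsukUlam_prod_sphere {n m : ℕ} (χ : Fin n → Fin m → Fin n → ZMod 2)
    (hχ : ∀ j l a, j ≤ a → χ j l a = if a = j then 1 else 0)
    (f : Fin n → Fin m → (Fin n → Fin (m + 1) → ℝ) → ℝ) (hf : ∀ j l, Continuous (f j l))
    (hodd : ∀ j l u a,
      f j l (Function.update u a (-u a)) = if χ j l a = 0 then f j l u else -f j l u) :
    ∃ u, (∀ a, ‖u a‖ = 1) ∧ ∀ j l, f j l u = 0 := by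
  have hemisphere_update (x : Fin n → Fin m → ℝ) (a : Fin n) (ha : ‖x a‖ = 1) :
      (fun j => hemisphere (Function.update x a (-x a) j)) =
        Function.update (fun j => hemisphere (x j)) a (-hemisphere (x a)) := by
    funext j
    obtain rfl | h := eq_or_ne j a <;> simp [hemisphere_neg, *]
  have hcont : Continuous fun (x : Fin n → Fin m → ℝ) j => hemisphere (x j) :=
    continuous_pi fun j => continuous_hemisphere.comp (continuous_apply j)
  obtain ⟨x, hx⟩ := borsukUlam_prod_cube χ hχ (fun j l x => f j l fun j => hemisphere (x j))
    (fun j l => (hf j l).comp hcont) fun j l x a ha => by rw [hemisphere_update x a ha, hodd]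
  exact ⟨fun j => hemisphere (x j), fun a => norm_hemisphere _, hx⟩

end BorsukUlam

section OrthogonalFrame

/-- The families of pairwise orthogonal vectors which are unit vectors for the *sup* norm: the
normalization only serves to make this set compact and to keep the vectors away from `0`. -/
def orthogonalFrames (J κ : Type*) [Fintype κ] : Set (J → κ → ℝ) :=
  {u | (∀ j, ‖u j‖ = 1) ∧ Pairwise fun i j => u i ⬝ᵥ u j = 0}

theorem isCompact_orthogonalFrames (J κ : Type*) [Fintype κ] :
    IsCompact (orthogonalFrames J κ) := by
  have hsphere : IsCompact {u : J → κ → ℝ | ∀ j, ‖u j‖ = 1} := by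
    simpa [Set.pi] using isCompact_univ_pi fun _ : J => isCompact_sphere (0 : κ → ℝ) 1
  have horth : IsClosed {u : J → κ → ℝ | Pairwise fun i j => u i ⬝ᵥ u j = 0} := by
    simp only [Pairwise, Set.ofPred_forall]
    exact isClosed_iInter fun i => isClosed_iInter fun j => isClosed_iInter fun _ =>
      isClosed_eq ((continuous_apply i).dotProduct (continuous_apply j)) continuous_const
  exact hsphere.inter_right horth

theorem linearIndependent_of_mem_orthogonalFrames {J κ : Type*} [Finite J] [Fintype κ]
    {u : J → κ → ℝ} (hu : u ∈ orthogonalFrames J κ) : LinearIndependent ℝ u := by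
  have := Fintype.ofFinite J
  refine Fintype.linearIndependent_iff.2 fun c hc j => ?_
  have hdot : c j * (u j ⬝ᵥ u j) = 0 :=
    calc c j * (u j ⬝ᵥ u j) = (∑ i, c i • u i) ⬝ᵥ u j := by
          rw [sum_dotProduct, Fintype.sum_eq_single j fun i hij => by
            rw [smul_dotProduct, hu.2 hij, smul_zero], smul_dotProduct, smul_eq_mul]
      _ = 0 := by rw [hc, zero_dotProduct]
  refine (mul_eq_zero.1 hdot).resolve_right fun h => ?_
  simpa [dotProduct_self_eq_zero.1 h] using hu.1 j

section

variable {k p : ℕ} (v : Fin k → (Fin (p + 1) → Fin (k + p + 1) → ℝ) → Fin (k + p + 1) → ℝ)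

/-- The functions whose common zeros are the orthogonal families `u` that are also orthogonal to
all the vectors `v l u`. For each `j` there are `k` relations `u j ⬝ᵥ v l u = 0` and `p` relations
`u j ⬝ᵥ u i = 0`, of which those with `j ≤ i` are replaced by `0 = 0`. -/
def frameRelation (j : Fin (p + 1)) : Fin (k + p) → (Fin (p + 1) → Fin (k + p + 1) → ℝ) → ℝ :=
  Fin.append (fun l u => u j ⬝ᵥ v l u)
    fun i u => if i.castSucc < j then u j ⬝ᵥ u i.castSucc else 0

/-- `frameCharacter j l a` is `1` if `frameRelation v j l` changes sign with the vector `u a`.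
The vacuous relations have both signs; they are given the character of `u j`. -/
def frameCharacter (j : Fin (p + 1)) : Fin (k + p) → Fin (p + 1) → ZMod 2 :=
  Fin.append (fun _ a => if a = j then 1 else 0)
    fun i a => if a = j ∨ a = i.castSucc ∧ a < j then 1 else 0

theorem frameCharacter_of_le {j a : Fin (p + 1)} (h : j ≤ a) (l : Fin (k + p)) :
    frameCharacter j l a = if a = j then 1 else 0 := by
  cases l using Fin.addCases <;> simp [frameCharacter, h.not_gt]

variable {v}

theorem continuous_frameRelation (hv : ∀ l, Continuous (v l)) (j : Fin (p + 1))
    (l : Fin (k + p)) : Continuous (frameRelation v j l) := by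
  cases l using Fin.addCases with
  | left l =>
    simp only [frameRelation, Fin.append_left]
    exact (continuous_apply j).dotProduct (hv l)
  | right i =>
    simp only [frameRelation, Fin.append_right]
    split_ifs
    · exact (continuous_apply j).dotProduct (continuous_apply _)
    · exact continuous_const

theorem frameRelation_update_neg (hinv : ∀ l u a, v l (Function.update u a (-u a)) = v l u)
    (j : Fin (p + 1)) (l : Fin (k + p)) (u : Fin (p + 1) → Fin (k + p + 1) → ℝ)
    (a : Fin (p + 1)) :
    frameRelation v j l (Function.update u a (-u a)) =
      if frameCharacter j l a = 0 then frameRelation v j l u else -frameRelation v j l u := by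
  cases l using Fin.addCases with
  | left l =>
    obtain rfl | haj := eq_or_ne j a
    · simp [frameCharacter, frameRelation, hinv]
    · simp [frameCharacter, frameRelation, hinv, haj, haj.symm]
  | right i =>
    by_cases hij : i.castSucc < j
    · obtain rfl | haj := eq_or_ne j a
      · simp [frameCharacter, frameRelation, hij, hij.ne]
      · obtain rfl | hai := eq_or_ne i.castSucc a
        · simp [frameCharacter, frameRelation, hij, hij.ne']
        · simp [frameCharacter, frameRelation, haj, haj.symm, hai, hai.symm]
    · simp [frameRelation, hij]

theorem exists_orthogonal_frame (hv : ∀ l, Continuous (v l))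
    (hinv : ∀ l u a, v l (Function.update u a (-u a)) = v l u) :
    ∃ u ∈ orthogonalFrames (Fin (p + 1)) (Fin (k + p + 1)), ∀ j l, u j ⬝ᵥ v l u = 0 := by
  obtain ⟨u, hu, hzero⟩ := borsukUlam_prod_sphere frameCharacter
    (fun _ l _ h => frameCharacter_of_le h l) (frameRelation v) (continuous_frameRelation hv)
    (frameRelation_update_neg hinv)
  have horth {i j : Fin (p + 1)} (hij : i < j) : u j ⬝ᵥ u i = 0 := by
    simpa [frameRelation, hij] using
      hzero j (Fin.natAdd k (i.castPred (Fin.ne_last_of_lt hij)))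
  refine ⟨u, ⟨hu, fun i j hij => ?_⟩, fun j l => by
    simpa [frameRelation] using hzero j (Fin.castAdd p l)⟩
  rcases hij.lt_or_gt with h | h
  · rw [dotProduct_comm, horth h]
  · exact horth h

end

end OrthogonalFrame

section ContinuousSelection

open Filter Topology

section

variable {X E : Type*} [TopologicalSpace X] [AddCommGroup E] [Module ℝ E] [TopologicalSpace E]
  {K : Set E} {q : X → E → ℝ}

theorem exists_continuous_minimizer (hK : IsCompact K) (hne : K.Nonempty)
    (hq : Continuous (Function.uncurry q)) (hconv : ∀ x, StrictConvexOn ℝ K (q x)) :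
    ∃ σ : X → E, Continuous σ ∧ ∀ x, σ x ∈ K ∧ IsMinOn (q x) K (σ x) := by
  choose σ hσK hσ using fun x =>
    hK.exists_isMinOn hne (hq.comp (Continuous.prodMk_right x)).continuousOn
  refine ⟨σ, continuous_iff_continuousAt.2 fun x => ?_, fun x => ⟨hσK x, hσ x⟩⟩
  refine hK.tendsto_nhds_of_unique_mapClusterPt (Eventually.of_forall hσK) fun y hy hcl => ?_
  refine (hconv x).eq_of_isMinOn (fun z hz => ?_) (hσ x) hy (hσK x)
  by_contra hzy
  have hlt : q x z < q x y := not_le.1 hzy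
  have hnhds : {w : X × E | q w.1 z < q w.1 w.2} ∈ 𝓝 (x, y) :=
    (isOpen_lt (hq.comp (continuous_fst.prodMk continuous_const)) hq).mem_nhds hlt
  rw [nhds_prod_eq, mem_prod_iff] at hnhds
  obtain ⟨V, hV, W, hW, hVW⟩ := hnhds
  obtain ⟨x', hx'W, hx'V⟩ := ((mapClusterPt_iff_frequently.1 hcl W hW).and_eventually hV).exists
  have hbetter : q x' z < q x' (σ x') := hVW (Set.mk_mem_prod hx'V hx'W)
  exact hbetter.not_ge (hσ x' hz)

variable [IsTopologicalAddGroup E] [ContinuousSMul ℝ E] [T2Space E] [FiniteDimensional ℝ E]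

theorem exists_continuous_strictConvexOn :
    ∃ N : E → ℝ, Continuous N ∧ StrictConvexOn ℝ Set.univ N := by
  have hsq : StrictConvexOn ℝ Set.univ
      fun y : EuclideanSpace ℝ (Fin (Module.finrank ℝ E)) => ‖y‖ ^ 2 :=
    (strongConvexOn_iff_convex.2 (by simpa using convexOn_const 0 convex_univ)).strictConvexOn
      two_pos
  refine ⟨fun y => ‖toEuclidean y‖ ^ 2, by fun_prop, convex_univ, ?_⟩
  intro x _ y _ hxy s t hs ht hst
  simpa using hsq.2 trivial trivial (toEuclidean.injective.ne hxy) hs ht hst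

/-- Minimize `q x + ρ N` for a strictly convex function `N` and a small `ρ > 0`. -/
theorem exists_continuous_approx_minimizer (hK : IsCompact K) (hne : K.Nonempty)
    (hq : Continuous (Function.uncurry q)) (hconv : ∀ x, ConvexOn ℝ K (q x)) {ε : ℝ} (hε : 0 < ε) :
    ∃ σ : X → E, Continuous σ ∧ (∀ x, σ x ∈ K ∧ ∀ y ∈ K, q x (σ x) ≤ q x y + ε) ∧
      ∀ x x', q x = q x' → σ x = σ x' := by
  obtain ⟨N, hN, hNconv⟩ := exists_continuous_strictConvexOn (E := E)
  obtain ⟨C, hC⟩ := hK.exists_bound_of_continuousOn hN.continuousOn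
  have hC0 : 0 ≤ C := let ⟨y, hy⟩ := hne; (norm_nonneg _).trans (hC y hy)
  obtain ⟨ρ, hρ, hρε⟩ : ∃ ρ > 0, ρ * (2 * C) ≤ ε :=
    ⟨ε / (2 * C + 1), by positivity, by
      rw [div_mul_eq_mul_div, div_le_iff₀ (by positivity)]
      gcongr
      linarith⟩
  have hstrict (x : X) : StrictConvexOn ℝ K fun y => q x y + ρ * N y :=
    (hconv x).add_strictConvexOn
      ⟨(hconv x).1, fun y _ z _ hyz s t hs ht hst => by
        have := hNconv.2 (Set.mem_univ y) (Set.mem_univ z) hyz hs ht hst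
        simp only [smul_eq_mul] at this ⊢
        nlinarith⟩
  obtain ⟨σ, hσ, hmin⟩ := exists_continuous_minimizer hK hne
    (hq.add (continuous_const.mul (hN.comp continuous_snd))) hstrict
  refine ⟨σ, hσ, fun x => ⟨(hmin x).1, fun y hy => ?_⟩, fun x x' h => ?_⟩
  · have hle : q x (σ x) + ρ * N (σ x) ≤ q x y + ρ * N y := (hmin x).2 hy
    have hNσ := mul_le_mul_of_nonneg_left (neg_le_of_abs_le (hC _ (hmin x).1)) hρ.le
    have hNy := mul_le_mul_of_nonneg_left (le_of_abs_le (hC y hy)) hρ.le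
    linarith
  · refine (hstrict x).eq_of_isMinOn (hmin x).2 ?_ (hmin x).1 (hmin x').1
    rw [h]
    exact (hmin x').2

end

end ContinuousSelection

section CommonProjection

variable {k p : ℕ} {W : Type*} [AddCommGroup W] [Module ℝ W] [TopologicalSpace W]
  [IsTopologicalAddGroup W] [ContinuousSMul ℝ W] [T2Space W] [FiniteDimensional ℝ W] {K : Set W}
  {q : (Fin (p + 1) → Fin (k + p + 1) → ℝ) → W → ℝ} {v : Fin k → W → Fin (k + p + 1) → ℝ}

/-- Apply `exists_orthogonal_frame` to approximate minimizers of `q u` that depend continuously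
on `u`, and pass to the limit by compactness. -/
theorem exists_orthogonal_frame_nonpos (hK : IsCompact K) (hq : Continuous (Function.uncurry q))
    (hconv : ∀ u, ConvexOn ℝ K (q u)) (heven : ∀ u a, q (Function.update u a (-u a)) = q u)
    (hnonpos : ∀ u, ∃ w ∈ K, q u w ≤ 0) (hv : ∀ l, Continuous (v l)) :
    ∃ u ∈ orthogonalFrames (Fin (p + 1)) (Fin (k + p + 1)), ∃ w ∈ K,
      (∀ j l, u j ⬝ᵥ v l w = 0) ∧ q u w ≤ 0 := by
  set Z := (orthogonalFrames (Fin (p + 1)) (Fin (k + p + 1)) ×ˢ K) ∩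
    {z | ∀ j l, z.1 j ⬝ᵥ v l z.2 = 0}
  have hZ : IsCompact Z := by
    refine ((isCompact_orthogonalFrames _ _).prod hK).inter_right ?_
    simp only [Set.ofPred_forall]
    exact isClosed_iInter fun j => isClosed_iInter fun l => isClosed_eq
      (Continuous.dotProduct (by fun_prop) ((hv l).comp continuous_snd)) continuous_const
  have happrox {ε : ℝ} (hε : 0 < ε) : ∃ z ∈ Z, Function.uncurry q z ≤ ε := by
    obtain ⟨σ, hσ, hmin, hinv⟩ := exists_continuous_approx_minimizer hK
      (let ⟨w, hw, _⟩ := hnonpos 0; ⟨w, hw⟩) hq hconv hε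
    obtain ⟨u, hu, hzero⟩ := exists_orthogonal_frame (v := fun l u => v l (σ u))
      (fun l => (hv l).comp hσ) fun l u a => by rw [hinv _ _ (heven u a)]
    obtain ⟨w, hw, hqw⟩ := hnonpos u
    exact ⟨(u, σ u), ⟨⟨hu, (hmin u).1⟩, hzero⟩, ((hmin u).2 w hw).trans (by linarith)⟩
  obtain ⟨⟨u, w⟩, ⟨⟨hu, hw⟩, hzero⟩, hmin⟩ :=
    hZ.exists_isMinOn (let ⟨z, hz, _⟩ := happrox one_pos; ⟨z, hz⟩) hq.continuousOn
  refine ⟨u, hu, w, hw, hzero, le_of_forall_pos_le_add fun ε hε => ?_⟩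
  obtain ⟨z, hz, hqz⟩ := happrox hε
  exact (hmin hz).trans (by simpa using hqz)

end CommonProjection

section Transversal

open Finset

section ProjDefect

variable {A ι J κ : Type*} [Fintype A] [Fintype J] [Fintype κ] (fam : A → ι)

/-- A measure of how far each point `w.1 a` is from having the same image as `w.2 (fam a)` under
the matrix with rows `u j`. -/
def projDefect (u : J → κ → ℝ) (w : (A → κ → ℝ) × (ι → κ → ℝ)) : ℝ :=
  ‖fun a j => u j ⬝ᵥ (w.1 a - w.2 (fam a))‖

theorem continuous_projDefect :
    Continuous (Function.uncurry (projDefect fam : (J → κ → ℝ) → _ → ℝ)) := by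
  refine Continuous.norm (continuous_pi fun a => continuous_pi fun j => ?_)
  exact Continuous.dotProduct (by fun_prop) (by fun_prop)

theorem convexOn_projDefect (u : J → κ → ℝ) : ConvexOn ℝ Set.univ (projDefect fam u) :=
  convexOn_univ_norm.comp_linearMap (LinearMap.pi fun a =>
    (Matrix.of u).mulVecLin ∘ₗ (LinearMap.proj a ∘ₗ LinearMap.fst ℝ (A → κ → ℝ) (ι → κ → ℝ) -
      LinearMap.proj (fam a) ∘ₗ LinearMap.snd ℝ (A → κ → ℝ) (ι → κ → ℝ)))

theorem projDefect_update_neg [DecidableEq J] (u : J → κ → ℝ) (i : J) :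
    projDefect fam (Function.update u i (-u i)) = projDefect fam u := by
  funext w
  have hterm (a : A) (j : J) : ‖Function.update u i (-u i) j ⬝ᵥ (w.1 a - w.2 (fam a))‖₊ =
      ‖u j ⬝ᵥ (w.1 a - w.2 (fam a))‖₊ := by
    obtain rfl | h := eq_or_ne j i
    · rw [Function.update_self, neg_dotProduct, nnnorm_neg]
    · rw [Function.update_of_ne h]
  simp only [projDefect, Pi.norm_def, Pi.nnnorm_def, hterm]

theorem projDefect_nonpos_iff {u : J → κ → ℝ} {w : (A → κ → ℝ) × (ι → κ → ℝ)} :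
    projDefect fam u w ≤ 0 ↔ ∀ a j, u j ⬝ᵥ w.1 a = u j ⬝ᵥ w.2 (fam a) := by
  simp [projDefect, norm_le_zero_iff, funext_iff, dotProduct_sub, sub_eq_zero]

theorem exists_projDefect_nonpos {K : A → Set (κ → ℝ)} {L : Set (κ → ℝ)} (hL : L.Nonempty)
    (hKL : ∀ a, K a ⊆ L) {u : J → κ → ℝ}
    (hproj : ∀ i, ∃ y, ∀ a, fam a = i → y ∈ (Matrix.of u).mulVec '' K a) :
    ∃ w ∈ Set.univ.pi K ×ˢ Set.univ.pi fun _ => L, projDefect fam u w ≤ 0 := by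
  have hrep (i : ι) : ∃ c ∈ L, ∀ a, fam a = i → ∃ x ∈ K a, ∀ j, u j ⬝ᵥ x = u j ⬝ᵥ c := by
    obtain ⟨y, hy⟩ := hproj i
    by_cases hi : ∃ a, fam a = i
    · obtain ⟨a, ha⟩ := hi
      obtain ⟨c, hc, rfl⟩ := hy a ha
      refine ⟨c, hKL a hc, fun a' ha' => ?_⟩
      obtain ⟨x, hx, hxc⟩ := hy a' ha'
      exact ⟨x, hx, congrFun hxc⟩
    · obtain ⟨c, hc⟩ := hL
      exact ⟨c, hc, fun a ha => (hi ⟨a, ha⟩).elim⟩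
  choose c hc hcK using hrep
  choose z hz hzc using fun a => hcK (fam a) a rfl
  exact ⟨(z, c), ⟨fun a _ => hz a, fun i _ => hc i⟩, (projDefect_nonpos_iff fam).2 hzc⟩

end ProjDefect

theorem exists_common_projection {k p : ℕ} {A : Type*} [Finite A]
    {K : A → Set (Fin (k + p + 1) → ℝ)} (hK : ∀ a, IsCompact (K a)) (hconv : ∀ a, Convex ℝ (K a))
    (fam : A → Fin (k + 1))
    (hproj : ∀ (U : Matrix (Fin (p + 1)) (Fin (k + p + 1)) ℝ) i,
      ∃ y, ∀ a, fam a = i → y ∈ U.mulVec '' K a) :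
    ∃ U : Matrix (Fin (p + 1)) (Fin (k + p + 1)) ℝ, LinearIndependent ℝ U.row ∧
      ∃ y, ∀ a, y ∈ U.mulVec '' K a := by
  have := Fintype.ofFinite A
  obtain ⟨R, hR⟩ := ((isCompact_iUnion hK).insert 0).isBounded.subset_closedBall 0
  have hKR (a : A) : K a ⊆ Metric.closedBall 0 R :=
    (Set.subset_iUnion K a).trans ((Set.subset_insert _ _).trans hR)
  obtain ⟨u, hu, ⟨z, c⟩, ⟨hz, -⟩, hc, hdefect⟩ := exists_orthogonal_frame_nonpos
    (K := Set.univ.pi K ×ˢ Set.univ.pi fun _ => Metric.closedBall 0 R) (q := projDefect fam)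
    (v := fun (l : Fin k) w => w.2 l.succ - w.2 0)
    ((isCompact_univ_pi hK).prod (isCompact_univ_pi fun _ => isCompact_closedBall _ _))
    (continuous_projDefect fam)
    (fun u => (convexOn_projDefect fam u).subset (Set.subset_univ _)
      ((convex_pi fun a _ => hconv a).prod (convex_pi fun _ _ => convex_closedBall _ _)))
    (projDefect_update_neg fam)
    (fun u => exists_projDefect_nonpos fam ⟨0, hR (Set.mem_insert _ _)⟩ hKR (hproj (.of u)))
    (fun l => by fun_prop)
  rw [projDefect_nonpos_iff] at hdefect
  have hbase (j : Fin (p + 1)) (i : Fin (k + 1)) : u j ⬝ᵥ c i = u j ⬝ᵥ c 0 := by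
    cases i using Fin.cases with
    | zero => rfl
    | succ l => simpa [dotProduct_sub, sub_eq_zero] using hc j l
  exact ⟨.of u, linearIndependent_of_mem_orthogonalFrames hu, (Matrix.of u).mulVec (c 0),
    fun a => ⟨z a, hz a trivial, funext fun j => (hdefect a j).trans (hbase j (fam a))⟩⟩

theorem exists_affineSubspace_mulVec_eq {𝕜 m n : Type*} [Field 𝕜] [Fintype m] [Fintype n]
    {U : Matrix m n 𝕜} (hU : LinearIndependent 𝕜 U.row) (y : m → 𝕜) :
    ∃ V : AffineSubspace 𝕜 (n → 𝕜), (V : Set (n → 𝕜)).Nonempty ∧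
      Fintype.card m + Module.finrank 𝕜 V.direction = Fintype.card n ∧
      ∀ x, x ∈ V ↔ U.mulVec x = y := by
  have hrank : Module.finrank 𝕜 U.mulVecLin.range = Fintype.card m := hU.rank_matrix
  have hsurj : U.mulVecLin.range = ⊤ :=
    Submodule.eq_top_of_finrank_eq (by rw [hrank, Module.finrank_fintype_fun_eq_card])
  obtain ⟨x₀, rfl⟩ := LinearMap.range_eq_top.1 hsurj y
  refine ⟨.mk' x₀ U.mulVecLin.ker, ⟨x₀, AffineSubspace.self_mem_mk' _ _⟩, ?_, fun x => ?_⟩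
  · rw [AffineSubspace.direction_mk', ← hrank, LinearMap.finrank_range_add_finrank_ker,
      Module.finrank_fintype_fun_eq_card]
  · rw [AffineSubspace.mem_mk', vsub_eq_sub, LinearMap.mem_ker, map_sub, sub_eq_zero,
      Matrix.mulVecLin_apply]

theorem exists_affine_transversal {ι : Type*} {k p : ℕ} (s : Fin (k + 1) → Finset ι)
    {F : ι → Set (Fin (k + p + 1) → ℝ)} (hcompact : ∀ i, ∀ a ∈ s i, IsCompact (F a))
    (hconv : ∀ i, ∀ a ∈ s i, Convex ℝ (F a))
    (hinter : ∀ i, ∀ I ⊆ s i, #I ≤ p + 2 → (⋂ a ∈ I, F a).Nonempty) :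
    ∃ V : AffineSubspace ℝ (Fin (k + p + 1) → ℝ), (V : Set (Fin (k + p + 1) → ℝ)).Nonempty ∧
      Module.finrank ℝ V.direction = k ∧ ∀ i, ∀ a ∈ s i, (F a ∩ V).Nonempty := by
  have hproj (U : Matrix (Fin (p + 1)) (Fin (k + p + 1)) ℝ) (i : Fin (k + 1)) :
      (⋂ a ∈ s i, U.mulVec '' F a).Nonempty := by
    refine Convex.helly_theorem' (𝕜 := ℝ)
      (fun a ha => (hconv i a ha).linear_image U.mulVecLin) fun I hI hcard => ?_
    rw [Module.finrank_fin_fun] at hcard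
    obtain ⟨x, hx⟩ := hinter i I hI hcard
    exact ⟨U.mulVec x, Set.mem_iInter₂.2 fun a ha =>
      Set.mem_image_of_mem _ (Set.mem_iInter₂.1 hx a ha)⟩
  obtain ⟨U, hU, y, hy⟩ := exists_common_projection (A := Σ i, s i) (K := fun a => F a.2)
    (fun a => hcompact a.1 a.2 a.2.2) (fun a => hconv a.1 a.2 a.2.2) Sigma.fst fun U i => by
      obtain ⟨y, hy⟩ := hproj U i
      refine ⟨y, ?_⟩
      rintro ⟨i, a⟩ rfl
      exact Set.mem_iInter₂.1 hy a a.2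
  obtain ⟨V, hV, hdim, hmem⟩ := exists_affineSubspace_mulVec_eq hU y
  refine ⟨V, hV, by simp only [Fintype.card_fin] at hdim; omega, fun i a ha => ?_⟩
  obtain ⟨x, hx, hxy⟩ := hy ⟨i, a, ha⟩
  exact ⟨x, hx, (hmem x).2 hxy⟩

end Transversal

section Center

open Finset

theorem exists_mem_of_card_sdiff_le {α : Type*} [DecidableEq α] {S : Finset α}
    {I : Finset (Finset α)} {q : ℕ} (hI : ∀ T ∈ I, #(S \ T) ≤ q) (hq : #I * q < #S) :
    ∃ x ∈ S, ∀ T ∈ I, x ∈ T := by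
  obtain ⟨x, hxS, hx⟩ := exists_mem_notMem_of_card_lt_card
    ((card_biUnion_le_card_mul I (S \ ·) q hI).trans_lt hq)
  refine ⟨x, hxS, fun T hT => by_contra fun hxT => hx ?_⟩
  exact mem_biUnion.2 ⟨T, hT, mem_sdiff.2 ⟨hxS, hxT⟩⟩

theorem iInter_convexHull_nonempty {E : Type*} [AddCommGroup E] [Module ℝ E] [DecidableEq E]
    {S : Finset E} {I : Finset (Finset E)} {n r : ℕ} (hI : ∀ T ∈ I, #(S \ T) < r) (hn : #I ≤ n)
    (hr : n * r < #S + n) : (⋂ T ∈ I, convexHull ℝ (T : Set E)).Nonempty := by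
  obtain rfl | ⟨T₀, hT₀⟩ := I.eq_empty_or_nonempty
  · simp
  obtain ⟨q, rfl⟩ := Nat.exists_eq_add_one.2 ((Nat.zero_le _).trans_lt (hI T₀ hT₀))
  obtain ⟨x, -, hx⟩ := exists_mem_of_card_sdiff_le (fun T hT => Nat.lt_succ_iff.1 (hI T hT))
    (calc #I * q ≤ n * q := by gcongr
      _ < #S := by linarith)
  exact ⟨x, Set.mem_iInter₂.2 fun T hT => subset_convexHull ℝ (T : Set E) (hx T hT)⟩

theorem le_ncard_halfspace {E : Type*} [AddCommGroup E] [Module ℝ E] [DecidableEq E]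
    {S : Finset E} {r : ℕ} {V : Set E}
    (hV : ∀ T ⊆ S, #(S \ T) < r → (convexHull ℝ (T : Set E) ∩ V).Nonempty) {f : E →ᵃ[ℝ] ℝ}
    (hf : ∀ x ∈ V, 0 ≤ f x) : r ≤ {x ∈ (S : Set E) | 0 ≤ f x}.ncard := by
  by_contra! hlt
  have hcard : #(S \ {x ∈ S | f x < 0}) < r := by
    rw [← filter_not, ← Set.ncard_coe_finset, coe_filter]
    simpa only [not_lt, mem_coe] using hlt
  obtain ⟨x, hxT, hxV⟩ := hV _ (filter_subset _ S) hcard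
  have hsub : convexHull ℝ ({x ∈ S | f x < 0} : Set E) ⊆ f ⁻¹' Set.Iio 0 :=
    convexHull_min (fun y hy => hy.2) ((convex_Iio 0).affine_preimage f)
  have hneg : f x < 0 := hsub (by simpa using hxT)
  exact hneg.not_ge (hf x hxV)

end Center

end CenterTransversal

/-- The Center Transversal Theorem: given `k + 1` finite point sets in ℝ^d
(`0 ≤ k < d`), each of at least `m` points, there is a `k`-dimensional affine
subspace `F` such that every closed halfspace containing `F` contains at least
`⌈m / (d − k + 1)⌉` points of each set. -/
theorem center_transversal (d k : ℕ) (hk : k < d) (m : ℕ)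
    (S : Fin (k + 1) → Finset (Fin d → ℝ)) (hS : ∀ i, m ≤ (S i).card) :
    ∃ F : AffineSubspace ℝ (Fin d → ℝ),
      (F : Set (Fin d → ℝ)).Nonempty ∧ Module.finrank ℝ F.direction = k ∧
      ∀ f : (Fin d → ℝ) →ᵃ[ℝ] ℝ, f.linear ≠ 0 →
        (∀ x ∈ F, 0 ≤ f x) →
        ∀ i, (m + (d - k)) / (d - k + 1) ≤
          {x ∈ (S i : Set (Fin d → ℝ)) | 0 ≤ f x}.ncard := by
  classical
  obtain ⟨p, rfl⟩ := Nat.exists_eq_add_of_lt hk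
  rw [show k + p + 1 - k = p + 1 by omega]
  set r := (m + (p + 1)) / (p + 2)
  have hr (i : Fin (k + 1)) : (p + 2) * r < (S i).card + (p + 2) := by
    have hle : (p + 2) * r ≤ m + (p + 1) := Nat.mul_div_le _ _
    linarith [hS i]
  obtain ⟨V, hV, hdim, hmeet⟩ := CenterTransversal.exists_affine_transversal
    (fun i => {T ∈ (S i).powerset | (S i \ T).card < r})
    (F := fun T => convexHull ℝ (T : Set (Fin (k + p + 1) → ℝ)))
    (fun i T _ => T.finite_toSet.isCompact_convexHull ℝ)
    (fun i T _ => convex_convexHull ℝ _)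
    fun i I hI hcard => CenterTransversal.iInter_convexHull_nonempty
      (fun T hT => (Finset.mem_filter.1 (hI hT)).2) hcard (hr i)
  exact ⟨V, hV, hdim, fun f _ hf i => CenterTransversal.le_ncard_halfspace
    (fun T hT hcard => hmeet i T (by simp [hT, hcard])) hf⟩
end
end
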